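/- Boone–Higman theorem (hard direction): Let G be a group and suppose for some n there is a surjective homomorphism π : FreeGroup (Fin n) → G such that the set {w : FreeGroup (Fin n) | π w = 1} is computable. Then there exist a finitely presented group H, a simple subgroup S of H, and an injective group homomorphism from G into S; that is, every finitely generated group with solvable word problem embeds in a simple subgroup of a finitely presented group. -/

import Mathlib

/-- A group is finitely presented if it is isomorphic to the quotient of a finitely
generated free group by the normal closure of a finite set of relators. -/
def IsFinitelyPresented (H : Type*) [Group H] : Prop :=
  ∃ (n : ℕ) (R : Finset (FreeGroup (Fin n))),
    Nonempty (H ≃* FreeGroup (Fin n) ⧸ Subgroup.normalClosure (R : Set (FreeGroup (Fin n))))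

/-!
Replacing `G` by `G × ℤ`, we may assume that `G` is infinite. Consider the algebra `R` over `𝔽₂`
generated by `G`, by an isometry `s` (an element with a left inverse `s'`) such that `s' g s = 0`
for `g ≠ 1`, and by an isometry `p` which commutes with `G` and is orthogonal to `s`. Its relations
can be enumerated precisely because both the word problem of `G` and its complement are recursively
enumerable. The isometries `g s` provide matrix units indexed by the infinite set `G`, and the
elementary units `1 + g s r s' h⁻¹` with `g ≠ h` generate a group `E` of units of `R`.

As in Leavitt algebras, every non-zero `r : R` satisfies `x r y = 1` for some `x` and `y`, and
therefore `E` is simple. The group `G` embeds in `E`: thanks to the isometry `p`, the diagonal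
matrix `diag(p p' + (1 - p p') g, 1)` is a product of elementary matrices. Finally `E` lies in a
finitely generated group of units of `R`, which is recursively presented, so that `E` embeds in a
finitely presented group by Higman's theorem.

For Higman's theorem, a stack machine enumerating the relators is turned into a reversible machine
whose configurations are group elements and whose rules are affine. Adjoining a stable letter for
every rule to a group freely generated by configurations produces a finitely presented group in
which the normal subgroup of relators is cut out by commutation with one letter, by Britton's lemma.
The rope trick then passes to the quotient.
-/

namespace BooneHigman

noncomputable section

/-! ### HNN extensions -/

section HNN

/-- Two embeddings of a group `Y` into `G`: the data of an HNN extension of `G` whose stable letter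
conjugates the first copy of `Y` to the second. -/
structure EmbeddingPair (Y G : Type*) [Group Y] [Group G] where
  fst : Y →* G
  snd : Y →* G
  fst_injective : Function.Injective fst
  snd_injective : Function.Injective snd

namespace EmbeddingPair

variable {Y G Y' G' H : Type*} [Group Y] [Group G] [Group Y'] [Group G'] [Group H]

section Extension

variable (p : EmbeddingPair Y G)

/-- The isomorphism between the two copies of `Y`. -/
def rangeEquiv : p.fst.range ≃* p.snd.range :=
  (MonoidHom.ofInjective p.fst_injective).symm.trans (MonoidHom.ofInjective p.snd_injective)

lemma rangeEquiv_apply (y : Y) (h : p.fst y ∈ p.fst.range) :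
    (p.rangeEquiv ⟨p.fst y, h⟩ : G) = p.snd y := by
  change ((MonoidHom.ofInjective p.snd_injective)
    ((MonoidHom.ofInjective p.fst_injective).symm
      (MonoidHom.ofInjective p.fst_injective y)) : G) = p.snd y
  rw [MulEquiv.symm_apply_apply, MonoidHom.ofInjective_apply]

/-- The HNN extension of `G` along a pair of embeddings. -/
abbrev HNN := HNNExtension G p.fst.range p.snd.range p.rangeEquiv

/-- The inclusion of the base group. -/
def of : G →* p.HNN := HNNExtension.of

/-- The stable letter. -/
def stable : p.HNN := HNNExtension.t

lemma of_injective : Function.Injective p.of := HNNExtension.of_injective _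

lemma stable_mul_of (y : Y) : p.stable * p.of (p.fst y) = p.of (p.snd y) * p.stable := by
  rw [← p.rangeEquiv_apply y ⟨y, rfl⟩]
  exact HNNExtension.t_mul_of (φ := p.rangeEquiv) ⟨p.fst y, y, rfl⟩

/-- The universal property of the HNN extension. -/
def lift (f : G →* H) (x : H) (hx : ∀ y, x * f (p.fst y) = f (p.snd y) * x) : p.HNN →* H :=
  HNNExtension.lift f x (by
    rintro ⟨_, y, rfl⟩
    exact (hx y).trans (by rw [← p.rangeEquiv_apply y ⟨y, rfl⟩]))

@[simp] lemma lift_of (f : G →* H) (x : H) (hx : ∀ y, x * f (p.fst y) = f (p.snd y) * x) (g : G) :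
    p.lift f x hx (p.of g) = f g :=
  HNNExtension.lift_of _ _ _ _

@[simp] lemma lift_stable (f : G →* H) (x : H) (hx : ∀ y, x * f (p.fst y) = f (p.snd y) * x) :
    p.lift f x hx p.stable = x :=
  HNNExtension.lift_t _ _ _

lemma hom_ext {f g : p.HNN →* H} (hof : ∀ x, f (p.of x) = g (p.of x))
    (hstable : f p.stable = g p.stable) : f = g :=
  HNNExtension.hom_ext (MonoidHom.ext hof) hstable

end Extension

/-- A morphism of embedding pairs which reflects membership in each of the two embedded copies. -/
structure CartesianHom (p : EmbeddingPair Y G) (q : EmbeddingPair Y' G') where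
  base : G →* G'
  fiber : Y → Y'
  base_fst : ∀ y, base (p.fst y) = q.fst (fiber y)
  base_snd : ∀ y, base (p.snd y) = q.snd (fiber y)
  mem_fst : ∀ {g y}, base g = q.fst y → g ∈ p.fst.range
  mem_snd : ∀ {g y}, base g = q.snd y → g ∈ p.snd.range

namespace CartesianHom

variable {p : EmbeddingPair Y G} {q : EmbeddingPair Y' G'} (j : CartesianHom p q)

/-- The homomorphism of HNN extensions induced by a morphism of embedding pairs. -/
def map : p.HNN →* q.HNN :=
  p.lift (q.of.comp j.base) q.stable fun y => by
    simp only [MonoidHom.comp_apply, j.base_fst, j.base_snd, q.stable_mul_of]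

@[simp] lemma map_of (g : G) : j.map (p.of g) = q.of (j.base g) := p.lift_of _ _ _ _

@[simp] lemma map_stable : j.map p.stable = q.stable := p.lift_stable _ _ _

open HNNExtension.NormalWord

/-- The image of a reduced word, which is again reduced because `j` reflects membership. -/
def mapReducedWord (w : ReducedWord G p.fst.range p.snd.range) :
    ReducedWord G' q.fst.range q.snd.range where
  head := j.base w.head
  toList := w.toList.map (Prod.map id j.base)
  chain := by
    rw [List.isChain_map]
    refine w.chain.imp fun a b h hmem => h ?_
    obtain ⟨u, g⟩ := a
    rcases Int.units_eq_one_or u with rfl | rfl <;> obtain ⟨y, hy⟩ := hmem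
    exacts [j.mem_fst hy.symm, j.mem_snd hy.symm]

lemma prod_mapReducedWord (w : ReducedWord G p.fst.range p.snd.range) :
    (j.mapReducedWord w).prod q.rangeEquiv = j.map (w.prod p.rangeEquiv) := by
  simp only [ReducedWord.prod, mapReducedWord, map_mul, map_list_prod, List.map_map]
  refine congrArg₂ _ (j.map_of _).symm (congrArg List.prod (List.map_congr_left fun a _ => ?_))
  simp only [Function.comp_apply, map_mul, map_zpow]
  exact congrArg₂ _ (congrArg (· ^ (a.1 : ℤ)) j.map_stable.symm) (j.map_of _).symm

/-- Britton's lemma applied to the image of a reduced word. -/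
lemma mem_range_of_of_map_mem {x : p.HNN} (hx : j.map x ∈ q.of.range) : x ∈ p.of.range := by
  obtain ⟨d⟩ := TransversalPair.nonempty G p.fst.range p.snd.range
  let w := (HNNExtension.NormalWord.equiv p.rangeEquiv d x).toReducedWord
  have hw : w.prod p.rangeEquiv = x :=
    (HNNExtension.NormalWord.equiv p.rangeEquiv d).symm_apply_apply x
  have hnil := HNNExtension.ReducedWord.toList_eq_nil_of_mem_of_range q.rangeEquiv
    (j.mapReducedWord w) (by rwa [prod_mapReducedWord, hw])
  have hw_nil : w.toList = [] := List.map_eq_nil_iff.1 hnil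
  refine ⟨w.head, ?_⟩
  rw [← hw, ReducedWord.prod, hw_nil, List.map_nil, List.prod_nil, mul_one]
  rfl

lemma map_injective (hj : Function.Injective j.base) : Function.Injective j.map := by
  rw [injective_iff_map_eq_one]
  intro x hx
  obtain ⟨g, rfl⟩ := j.mem_range_of_of_map_mem (hx ▸ one_mem _)
  rw [map_of, map_eq_one_iff _ q.of_injective, map_eq_one_iff _ hj] at hx
  rw [hx, map_one]

end CartesianHom

/-- The pair of embeddings into a subgroup `P` obtained by restriction. -/
def restrict (p : EmbeddingPair Y G) (P : Subgroup G) (hP : ∀ y, p.fst y ∈ P ↔ p.snd y ∈ P) :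
    EmbeddingPair (P.comap p.fst) P where
  fst := (p.fst.comp (Subgroup.subtype _)).codRestrict P fun y => y.2
  snd := (p.snd.comp (Subgroup.subtype _)).codRestrict P fun y => (hP _).1 y.2
  fst_injective _ _ h := Subtype.ext (p.fst_injective (congrArg Subtype.val h))
  snd_injective _ _ h := Subtype.ext (p.snd_injective (congrArg Subtype.val h))

/-- The inclusion of a restricted pair. -/
def restrictInclusion (p : EmbeddingPair Y G) (P : Subgroup G)
    (hP : ∀ y, p.fst y ∈ P ↔ p.snd y ∈ P) : CartesianHom (p.restrict P hP) p where
  base := P.subtype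
  fiber := Subtype.val
  base_fst _ := rfl
  base_snd _ := rfl
  mem_fst {g y} h := ⟨⟨y, (h ▸ g.2 : p.fst y ∈ P)⟩, Subtype.ext h.symm⟩
  mem_snd {g y} h := ⟨⟨y, (hP y).2 (h ▸ g.2)⟩, Subtype.ext h.symm⟩

lemma mem_of_of_mem_closure (p : EmbeddingPair Y G) {P : Subgroup G}
    (hP : ∀ y, p.fst y ∈ P ↔ p.snd y ∈ P) {g : G}
    (hg : p.of g ∈ Subgroup.closure (insert p.stable (p.of '' P))) : g ∈ P := by
  let j := p.restrictInclusion P hP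
  have hle : Subgroup.closure (insert p.stable (p.of '' P)) ≤ j.map.range := by
    rw [Subgroup.closure_le]
    rintro _ (rfl | ⟨x, hx, rfl⟩)
    · exact ⟨_, j.map_stable⟩
    · exact ⟨_, j.map_of ⟨x, hx⟩⟩
  obtain ⟨x, hx⟩ := hle hg
  obtain ⟨y, rfl⟩ := j.mem_range_of_of_map_mem ⟨g, hx.symm⟩
  rw [j.map_of] at hx
  exact p.of_injective hx ▸ y.2

end EmbeddingPair

universe u

/-- Iterating HNN extensions, one stable letter at a time, keeps a compatible subgroup `P` of the
base equal to the intersection of the base with the subgroup generated by `P` and the letters. -/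
lemma exists_hnn_tower {K : Type u} [Group K] {Y ι : Type*} [Group Y] {P : Subgroup K}
    (p : ι → EmbeddingPair Y K) (hP : ∀ i y, (p i).fst y ∈ P ↔ (p i).snd y ∈ P) (l : List ι) :
    ∃ (L : Type u) (_ : Group L) (e : K →* L) (r : ι → L), Function.Injective e ∧
      (∀ i ∈ l, ∀ y, r i * e ((p i).fst y) = e ((p i).snd y) * r i) ∧
      ∀ g, e g ∈ Subgroup.closure (e '' P ∪ r '' {i | i ∈ l}) → g ∈ P := by
  classical
  induction l with
  | nil =>
    exact ⟨K, inferInstance, MonoidHom.id K, fun _ => 1, Function.injective_id, by simp,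
      fun g hg => by simpa using hg⟩
  | cons i l ih =>
    obtain ⟨L, _, e, r, he, hr, hmem⟩ := ih
    let P' := Subgroup.closure (e '' P ∪ r '' {i | i ∈ l})
    have hP' (g : K) : e g ∈ P' ↔ g ∈ P :=
      ⟨hmem g, fun h => Subgroup.subset_closure (Or.inl ⟨g, h, rfl⟩)⟩
    let p' : EmbeddingPair Y L := ⟨e.comp (p i).fst, e.comp (p i).snd,
      he.comp (p i).fst_injective, he.comp (p i).snd_injective⟩
    have hmem' {g : L} := p'.mem_of_of_mem_closure (P := P') (g := g) fun y => by
      simp only [p', MonoidHom.comp_apply, hP', hP]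
    refine ⟨p'.HNN, inferInstance, p'.of.comp e, fun k => if k = i then p'.stable else p'.of (r k),
      p'.of_injective.comp he, fun k hk y => ?_, fun g hg => hmem _ (hmem' ?_)⟩
    · by_cases hki : k = i
      · subst hki
        simpa using! p'.stable_mul_of y
      · have hkl : k ∈ l := by simpa [hki] using hk
        simp only [if_neg hki, MonoidHom.comp_apply, ← map_mul, hr k hkl y]
    · refine (Subgroup.closure_le (Subgroup.closure (insert p'.stable (p'.of '' P')))).2 ?_ hg
      rintro _ (⟨k, hk, rfl⟩ | ⟨k, hk, rfl⟩)
      · exact Subgroup.subset_closure (Or.inr ⟨e k, (hP' k).2 hk, rfl⟩)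
      · by_cases hki : k = i
        · simp only [if_pos hki]
          exact Subgroup.subset_closure (Or.inl rfl)
        · have hkl : k ∈ l := by simpa [hki] using hk
          simp only [if_neg hki]
          exact Subgroup.subset_closure
            (Or.inr ⟨r k, Subgroup.subset_closure (Or.inr ⟨k, hkl, rfl⟩), rfl⟩)

end HNN

/-! ### The configuration group -/

lemma map_mem_closure_of {X Y : Type*} {j : X → Y} (hj : Function.Injective j) (I : Set Y)
    (w : FreeGroup X) :
    FreeGroup.map j w ∈ Subgroup.closure (FreeGroup.of '' I) ↔
      w ∈ Subgroup.closure (FreeGroup.of '' (j ⁻¹' I)) := by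
  let retraction : FreeGroup Y →* FreeGroup X := FreeGroup.lift (Function.extend j FreeGroup.of 1)
  have hretraction (w : FreeGroup X) : retraction (FreeGroup.map j w) = w := by
    have : retraction.comp (FreeGroup.map j) = MonoidHom.id _ := by
      ext x
      simp [retraction, hj.extend_apply]
    exact DFunLike.congr_fun this w
  constructor
  · have hle : Subgroup.closure (FreeGroup.of '' I) ≤
        (Subgroup.closure (FreeGroup.of '' (j ⁻¹' I))).comap retraction := by
      rw [Subgroup.closure_le]
      rintro _ ⟨y, hy, rfl⟩
      simp only [Subgroup.coe_comap, Set.mem_preimage, SetLike.mem_coe, retraction,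
        FreeGroup.lift_apply_of]
      by_cases h : ∃ x, j x = y
      · obtain ⟨x, rfl⟩ := h
        rw [hj.extend_apply]
        exact Subgroup.subset_closure ⟨x, hy, rfl⟩
      · rw [Function.extend_apply' _ _ _ h]
        exact one_mem _
    intro h
    simpa only [Subgroup.mem_comap, hretraction] using hle h
  · have hle : Subgroup.closure (FreeGroup.of '' (j ⁻¹' I)) ≤
        (Subgroup.closure (FreeGroup.of '' I)).comap (FreeGroup.map j) := by
      rw [Subgroup.closure_le]
      rintro _ ⟨x, hx, rfl⟩
      exact Subgroup.subset_closure ⟨j x, hx, FreeGroup.map.of.symm⟩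
    exact fun h => hle h

section ConfigGroup

variable (Q V : Type*) [Group V]

/-- The action of `V` on the free group on `Q × V` by left translation of the second coordinate. -/
def translation : V →* MulAut (FreeGroup (Q × V)) where
  toFun v := FreeGroup.freeGroupCongr (Equiv.prodCongr (Equiv.refl Q) (Equiv.mulLeft v))
  map_one' := by
    apply MulEquiv.toMonoidHom_injective
    ext x
    simp
  map_mul' a b := by
    apply MulEquiv.toMonoidHom_injective
    ext ⟨q, u⟩
    simp [mul_assoc]

lemma translation_of (v : V) (q : Q) (u : V) :
    translation Q V v (FreeGroup.of (q, u)) = FreeGroup.of (q, v * u) := by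
  simp [translation]

/-- The group generated by `V` and free generators `(q, u) ∈ Q × V`, on which `V` acts by
translation. A pair `(q, u)` stands for the configuration of a machine in state `q` with tape `u`;
subgroups of this group encode sets of configurations. -/
abbrev ConfigGroup := FreeGroup (Q × V) ⋊[translation Q V] V

namespace ConfigGroup

variable {Q V} {V' : Type*} [Group V']

/-- The free generator belonging to a configuration. -/
def config (p : Q × V) : ConfigGroup Q V := SemidirectProduct.inl (FreeGroup.of p)

/-- The embedding of the translation group. -/
def shift : V →* ConfigGroup Q V := SemidirectProduct.inr

lemma shift_conj_config (v : V) (q : Q) (u : V) :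
    shift v * config (q, u) * (shift v)⁻¹ = config (q, v * u) := by
  have h := SemidirectProduct.inl_aut (φ := translation Q V) v (FreeGroup.of (q, u))
  rw [translation_of] at h
  exact h.symm

/-- The configuration group is the free product of `V` and the free group on `Q`. -/
def coprodEquiv : Monoid.Coprod V (FreeGroup Q) ≃* ConfigGroup Q V :=
  MonoidHom.toMulEquiv
    (Monoid.Coprod.lift shift (FreeGroup.lift fun q => config (q, 1)))
    (SemidirectProduct.lift
      (FreeGroup.lift fun p => MulAut.conj (Monoid.Coprod.inl p.2) (Monoid.Coprod.inr (.of p.1)))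
      Monoid.Coprod.inl fun v => by
        ext ⟨q, u⟩
        simp [translation_of, mul_assoc])
    (by ext <;> simp [shift, config])
    (by
      refine SemidirectProduct.hom_ext ?_ ?_
      · ext ⟨q, u⟩ : 1
        simpa [config] using! shift_conj_config u q 1
      · ext v : 1
        simp [shift])

lemma coprodEquiv_symm_config (q : Q) (u : V) : coprodEquiv.symm (config (q, u)) =
    Monoid.Coprod.inl u * Monoid.Coprod.inr (FreeGroup.of q) * (Monoid.Coprod.inl u)⁻¹ := by
  simp [coprodEquiv, config]

lemma coprodEquiv_symm_shift (u : V) :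
    (coprodEquiv (Q := Q)).symm (shift u) = Monoid.Coprod.inl u := by
  simp [coprodEquiv, shift]

/-- The homomorphism sending the configuration `u` of the one-state configuration group over `V` to
`(q, φ u * a)`, and the shift by `v` to the shift by `φ v`. -/
def map (φ : V →* V') (q : Q) (a : V') : ConfigGroup Unit V →* ConfigGroup Q V' :=
  SemidirectProduct.map (FreeGroup.map fun u => (q, φ u.2 * a)) φ fun g => by
    ext ⟨⟨⟩, u⟩
    simp [translation_of, mul_assoc]

@[simp] lemma map_config (φ : V →* V') (q : Q) (a : V') (u : Unit × V) :
    map φ q a (config u) = config (q, φ u.2 * a) := by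
  simp [map, config]

lemma injective_mul_right {φ : V →* V'} (hφ : Function.Injective φ) (q : Q) (a : V') :
    Function.Injective fun u : Unit × V => (q, φ u.2 * a) := by
  rintro ⟨⟨⟩, u⟩ ⟨⟨⟩, u'⟩ h
  simpa [hφ.eq_iff] using h

lemma map_injective {φ : V →* V'} (hφ : Function.Injective φ) (q : Q) (a : V') :
    Function.Injective (map φ q a) := fun x y h => by
  have hl := congrArg SemidirectProduct.left h
  have hr := congrArg SemidirectProduct.right h
  simp only [map, SemidirectProduct.map_left, SemidirectProduct.map_right] at hl hr
  exact SemidirectProduct.ext (FreeGroup.map_injective (injective_mul_right hφ q a) hl) (hφ hr)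

/-- The subgroup generated by a set of configurations. -/
def configSubgroup (I : Set (Q × V)) : Subgroup (ConfigGroup Q V) :=
  (Subgroup.closure (FreeGroup.of '' I)).map SemidirectProduct.inl

lemma mem_configSubgroup (I : Set (Q × V)) (k : ConfigGroup Q V) :
    k ∈ configSubgroup I ↔ k.right = 1 ∧ k.left ∈ Subgroup.closure (FreeGroup.of '' I) := by
  constructor
  · rintro ⟨x, hx, rfl⟩
    exact ⟨rfl, hx⟩
  · rintro ⟨h1, h2⟩
    exact ⟨k.left, h2, SemidirectProduct.ext rfl h1.symm⟩

lemma config_mem_configSubgroup {I : Set (Q × V)} {p : Q × V} (hp : p ∈ I) :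
    config p ∈ configSubgroup I :=
  ⟨_, Subgroup.subset_closure ⟨p, hp, rfl⟩, rfl⟩

lemma configSubgroup_le {I : Set (Q × V)} {P : Subgroup (ConfigGroup Q V)} :
    configSubgroup I ≤ P ↔ ∀ p ∈ I, config p ∈ P := by
  rw [configSubgroup, Subgroup.map_le_iff_le_comap, Subgroup.closure_le, Set.image_subset_iff]
  rfl

lemma map_mem_configSubgroup {φ : V →* V'} (hφ : Function.Injective φ) (q : Q) (a : V')
    (I : Set (Q × V')) (k : ConfigGroup Unit V) :
    map φ q a k ∈ configSubgroup I ↔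
      k ∈ configSubgroup {u : Unit × V | (q, φ u.2 * a) ∈ I} := by
  simp only [mem_configSubgroup, map, SemidirectProduct.map_left, SemidirectProduct.map_right,
    map_mem_closure_of (injective_mul_right hφ q a), map_eq_one_iff _ hφ]
  rfl

end ConfigGroup

end ConfigGroup

/-! ### Finitely presented groups -/

section FinitelyPresented

open Monoid.Coprod
open scoped commutatorElement

lemma isFinitelyPresented_of_group (H : Type*) [Group H] [h : Group.IsFinitelyPresented H] :
    IsFinitelyPresented H := by
  obtain ⟨n, φ, hφ, R, hR, hker⟩ := h.out
  exact ⟨n, hR.toFinset, ⟨(QuotientGroup.quotientKerEquivOfSurjective φ hφ).symm.trans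
    (QuotientGroup.quotientMulEquivOfEq (by rw [hR.coe_toFinset, hker]))⟩⟩

lemma fg_of_isFinitelyPresented (G : Type*) [Group G] [h : Group.IsFinitelyPresented G] :
    Group.FG G := by
  obtain ⟨n, φ, hφ, -⟩ := h.out
  exact Group.fg_of_surjective hφ

lemma commute_of_closure_eq_top {G K : Type*} [Group G] [Group K] {S : Set G}
    (hS : Subgroup.closure S = ⊤) {f : G →* K} {k : K} (h : ∀ s ∈ S, Commute (f s) k) (x : G) :
    Commute (f x) k := by
  have hle : Subgroup.closure S ≤ (Subgroup.centralizer {k}).comap f :=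
    (Subgroup.closure_le _).2 fun s hs => Subgroup.mem_centralizer_singleton_iff.2 (h s hs)
  exact Subgroup.mem_centralizer_singleton_iff.1 (hle (hS ▸ Subgroup.mem_top x))

instance {G H : Type*} [Group G] [Group H] [Group.IsFinitelyPresented G]
    [Group.IsFinitelyPresented H] : Group.IsFinitelyPresented (G × H) := by
  obtain ⟨S, hS, hSfin⟩ := Group.fg_iff.1 (fg_of_isFinitelyPresented G)
  obtain ⟨T, hT, hTfin⟩ := Group.fg_iff.1 (fg_of_isFinitelyPresented H)
  let R : Set (Monoid.Coprod G H) :=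
    Set.image2 (fun s t => ⁅(inl s : Monoid.Coprod G H), inr t⁆) S T
  let q := QuotientGroup.mk' (Subgroup.normalClosure R)
  have hgen {s t} (hs : s ∈ S) (ht : t ∈ T) : Commute (q.comp inl s) (q.comp inr t) := by
    rw [← commutatorElement_eq_one_iff_commute]
    exact (QuotientGroup.eq_one_iff _).2 (Subgroup.subset_normalClosure ⟨s, hs, t, ht, rfl⟩)
  have hcomm (x y) : Commute (q.comp inl x) (q.comp inr y) :=
    commute_of_closure_eq_top hS (fun s hs =>
      (commute_of_closure_eq_top hT (fun t ht => (hgen hs ht).symm) y).symm) x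
  have hfactor : ((q.comp inl).noncommCoprod (q.comp inr) hcomm).comp toProd = q := by
    ext <;> simp
  refine Group.IsFinitelyPresented.of_surjective toProd toProd_surjective
    ⟨R, hSfin.image2 _ hTfin, le_antisymm ?_ fun x hx => ?_⟩
  · refine Subgroup.normalClosure_le_normal ?_
    rintro _ ⟨s, -, t, -, rfl⟩
    simp [MonoidHom.mem_ker, commutatorElement_def]
  · rw [← QuotientGroup.eq_one_iff]
    change q x = 1
    rw [← hfactor, MonoidHom.comp_apply, MonoidHom.mem_ker.1 hx, map_one]

instance {κ G : Type*} [Finite κ] [Group G] [Group.IsFinitelyPresented G] :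
    Group.IsFinitelyPresented (κ → G) := by
  induction κ using Finite.induction_empty_option with
  | of_equiv e ih =>
    exact .equiv (MulEquiv.arrowCongr e (MulEquiv.refl G))
  | h_empty => infer_instance
  | h_option ih =>
    exact .equiv { Equiv.piOptionEquivProd.symm with map_mul' := fun a b => by ext (_ | _) <;> rfl }

/-- The property of being a subgroup of a finitely presented group. -/
def EmbedsInFinitelyPresented (G : Type*) [Group G] : Prop :=
  ∃ (L : Type) (_ : Group L) (f : G →* L), Group.IsFinitelyPresented L ∧ Function.Injective f

namespace EmbedsInFinitelyPresented

variable {G L : Type*} [Group G] [Group L]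

lemma of_injective [hL : Group.IsFinitelyPresented L] {f : G →* L} (hf : Function.Injective f) :
    EmbedsInFinitelyPresented G := by
  obtain ⟨n, φ, hφ, -⟩ := hL.out
  let e := (QuotientGroup.quotientKerEquivOfSurjective φ hφ).symm
  exact ⟨FreeGroup (Fin n) ⧸ φ.ker, inferInstance, e.toMonoidHom.comp f, .equiv e,
    e.injective.comp hf⟩

lemma comp_injective (hL : EmbedsInFinitelyPresented L) {f : G →* L} (hf : Function.Injective f) :
    EmbedsInFinitelyPresented G := by
  obtain ⟨M, _, g, hM, hg⟩ := hL
  exact ⟨M, inferInstance, g.comp f, hM, hg.comp hf⟩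

end EmbedsInFinitelyPresented

end FinitelyPresented

section ConjExtension

open Monoid.Coprod

variable {ι Y G H : Type*} [Group Y] [Group G] [Group H]

/-- The relations `rᵢ (f i y) rᵢ⁻¹ = g i y`, for `y` in a given set. -/
def conjRelations (f g : ι → Y →* G) (S : Set Y) : Set (Monoid.Coprod G (FreeGroup ι)) :=
  Set.image2 (fun i y => inr (.of i) * inl (f i y) * (inr (.of i))⁻¹ * (inl (g i y))⁻¹) Set.univ S

/-- The group obtained from `G` by adjoining letters `rᵢ` that conjugate `f i` to `g i`. It is an
iterated HNN extension if the homomorphisms `f i` and `g i` are injective. -/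
abbrev ConjExtension (f g : ι → Y →* G) :=
  Monoid.Coprod G (FreeGroup ι) ⧸ Subgroup.normalClosure (conjRelations f g Set.univ)

namespace ConjExtension

variable (f g : ι → Y →* G)

/-- The homomorphism from the base group. -/
def of : G →* ConjExtension f g := (QuotientGroup.mk' _).comp inl

/-- The adjoined letters. -/
def letter (i : ι) : ConjExtension f g := QuotientGroup.mk' _ (inr (.of i))

lemma conj_of (i : ι) (y : Y) :
    letter f g i * of f g (f i y) * (letter f g i)⁻¹ = of f g (g i y) := by
  rw [← mul_inv_eq_one]
  exact (QuotientGroup.eq_one_iff _).2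
    (Subgroup.subset_normalClosure ⟨i, Set.mem_univ _, y, Set.mem_univ _, rfl⟩)

variable {f g}

/-- The universal property of `ConjExtension`. -/
def lift (φ : G →* H) (r : ι → H) (h : ∀ i y, r i * φ (f i y) * (r i)⁻¹ = φ (g i y)) :
    ConjExtension f g →* H :=
  QuotientGroup.lift _ (Monoid.Coprod.lift φ (FreeGroup.lift r)) <|
    Subgroup.normalClosure_le_normal (N := MonoidHom.ker _) <| by
      rintro _ ⟨i, -, y, -, rfl⟩
      simp [MonoidHom.mem_ker, h]

@[simp] lemma lift_of (φ : G →* H) (r : ι → H)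
    (h : ∀ i y, r i * φ (f i y) * (r i)⁻¹ = φ (g i y)) (x : G) : lift φ r h (of f g x) = φ x := by
  simp [lift, of]

@[simp] lemma lift_letter (φ : G →* H) (r : ι → H)
    (h : ∀ i y, r i * φ (f i y) * (r i)⁻¹ = φ (g i y)) (i : ι) :
    lift φ r h (letter f g i) = r i := by
  simp [lift, letter]

lemma normalClosure_conjRelations {S : Set Y} (hS : Subgroup.closure S = ⊤) :
    Subgroup.normalClosure (conjRelations f g S) =
      Subgroup.normalClosure (conjRelations f g Set.univ) := by
  refine le_antisymm
    (Subgroup.normalClosure_mono (Set.image2_subset subset_rfl (Set.subset_univ S)))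
    (Subgroup.normalClosure_le_normal ?_)
  rintro _ ⟨i, -, y, -, rfl⟩
  let q := QuotientGroup.mk' (Subgroup.normalClosure (conjRelations f g S))
  have h : (MulAut.conj (q (inr (.of i)))).toMonoidHom.comp (q.comp (inl.comp (f i))) =
      q.comp (inl.comp (g i)) :=
    MonoidHom.eq_of_eqOn_dense hS fun y hy => by
      rw [← mul_inv_eq_one]
      exact (QuotientGroup.eq_one_iff _).2
        (Subgroup.subset_normalClosure ⟨i, Set.mem_univ _, y, hy, rfl⟩)
  refine (QuotientGroup.eq_one_iff _).1 (mul_inv_eq_one.2 (DFunLike.congr_fun h y))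

instance isFinitelyPresented [Finite ι] [hY : Group.FG Y] [Group.IsFinitelyPresented G] :
    Group.IsFinitelyPresented (ConjExtension f g) := by
  obtain ⟨S, hS, hSfin⟩ := Group.fg_iff.1 hY
  exact .quotient _ ⟨conjRelations f g S, Set.finite_univ.image2 _ hSfin,
    normalClosure_conjRelations hS⟩

end ConjExtension

end ConjExtension

/-! ### Affine rules on configurations -/

section CentralLetter

variable {G H : Type*} [Group G] [Group H]

/-- The pair of embeddings whose HNN extension adjoins a letter commuting with `P`. -/
def EmbeddingPair.central (P : Subgroup G) : EmbeddingPair P G where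
  fst := P.subtype
  snd := P.subtype
  fst_injective := P.subtype_injective
  snd_injective := P.subtype_injective

lemma EmbeddingPair.central_commute {P : Subgroup G} {g : G} (hg : g ∈ P) :
    Commute (EmbeddingPair.central P).stable ((EmbeddingPair.central P).of g) :=
  (EmbeddingPair.central P).stable_mul_of ⟨g, hg⟩

/-- The universal property of the extension by a letter commuting with `P`. -/
def EmbeddingPair.centralLift {P : Subgroup G} (f : G →* H) (x : H)
    (h : P ≤ (Subgroup.centralizer {x}).comap f) : (EmbeddingPair.central P).HNN →* H :=
  (EmbeddingPair.central P).lift f x fun y =>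
    (Subgroup.mem_centralizer_singleton_iff.1 (h y.2)).symm

@[simp] lemma EmbeddingPair.centralLift_of {P : Subgroup G} (f : G →* H) (x : H)
    (h : P ≤ (Subgroup.centralizer {x}).comap f) (g : G) :
    centralLift f x h ((central P).of g) = f g :=
  lift_of _ _ _ _ _

@[simp] lemma EmbeddingPair.centralLift_stable {P : Subgroup G} (f : G →* H) (x : H)
    (h : P ≤ (Subgroup.centralizer {x}).comap f) : centralLift f x h (central P).stable = x :=
  lift_stable _ _ _ _

/-- The rope group of a subgroup `N` of `F`: the extension of the group generated by `F` and a free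
letter `t` by a letter commuting with the conjugates of `t` by the elements of `N`. -/
abbrev RopeGroup (N : Subgroup G) :=
  (EmbeddingPair.central (ConfigGroup.configSubgroup {u : Unit × G | u.2 ∈ N})).HNN

end CentralLetter

instance {Q V : Type*} [Finite Q] [Group V] [Group.IsFinitelyPresented V] :
    Group.IsFinitelyPresented (ConfigGroup Q V) :=
  .equiv ConfigGroup.coprodEquiv

universe u v

/-- A rule relating the configuration `srcMap u * srcShift` in state `src` with the configuration
`dstMap u * dstShift` in state `dst`, for every `u : V`. -/
structure AffineRule (Q V : Type*) [Group V] where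
  src : Q
  dst : Q
  srcMap : V →* V
  dstMap : V →* V
  srcShift : V
  dstShift : V
  srcMap_injective : Function.Injective srcMap
  dstMap_injective : Function.Injective dstMap

namespace AffineRule

variable {Q : Type u} {V : Type v} {ι : Type*} [Group V]

/-- The relation between configurations given by a rule. -/
def Rel (r : AffineRule Q V) (x y : Q × V) : Prop :=
  ∃ u, x = (r.src, r.srcMap u * r.srcShift) ∧ y = (r.dst, r.dstMap u * r.dstShift)

/-- The equivalence relation on configurations generated by a family of rules. -/
def Connected (R : ι → AffineRule Q V) : Q × V → Q × V → Prop :=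
  Relation.EqvGen fun x y => ∃ i, (R i).Rel x y

/-- The two embeddings of the one-state configuration group that are related by a rule. -/
def pair (r : AffineRule Q V) : EmbeddingPair (ConfigGroup Unit V) (ConfigGroup Q V) where
  fst := ConfigGroup.map r.srcMap r.src r.srcShift
  snd := ConfigGroup.map r.dstMap r.dst r.dstShift
  fst_injective := ConfigGroup.map_injective r.srcMap_injective _ _
  snd_injective := ConfigGroup.map_injective r.dstMap_injective _ _

open ConfigGroup

lemma pair_fst_config (r : AffineRule Q V) (u : V) :
    r.pair.fst (config ((), u)) = config (r.src, r.srcMap u * r.srcShift) :=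
  map_config _ _ _ _

lemma pair_snd_config (r : AffineRule Q V) (u : V) :
    r.pair.snd (config ((), u)) = config (r.dst, r.dstMap u * r.dstShift) :=
  map_config _ _ _ _

lemma fst_mem_iff_snd_mem (R : ι → AffineRule Q V) (x₀ : Q × V) (i : ι) (y : ConfigGroup Unit V) :
    (R i).pair.fst y ∈ configSubgroup {x | Connected R x₀ x} ↔
      (R i).pair.snd y ∈ configSubgroup {x | Connected R x₀ x} := by
  have hset : {u : Unit × V | Connected R x₀ ((R i).src, (R i).srcMap u.2 * (R i).srcShift)} =
      {u | Connected R x₀ ((R i).dst, (R i).dstMap u.2 * (R i).dstShift)} := by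
    ext u
    have hstep := Relation.EqvGen.rel (r := fun x y => ∃ i, (R i).Rel x y) _ _
      ⟨i, u.2, rfl, rfl⟩
    exact ⟨fun h => h.trans _ _ _ hstep, fun h => h.trans _ _ _ (hstep.symm _ _)⟩
  simp only [pair, map_mem_configSubgroup (R i).srcMap_injective,
    map_mem_configSubgroup (R i).dstMap_injective, Set.mem_ofPred_eq, hset]

section Higman

variable (R : ι → AffineRule Q V) (x₀ : Q × V)

/-- The configuration group with one letter for every rule. -/
abbrev RuleGroup := ConjExtension (fun i => (R i).pair.fst) (fun i => (R i).pair.snd)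

/-- The homomorphism whose image is generated by the configuration `x₀` and the rule letters. -/
def seedHom : FreeGroup (Option ι) →* RuleGroup R :=
  FreeGroup.lift fun
    | none => ConjExtension.of _ _ (config x₀)
    | some i => ConjExtension.letter _ _ i

/-- The rule group with a letter commuting with `x₀` and with the rule letters, hence with every
configuration connected to `x₀`. -/
abbrev SeedGroup := ConjExtension (fun _ : Unit => seedHom R x₀) (fun _ => seedHom R x₀)

variable {R x₀}

lemma of_config_mem_range_seedHom_iff {x y : Q × V} (h : Connected R x y) :
    ConjExtension.of _ _ (config x) ∈ (seedHom R x₀).range ↔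
      ConjExtension.of _ _ (config y) ∈ (seedHom R x₀).range := by
  induction h with
  | rel x y h =>
    obtain ⟨i, u, rfl, rfl⟩ := h
    have hconj :=
      ConjExtension.conj_of (fun i => (R i).pair.fst) (fun i => (R i).pair.snd) i (config ((), u))
    have hletter : ConjExtension.letter _ _ i ∈ (seedHom R x₀).range :=
      ⟨.of (some i), FreeGroup.lift_apply_of⟩
    rw [← pair_fst_config, ← pair_snd_config, ← hconj,
      Subgroup.mul_mem_cancel_right _ (inv_mem hletter), Subgroup.mul_mem_cancel_left _ hletter]
  | refl => rfl
  | symm _ _ _ ih => exact ih.symm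
  | trans _ _ _ _ _ ih₁ ih₂ => exact ih₁.trans ih₂

lemma commute_letter_of_config {x : Q × V} (h : Connected R x₀ x) :
    Commute (ConjExtension.of _ _ (ConjExtension.of _ _ (config x)) : SeedGroup R x₀)
      (ConjExtension.letter _ _ ()) := by
  obtain ⟨y, hy⟩ := (of_config_mem_range_seedHom_iff (x₀ := x₀) h).1
    ⟨.of none, FreeGroup.lift_apply_of⟩
  have := ConjExtension.conj_of (fun _ : Unit => seedHom R x₀) (fun _ => seedHom R x₀) () y
  rw [← hy]
  exact (mul_inv_eq_iff_eq_mul.1 this).symm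

/-- The seed group maps to a tower of HNN extensions, in which the central letter commutes with no
configuration besides those connected to `x₀`. -/
lemma exists_seedGroup_model [Finite ι] :
    ∃ (L : Type (max u v)) (_ : Group L) (e : ConfigGroup Q V →* L) (P : Subgroup L)
      (θ : SeedGroup R x₀ →* (EmbeddingPair.central P).HNN), Function.Injective e ∧
      (∀ g, e g ∈ P ↔ g ∈ configSubgroup {x | Connected R x₀ x}) ∧
      (∀ g, θ (ConjExtension.of _ _ (ConjExtension.of _ _ g)) =
        (EmbeddingPair.central P).of (e g)) ∧
      θ (ConjExtension.letter _ _ ()) = (EmbeddingPair.central P).stable := by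
  obtain ⟨l, hl⟩ := Finite.exists_univ_list ι
  obtain ⟨L, _, e, r, he, hr, hmem⟩ :=
    exists_hnn_tower (fun i => (R i).pair) (fst_mem_iff_snd_mem R x₀) l
  let P := Subgroup.closure (e '' configSubgroup {x | Connected R x₀ x} ∪ r '' {i | i ∈ l})
  let c := EmbeddingPair.central P
  let θ₁ : RuleGroup R →* L :=
    ConjExtension.lift e r fun i y => mul_inv_eq_iff_eq_mul.2 (hr i (hl.2 i) y)
  have hP : (seedHom R x₀).range ≤ P.comap θ₁ := by
    refine FreeGroup.range_lift_le ?_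
    rintro _ ⟨_ | i, rfl⟩
    · have hmem : e (config x₀) ∈ P := Subgroup.subset_closure
        (Or.inl ⟨_, config_mem_configSubgroup (.refl x₀), rfl⟩)
      simpa [θ₁] using hmem
    · have hmem : r i ∈ P := Subgroup.subset_closure (Or.inr ⟨i, hl.2 i, rfl⟩)
      simpa [θ₁] using hmem
  refine ⟨L, inferInstance, e, P, ConjExtension.lift (c.of.comp θ₁) (fun _ => c.stable)
    fun _ y => mul_inv_eq_iff_eq_mul.2 (EmbeddingPair.central_commute (hP ⟨y, rfl⟩)), he,
    fun g => ⟨hmem g, fun h => Subgroup.subset_closure (Or.inl ⟨g, h, rfl⟩)⟩, fun g => ?_, ?_⟩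
  · simp [θ₁, c]
  · simp [c]

/-- Higman's embedding: the central letter of the seed group commutes with `(q, β f * z)` precisely
if `f ∈ N`. -/
theorem embedsInFinitelyPresented_ropeGroup [Finite Q] [Finite ι] [Group.IsFinitelyPresented V]
    {F : Type*} [Group F] {N : Subgroup F} {β : F →* V} (hβ : Function.Injective β) (q : Q) (z : V)
    (hN : ∀ f, f ∈ N ↔ Connected R (q, z) (q, β f * z)) :
    EmbedsInFinitelyPresented (RopeGroup N) := by
  have : Group.FG (ConfigGroup Unit V) := fg_of_isFinitelyPresented _
  have : Group.FG (FreeGroup (Option ι)) := fg_of_isFinitelyPresented _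
  obtain ⟨L, _, e, P, θ, he, hP, hθ_of, hθ_letter⟩ :=
    exists_seedGroup_model (R := R) (x₀ := (q, z))
  let k : RopeGroup N →* SeedGroup R (q, z) :=
    EmbeddingPair.centralLift
      (((ConjExtension.of _ _).comp (ConjExtension.of _ _)).comp (map β q z))
      (ConjExtension.letter _ _ ()) <| configSubgroup_le.2 fun u hu => by
        simpa [Subgroup.mem_centralizer_singleton_iff] using
          (commute_letter_of_config ((hN u.2).1 hu)).eq
  have hmem (g) : e (map β q z g) ∈ P ↔ g ∈ configSubgroup {u : Unit × F | u.2 ∈ N} := by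
    simp only [hP, map_mem_configSubgroup hβ, Set.mem_ofPred_eq, hN]
  let j : EmbeddingPair.CartesianHom
      (EmbeddingPair.central (configSubgroup {u : Unit × F | u.2 ∈ N}))
      (EmbeddingPair.central P) :=
    { base := e.comp (map β q z)
      fiber := fun y => ⟨e (map β q z y), (hmem y).2 y.2⟩
      base_fst := fun _ => rfl
      base_snd := fun _ => rfl
      mem_fst := fun {g y} h => ⟨⟨g, (hmem g).1 (h ▸ y.2)⟩, rfl⟩
      mem_snd := fun {g y} h => ⟨⟨g, (hmem g).1 (h ▸ y.2)⟩, rfl⟩ }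
  have hjk : θ.comp k = j.map :=
    EmbeddingPair.hom_ext _ (fun g => by simp [k, j, hθ_of]) (by simp [k, hθ_letter])
  refine .of_injective (f := k) (Function.Injective.of_comp (f := θ) ?_)
  rw [← MonoidHom.coe_comp, hjk]
  exact j.map_injective (he.comp (map_injective hβ q z))

end Higman

end AffineRule

/-! ### The rope trick -/

section TupleAction

variable {I : Type*} [DecidableEq I] (Γ : Type*) [Group Γ]

/-- The action of `Γ` on `(I → Γ) × Γ` that multiplies the coordinate `i` of the tuple. -/
def mulCoord (i : I) : Γ →* Equiv.Perm ((I → Γ) × Γ) :=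
  (MulAction.toPermHom ((I → Γ) × Γ) _).comp
    ((MonoidHom.inl (I → Γ) Γ).comp (MonoidHom.mulSingle (fun _ => Γ) i))

variable (I) in
omit [DecidableEq I] in
/-- The action of `Γ` on `(I → Γ) × Γ` that multiplies the last component. -/
def mulLast : Γ →* Equiv.Perm ((I → Γ) × Γ) :=
  (MulAction.toPermHom ((I → Γ) × Γ) _).comp (MonoidHom.inr (I → Γ) Γ)

omit [DecidableEq I] [Group Γ] in
/-- The permutation of the coordinates of the tuple induced by a permutation of the indices. -/
def reindex (e : Equiv.Perm I) : Equiv.Perm ((I → Γ) × Γ) :=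
  Equiv.prodCongr (Equiv.arrowCongr e (Equiv.refl Γ)) (Equiv.refl Γ)

omit [DecidableEq I] in
/-- The permutation multiplying the last component by the coordinate `i` of the tuple. -/
def transfer (i : I) : Equiv.Perm ((I → Γ) × Γ) :=
  Equiv.prodShear (Equiv.refl (I → Γ)) fun ω => Equiv.mulLeft (ω i)

variable {Γ}

lemma mulCoord_apply (i : I) (g : Γ) (ω : (I → Γ) × Γ) :
    mulCoord Γ i g ω = (Pi.mulSingle i g * ω.1, ω.2) :=
  Prod.ext rfl (one_mul _)

omit [DecidableEq I] in
lemma mulLast_apply (g : Γ) (ω : (I → Γ) × Γ) : mulLast I Γ g ω = (ω.1, g * ω.2) :=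
  Prod.ext (one_mul _) rfl

omit [DecidableEq I] in
lemma mulLast_injective : Function.Injective (mulLast I Γ) := fun g h hgh => by
  simpa [mulLast_apply] using DFunLike.congr_fun hgh 1

lemma commute_mulCoord_mulLast (i : I) (g h : Γ) : Commute (mulCoord Γ i g) (mulLast I Γ h) := by
  ext ω : 1
  simp [mulCoord_apply, mulLast_apply]

lemma reindex_mul_mulCoord (e : Equiv.Perm I) (i : I) (g : Γ) :
    reindex Γ e * mulCoord Γ i g = mulCoord Γ (e i) g * reindex Γ e := by
  ext ω k
  · by_cases h : k = e i
    · subst h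
      simp [reindex, mulCoord_apply]
    · have h' : e.symm k ≠ i := fun h' => h (by simp [← h'])
      simp [reindex, mulCoord_apply, h, h']
  · simp [reindex, mulCoord_apply]

lemma transfer_mul_mulCoord_self (i : I) (g : Γ) :
    transfer Γ i * mulCoord Γ i g = mulCoord Γ i g * mulLast I Γ g * transfer Γ i := by
  ext ω : 1
  simp [transfer, mulCoord_apply, mulLast_apply, mul_assoc]

lemma commute_transfer_mulCoord {i k : I} (h : i ≠ k) (g : Γ) :
    Commute (transfer Γ i) (mulCoord Γ k g) := by
  ext ω : 1
  simp [transfer, mulCoord_apply, h]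

end TupleAction

section RopeTrick

/-- The combinatorial core of the rope trick: `τ` commutes with `a * τ * a⁻¹` only if `a` is a
product of conjugates `τⁱ * a * τ⁻ⁱ` with `i = 1, 2`, so what commutes with the latter commutes with
`a`. -/
lemma eq_one_of_commute_conj {G : Type*} [Group G] {a c τ ρ : G} (h₀ : ρ * a * ρ⁻¹ = a * c)
    (h₁ : Commute ρ (τ * a * τ⁻¹)) (h₂ : Commute ρ (τ ^ 2 * a * (τ ^ 2)⁻¹))
    (hτ : Commute τ (a * τ * a⁻¹)) : c = 1 := by
  have ha : a = (τ * a * τ⁻¹) * (τ ^ 2 * a * (τ ^ 2)⁻¹)⁻¹ * (τ * a * τ⁻¹) := by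
    have h : τ * (a * τ * a⁻¹) * (τ⁻¹ * τ⁻¹) = a * τ * a⁻¹ * τ * (τ⁻¹ * τ⁻¹) := by rw [hτ.eq]
    rw [eq_comm]
    calc _ = τ * (a * τ * a⁻¹) * (τ⁻¹ * τ⁻¹) * (τ * a * τ⁻¹) := by group
      _ = a := by rw [h]; group
  have hρ : Commute ρ a := ha ▸ (h₁.mul_right h₂.inv_right).mul_right h₁
  rw [hρ.eq, mul_inv_cancel_right] at h₀
  exact mul_eq_left.1 h₀.symm

variable (F : Type*) [Group F]

open Monoid.Coprod

/-- The free product of `F × F` and an infinite cyclic group. -/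
abbrev TransferBase := Monoid.Coprod (F × F) (Multiplicative ℤ)

namespace TransferBase

/-- The generator of the infinite cyclic factor. -/
def τ : TransferBase F := inr (.ofAdd 1)

/-- The conjugate by `τ ^ i` of the first copy of `F`. -/
def conjFst (i : ℕ) : F →* TransferBase F :=
  (MulAut.conj (τ F ^ i)).toMonoidHom.comp (inl.comp (MonoidHom.inl F F))

lemma conjFst_apply (i : ℕ) (f : F) :
    conjFst F i f = τ F ^ i * inl (f, 1) * (τ F ^ i)⁻¹ :=
  rfl

lemma conjFst_succ (i : ℕ) (f : F) : conjFst F (i + 1) f = τ F * conjFst F i f * (τ F)⁻¹ := by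
  simp only [conjFst_apply, pow_succ', mul_inv_rev, mul_assoc]

/-- The diagonal copy of `F` in `F × F`. -/
def diag : F →* TransferBase F := inl.comp ((MonoidHom.id F).prod (MonoidHom.id F))

variable {F} in
/-- The homomorphism on `F * F * F` given by `φ` and by the conjugates of the first copy of `F`. -/
def triple (φ : F →* TransferBase F) : Monoid.Coprod F (Monoid.Coprod F F) →* TransferBase F :=
  Monoid.Coprod.lift φ (Monoid.Coprod.lift (conjFst F 1) (conjFst F 2))

end TransferBase

open TransferBase

/-- The group obtained from `TransferBase F` by adjoining a letter that conjugates `(f, 1)` to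
`(f, f)` and commutes with `τⁱ * (f, 1) * τ⁻ⁱ` for `i = 1, 2`. -/
abbrev TransferGroup :=
  ConjExtension (fun _ : Unit => triple (conjFst F 0)) (fun _ => triple (diag F))

namespace TransferGroup

/-- The inclusion of the base. -/
def of : TransferBase F →* TransferGroup F := ConjExtension.of _ _

/-- The adjoined letter. -/
def ρ : TransferGroup F := ConjExtension.letter _ _ ()

lemma conj_fst (f : F) :
    ρ F * of F (inl (f, 1)) * (ρ F)⁻¹ = of F (inl (f, 1)) * of F (inl (1, f)) := by
  have h : ρ F * of F (triple (conjFst F 0) (inl f)) * (ρ F)⁻¹ = of F (triple (diag F) (inl f)) :=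
    ConjExtension.conj_of (fun _ : Unit => triple (conjFst F 0)) (fun _ => triple (diag F)) () _
  simpa [triple, conjFst, diag, ← map_mul] using h

lemma commute_conjFst {i : ℕ} (hi : i = 1 ∨ i = 2) (f : F) :
    Commute (ρ F) (of F (conjFst F i f)) := by
  obtain ⟨y, h₀, h₁⟩ : ∃ y, triple (conjFst F 0) y = conjFst F i f ∧
      triple (diag F) y = conjFst F i f := by
    rcases hi with rfl | rfl
    exacts [⟨inr (inl f), rfl, rfl⟩, ⟨inr (inr f), rfl, rfl⟩]
  have h : ρ F * of F (triple (conjFst F 0) y) * (ρ F)⁻¹ = of F (triple (diag F) y) :=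
    ConjExtension.conj_of (fun _ : Unit => triple (conjFst F 0)) (fun _ => triple (diag F)) () y
  exact mul_inv_eq_iff_eq_mul.1 (by rwa [h₀, h₁] at h)

lemma map_snd_eq_one {H : Type*} [Group H] (φ : TransferGroup F →* H) {f : F}
    (h : Commute (φ (of F (τ F)))
      (φ (of F (inl (f, 1) * τ F * (inl (f, 1))⁻¹)))) : φ (of F (inl (1, f))) = 1 := by
  refine eq_one_of_commute_conj (a := φ (of F (inl (f, 1)))) (ρ := φ (ρ F))
    (τ := φ (of F (τ F))) ?_ ?_ ?_ ?_
  · simp only [← map_mul, ← map_inv, conj_fst]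
  · simpa [conjFst_apply] using (commute_conjFst F (.inl rfl) f).map φ
  · simpa [conjFst_apply] using (commute_conjFst F (.inr rfl) f).map φ
  · simpa using h

variable {F} {Γ : Type*} [Group Γ] (q : F →* Γ)

/-- The action of the base of the transfer group on `(ℤ → Γ) × Γ` induced by `q : F →* Γ`: the first
copy of `F` multiplies the coordinate `0`, the second copy multiplies the last component, and `τ`
translates the indices. -/
def basePerm : TransferBase F →* Equiv.Perm ((ℤ → Γ) × Γ) :=
  Monoid.Coprod.lift
    (((mulCoord Γ 0).comp q).noncommCoprod ((mulLast ℤ Γ).comp q) fun _ _ =>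
      commute_mulCoord_mulLast _ _ _)
    (zpowersHom _ (reindex Γ (Equiv.addRight 1)))

lemma basePerm_conjFst (i : ℕ) (f : F) : basePerm q (conjFst F i f) = mulCoord Γ (i : ℤ) (q f) := by
  induction i with
  | zero => simp [basePerm, conjFst_apply]
  | succ i ih =>
    have hτ : basePerm q (τ F) = reindex Γ (Equiv.addRight (1 : ℤ)) := by simp [basePerm, τ]
    rw [conjFst_succ, map_mul, map_mul, map_inv, ih, hτ, reindex_mul_mulCoord, mul_inv_cancel_right]
    rfl

lemma basePerm_diag (f : F) :
    basePerm q (diag F f) = mulCoord Γ 0 (q f) * mulLast ℤ Γ (q f) := by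
  simp [basePerm, diag]

/-- The action of the transfer group on `(ℤ → Γ) × Γ` extending `basePerm`. -/
def toPerm : TransferGroup F →* Equiv.Perm ((ℤ → Γ) × Γ) :=
  ConjExtension.lift (basePerm q) (fun _ => transfer Γ 0) fun _ y => by
    have h : (MulAut.conj (transfer Γ 0)).toMonoidHom.comp
        ((basePerm q).comp (triple (conjFst F 0))) = (basePerm q).comp (triple (diag F)) := by
      refine Monoid.Coprod.hom_ext ?_ (Monoid.Coprod.hom_ext ?_ ?_) <;> ext f : 1
      · simp [triple, basePerm_conjFst, basePerm_diag, transfer_mul_mulCoord_self]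
      · simp [triple, basePerm_conjFst, (commute_transfer_mulCoord _ _).eq]
      · simp [triple, basePerm_conjFst, (commute_transfer_mulCoord _ _).eq]
    exact DFunLike.congr_fun h y

lemma toPerm_of_conjFst (i : ℕ) (f : F) :
    toPerm q (of F (conjFst F i f)) = mulCoord Γ (i : ℤ) (q f) := by
  rw [← basePerm_conjFst]
  exact ConjExtension.lift_of _ _ _ _

lemma toPerm_of_snd (f : F) : toPerm q (of F (inl (1, f))) = mulLast ℤ Γ (q f) :=
  (ConjExtension.lift_of _ _ _ _).trans (by simp [basePerm])

end TransferGroup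

namespace RopeGroup

variable {F} (N : Subgroup F)

/-- The inclusion of `F` in the rope group. -/
def shift : F →* RopeGroup N := (EmbeddingPair.of _).comp ConfigGroup.shift

/-- The generator whose conjugates by `N` commute with `rope`. -/
def seed : RopeGroup N := EmbeddingPair.of _ (ConfigGroup.config ((), 1))

/-- The stable letter. -/
def rope : RopeGroup N := EmbeddingPair.stable _

lemma commute_rope {f : F} (hf : f ∈ N) :
    Commute (rope N) (shift N f * seed N * (shift N f)⁻¹) := by
  have h := EmbeddingPair.central_commute (ConfigGroup.config_mem_configSubgroup
    (I := {u : Unit × F | u.2 ∈ N}) (p := ((), f)) hf)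
  rwa [← mul_one f, ← ConfigGroup.shift_conj_config, map_mul, map_mul, map_inv] at h

/-- The presentation of the rope group without the commutation relations. -/
def generators : Monoid.Coprod F (FreeGroup Bool) →* RopeGroup N :=
  Monoid.Coprod.lift (shift N) (FreeGroup.lift fun b => bif b then rope N else seed N)

/-- The homomorphism defined on the generators of the rope group by the inclusion of `F` and by
sending both letters to `τ`. -/
def toTransfer : Monoid.Coprod F (FreeGroup Bool) →* TransferGroup F :=
  (TransferGroup.of F).comp (Monoid.Coprod.lift (inl.comp (MonoidHom.inl F F))
    (FreeGroup.lift fun _ => τ F))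

lemma exists_lift_toTransfer [N.Normal] : ∃ η : RopeGroup N →* Equiv.Perm ((ℤ → F ⧸ N) × (F ⧸ N)),
    η.comp (generators N) = (TransferGroup.toPerm (QuotientGroup.mk' N)).comp toTransfer := by
  let θ := TransferGroup.toPerm (QuotientGroup.mk' N)
  let φ : ConfigGroup Unit F →* Equiv.Perm ((ℤ → F ⧸ N) × (F ⧸ N)) :=
    ((θ.comp (TransferGroup.of F)).comp (Monoid.Coprod.lift (inl.comp (MonoidHom.inl F F))
      (FreeGroup.lift fun _ => τ F))).comp ConfigGroup.coprodEquiv.symm.toMonoidHom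
  have hF {f : F} (hf : f ∈ N) : θ (TransferGroup.of F (inl (f, 1))) = 1 := by
    have hf' : (f : F ⧸ N) = 1 := (QuotientGroup.eq_one_iff f).2 hf
    simpa [conjFst_apply, hf'] using TransferGroup.toPerm_of_conjFst (QuotientGroup.mk' N) 0 f
  refine ⟨EmbeddingPair.centralLift φ (θ (TransferGroup.of F (τ F)))
    (ConfigGroup.configSubgroup_le.2 ?_), ?_⟩
  · rintro ⟨⟨⟩, f⟩ hf
    simp [Subgroup.mem_centralizer_singleton_iff, φ, ConfigGroup.coprodEquiv_symm_config, hF hf]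
  · refine Monoid.Coprod.hom_ext ?_ ?_
    · ext f : 1
      simp [generators, shift, toTransfer, φ, θ, ConfigGroup.coprodEquiv_symm_shift]
    · ext b : 1
      cases b <;>
        simp [generators, rope, seed, toTransfer, φ, θ, ConfigGroup.coprodEquiv_symm_config]

end RopeGroup

section Shear

variable {Y R L W P : Type*} [Group Y] [Group R] [Group L] [Group W] [Group P]

/-- The extension of `L × W` by a letter conjugating `(g y, 1)` to `(g y, w y)` for all `y`. -/
abbrev ShearGroup (g : Y →* L) (w : Y →* W) :=
  ConjExtension (fun _ : Unit => g.prod (1 : Y →* W)) (fun _ => g.prod w)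

/-- The inclusion of the factor `W`. -/
def ShearGroup.ofRight (g : Y →* L) (w : Y →* W) : W →* ShearGroup g w :=
  (ConjExtension.of _ _).comp (MonoidHom.inr L W)

lemma ShearGroup.ofRight_eq_one (g : Y →* L) (w : Y →* W) {y : Y} (hy : g y = 1) :
    ofRight g w (w y) = 1 := by
  have h := ConjExtension.conj_of (fun _ : Unit => g.prod (1 : Y →* W)) (fun _ => g.prod w) () y
  simpa [hy, ← Prod.one_eq_mk, eq_comm] using! h

/-- If `w` becomes a function of `g` after composition with `θ`, then the shear group maps to an HNN
extension of `L × P`. -/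
lemma ShearGroup.map_eq_one_of_ofRight_eq_one {k : R →* L} (hk : Function.Injective k) {φ : Y →* R}
    {w : Y →* W} {θ : W →* P} {η : R →* P} (hη : η.comp φ = θ.comp w) {x : W}
    (hx : ofRight (k.comp φ) w x = 1) : θ x = 1 := by
  let p : EmbeddingPair R (L × P) :=
    { fst := k.prod 1
      snd := k.prod η
      fst_injective := fun a b h => hk (congrArg Prod.fst h)
      snd_injective := fun a b h => hk (congrArg Prod.fst h) }
  let ψ : ShearGroup (k.comp φ) w →* p.HNN :=
    ConjExtension.lift (p.of.comp ((MonoidHom.id L).prodMap θ)) (fun _ => p.stable) fun _ y => by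
      have h := p.stable_mul_of (φ y)
      have hy : η (φ y) = θ (w y) := DFunLike.congr_fun hη y
      rw [mul_inv_eq_iff_eq_mul]
      simpa [p, hy] using! h
  have hψ : p.of (1, θ x) = 1 := by
    simpa [ψ, ofRight] using congrArg ψ hx
  exact congrArg Prod.snd ((map_eq_one_iff _ p.of_injective).1 hψ)

end Shear

open scoped commutatorElement in
theorem embedsInFinitelyPresented_quotient {F : Type} [Group F] [Group.IsFinitelyPresented F]
    {N : Subgroup F} [N.Normal] (h : EmbedsInFinitelyPresented (RopeGroup N)) :
    EmbedsInFinitelyPresented (F ⧸ N) := by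
  obtain ⟨L, _, k, hL, hk⟩ := h
  let c : F →* ShearGroup (k.comp (RopeGroup.generators N)) RopeGroup.toTransfer :=
    (ShearGroup.ofRight _ _).comp ((TransferGroup.of F).comp (inl.comp (MonoidHom.inr F F)))
  have map_c {f : F} (hf : f ∈ N) : c f = 1 := by
    refine TransferGroup.map_snd_eq_one F (ShearGroup.ofRight _ _) ?_
    let x : Monoid.Coprod F (FreeGroup Bool) := inr (FreeGroup.of true)
    let y : Monoid.Coprod F (FreeGroup Bool) :=
      inl f * inr (FreeGroup.of false) * (inl f)⁻¹
    have hxy : k.comp (RopeGroup.generators N) ⁅x, y⁆ = 1 := by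
      have := commutatorElement_eq_one_iff_commute.2 (RopeGroup.commute_rope N hf)
      simpa [x, y, RopeGroup.generators, map_commutatorElement] using congrArg k this
    have := ShearGroup.ofRight_eq_one _ RopeGroup.toTransfer hxy
    rw [← commutatorElement_eq_one_iff_commute, ← map_commutatorElement]
    simpa [x, y, RopeGroup.toTransfer, map_commutatorElement] using this
  have mem_of_map_c {f : F} (hf : c f = 1) : f ∈ N := by
    obtain ⟨η, hη⟩ := RopeGroup.exists_lift_toTransfer N
    have : TransferGroup.toPerm (QuotientGroup.mk' N) (TransferGroup.of F (inl (1, f))) = 1 :=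
      ShearGroup.map_eq_one_of_ofRight_eq_one hk hη hf
    rw [TransferGroup.toPerm_of_snd, map_eq_one_iff _ mulLast_injective] at this
    exact (QuotientGroup.eq_one_iff f).1 this
  have := fg_of_isFinitelyPresented (Monoid.Coprod F (FreeGroup Bool))
  have := fg_of_isFinitelyPresented (Monoid.Coprod F (Monoid.Coprod F F))
  refine .of_injective (f := QuotientGroup.lift N c fun f hf => map_c hf) ?_
  refine (injective_iff_map_eq_one _).2 fun x hx => ?_
  obtain ⟨f, rfl⟩ := QuotientGroup.mk_surjective x
  exact (QuotientGroup.eq_one_iff f).2 (mem_of_map_c hx)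

end RopeTrick

/-! ### Stacks as integers -/

section Stack

variable {ι : Type*} [Fintype ι]

/-- The base of the number system in which the stacks with letters in `ι` are written; the digit `0`
does not occur. -/
def stackBase (ι : Type*) [Fintype ι] : ℤ := Fintype.card ι + 1

/-- The value of the last digit of a stack with top letter `o`; it vanishes on an empty stack. -/
def topDigit (o : Option ι) : ℤ := o.elim 0 fun i => Fintype.equivFin ι i + 1

/-- The integer whose digits are the letters of a stack, the top being the last digit. -/
def stackValue : List ι → ℤ
  | [] => 0
  | i :: l => stackBase ι * stackValue l + topDigit (some i)

lemma stackBase_pos : 0 < stackBase ι := by unfold stackBase; positivity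

lemma topDigit_nonneg (o : Option ι) : 0 ≤ topDigit o := by
  cases o <;> simp only [topDigit, Option.elim] <;> positivity

lemma topDigit_lt (o : Option ι) : topDigit o < stackBase ι := by
  cases o with
  | none => exact stackBase_pos
  | some i => simp [topDigit, stackBase]

lemma topDigit_injective : Function.Injective (topDigit (ι := ι)) := by
  rintro (_ | i) (_ | j) h
  · rfl
  · simp only [topDigit, Option.elim] at h; omega
  · simp only [topDigit, Option.elim] at h; omega
  · simpa [topDigit, Fin.val_inj] using h

lemma eq_of_stackBase_mul_add_topDigit {x y : ℤ} {o o' : Option ι}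
    (h : stackBase ι * x + topDigit o = stackBase ι * y + topDigit o') : x = y ∧ o = o' := by
  have ho : topDigit o = topDigit o' := by
    simpa [Int.emod_eq_of_lt, topDigit_nonneg, topDigit_lt] using congrArg (· % stackBase ι) h
  exact ⟨mul_left_cancel₀ stackBase_pos.ne' (by simpa [ho] using h), topDigit_injective ho⟩

lemma stackBase_mul_tail_add_topDigit_head (l : List ι) :
    stackBase ι * stackValue l.tail + topDigit l.head? = stackValue l := by
  cases l <;> simp [stackValue, topDigit]

/-- Stacks as elements of an infinite cyclic group written multiplicatively. -/
def stackCode (l : List ι) : Multiplicative ℤ := .ofAdd (stackValue l)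

variable (ι) in
/-- Multiplication by the base, which makes room for a new top letter. -/
def stackShift : Multiplicative ℤ →* Multiplicative ℤ := zpowGroupHom (stackBase ι)

/-- The top letter of a stack as a group element. -/
def stackTop (o : Option ι) : Multiplicative ℤ := .ofAdd (topDigit o)

lemma stackShift_injective : Function.Injective (stackShift ι) :=
  zpow_left_injective stackBase_pos.ne'

lemma stackShift_mul_stackTop (l : List ι) :
    stackShift ι (stackCode l.tail) * stackTop l.head? = stackCode l := by
  refine Multiplicative.toAdd.injective ?_
  simpa [stackShift, stackCode, stackTop] using stackBase_mul_tail_add_topDigit_head l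

lemma stackShift_mul_stackTop_eq_stackCode_iff {x : Multiplicative ℤ} {o : Option ι} {l : List ι} :
    stackShift ι x * stackTop o = stackCode l ↔ x = stackCode l.tail ∧ o = l.head? := by
  refine ⟨fun h => ?_, ?_⟩
  · rw [← stackShift_mul_stackTop] at h
    obtain ⟨h₁, h₂⟩ := eq_of_stackBase_mul_add_topDigit (x := x.toAdd) (y := stackValue l.tail)
      (o := o) (o' := l.head?) (by simpa [stackShift, stackTop, stackCode] using! h)
    exact ⟨congrArg Multiplicative.ofAdd h₁, h₂⟩
  · rintro ⟨rfl, rfl⟩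
    exact stackShift_mul_stackTop l

lemma stackCode_cons (i : ι) (l : List ι) :
    stackCode (i :: l) = stackShift ι (stackCode l) * stackTop (some i) :=
  (stackShift_mul_stackTop (i :: l)).symm

end Stack

namespace AffineRule

variable {Q Q' V V' : Type*} [Group V] [Group V']

/-- The rule turning the configurations `(q, v)` into `(q', v * g)`. -/
def translate (q q' : Q) (g : V) : AffineRule Q V where
  src := q
  dst := q'
  srcMap := .id V
  dstMap := .id V
  srcShift := 1
  dstShift := g
  srcMap_injective := Function.injective_id
  dstMap_injective := Function.injective_id

lemma rel_translate {q q' : Q} {g : V} {x y : Q × V} :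
    (translate q q' g).Rel x y ↔ x.1 = q ∧ y.1 = q' ∧ y.2 = x.2 * g := by
  simp only [Rel, translate, MonoidHom.id_apply, mul_one, Prod.ext_iff]
  grind

/-- The rule pushing `i` on a stack if `o = some i`. -/
def push {ι : Type*} [Fintype ι] (o : Option ι) : AffineRule Unit (Multiplicative ℤ) where
  src := ()
  dst := ()
  srcMap := .id _
  dstMap := stackShift ι
  srcShift := 1
  dstShift := stackTop o
  srcMap_injective := Function.injective_id
  dstMap_injective := stackShift_injective

/-- The rule fixing the stacks with top `o`. -/
def peek {ι : Type*} [Fintype ι] (o : Option ι) : AffineRule Unit (Multiplicative ℤ) where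
  src := ()
  dst := ()
  srcMap := stackShift ι
  dstMap := stackShift ι
  srcShift := stackTop o
  dstShift := stackTop o
  srcMap_injective := stackShift_injective
  dstMap_injective := stackShift_injective

section Stack

variable {ι : Type*} [Fintype ι] {o : Option ι} {x y : Unit × Multiplicative ℤ}

lemma rel_push : (push o).Rel x y ↔ y.2 = stackShift ι x.2 * stackTop o := by
  simp [Rel, push, Prod.ext_iff, eq_comm]

lemma rel_peek : (peek o).Rel x y ↔ x.2 = y.2 ∧ ∃ u, stackShift ι u * stackTop o = x.2 := by
  simp only [Rel, peek, Prod.ext_iff]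
  grind

end Stack

/-- The rules acting independently on the two components of a configuration. -/
def prod (r : AffineRule Q V) (r' : AffineRule Q' V') : AffineRule (Q × Q') (V × V') where
  src := (r.src, r'.src)
  dst := (r.dst, r'.dst)
  srcMap := r.srcMap.prodMap r'.srcMap
  dstMap := r.dstMap.prodMap r'.dstMap
  srcShift := (r.srcShift, r'.srcShift)
  dstShift := (r.dstShift, r'.dstShift)
  srcMap_injective := r.srcMap_injective.prodMap r'.srcMap_injective
  dstMap_injective := r.dstMap_injective.prodMap r'.dstMap_injective

lemma rel_prod {r : AffineRule Q V} {r' : AffineRule Q' V'} {x y : (Q × Q') × (V × V')} :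
    (r.prod r').Rel x y ↔
      r.Rel (x.1.1, x.2.1) (y.1.1, y.2.1) ∧ r'.Rel (x.1.2, x.2.2) (y.1.2, y.2.2) := by
  simp only [Rel, prod, Prod.ext_iff, Prod.exists, MonoidHom.coe_prodMap, Prod.map_apply,
    Prod.fst_mul, Prod.snd_mul]
  grind

lemma Rel.left_unique {r : AffineRule Q V} {x x' y : Q × V} (h : r.Rel x y) (h' : r.Rel x' y) :
    x = x' := by
  obtain ⟨u, rfl, hu⟩ := h
  obtain ⟨u', rfl, hu'⟩ := h'
  have : r.dstMap u = r.dstMap u' := mul_right_cancel (congrArg Prod.snd (hu.symm.trans hu'))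
  rw [r.dstMap_injective this]

lemma Rel.right_unique {r : AffineRule Q V} {x y y' : Q × V} (h : r.Rel x y) (h' : r.Rel x y') :
    y = y' := by
  obtain ⟨u, hu, rfl⟩ := h
  obtain ⟨u', hu', rfl⟩ := h'
  have : r.srcMap u = r.srcMap u' := mul_right_cancel (congrArg Prod.snd (hu.symm.trans hu'))
  rw [r.srcMap_injective this]

end AffineRule

/-- A machine that computes with affine rules, together with an encoding `input` of the words in the
letters `(a, b)` (standing for `a` and `a⁻¹`) for which prepending a letter is an affine rule. -/
structure AffineMachine (α Q ι V : Type*) [Group V] where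
  rule : ι → AffineRule Q V
  init : Q
  halting : Set Q
  input : List (α × Bool) → V
  letter : α × Bool → AffineRule Q V
  letter_rel (l w) : (letter l).Rel (init, input w) (init, input (l :: w))
  exists_eq_cons_of_letter_rel {l x w} :
    (letter l).Rel x (init, input w) → ∃ w', w = l :: w'

namespace AffineMachine

variable {α Q ι V : Type*} [Group V] (M : AffineMachine α Q ι V)

/-- One step of a computation. -/
def Step (x y : Q × V) : Prop := ∃ i, (M.rule i).Rel x y

/-- The machine accepts a word if it can reach a halting state from the corresponding input. -/
def Accepts (w : List (α × Bool)) : Prop :=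
  ∃ y : Q × V, y.1 ∈ M.halting ∧ Relation.ReflTransGen M.Step (M.init, M.input w) y

/-- `M.Trace w x l` says that `x` is reached from the input `w` by the rules in `l`, the last one
first. -/
inductive Trace (w : List (α × Bool)) : Q × V → List ι → Prop
  | nil : Trace w (M.init, M.input w) []
  | cons {x y i l} : Trace w x l → (M.rule i).Rel x y → Trace w y (i :: l)

variable {M}

lemma Trace.reflTransGen {w : List (α × Bool)} {x : Q × V} {l : List ι} (h : M.Trace w x l) :
    Relation.ReflTransGen M.Step (M.init, M.input w) x := by
  induction h with
  | nil => exact .refl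
  | cons _ hr ih => exact ih.tail ⟨_, hr⟩

lemma exists_trace {w : List (α × Bool)} {x : Q × V}
    (h : Relation.ReflTransGen M.Step (M.init, M.input w) x) : ∃ l, M.Trace w x l := by
  induction h with
  | refl => exact ⟨[], .nil⟩
  | tail _ hr ih =>
    obtain ⟨l, hl⟩ := ih
    obtain ⟨i, hi⟩ := hr
    exact ⟨i :: l, hl.cons hi⟩

variable (M) [Fintype ι]

/-- The rules of the reversible machine: its configurations record the history of the computation
of `M`, a Boolean and an element of the free group. The rules are those of `M`, with the history
updated, a rule changing the Boolean in a halting state, and rules prepending a letter to the input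
as long as the history is empty. These cancel the letter from the element of the free group unless
the Boolean is `true`. -/
def reversibleRule : (ι × Bool) ⊕ M.halting ⊕ ((α × Bool) × Bool) →
    AffineRule (Q × Unit × Bool) (V × Multiplicative ℤ × FreeGroup α)
  | .inl (i, b) => (M.rule i).prod ((AffineRule.push (some i)).prod (.translate b b 1))
  | .inr (.inl q) => (AffineRule.translate q.1 q.1 1).prod
      ((AffineRule.translate () () 1).prod (.translate false true 1))
  | .inr (.inr (l, b)) => (M.letter l).prod ((AffineRule.peek (none : Option ι)).prod
      (.translate b b (bif b then 1 else (FreeGroup.mk [l])⁻¹)))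

variable {M}

/-- The invariant of the reversible machine: the configuration and the history are those of a
computation of `M` on an input `w` such that `N` contains `f`, or `f * w` if the Boolean is
`false`. -/
def Invariant (M : AffineMachine α Q ι V) (N : Subgroup (FreeGroup α))
    (c : (Q × Unit × Bool) × (V × Multiplicative ℤ × FreeGroup α)) : Prop :=
  ∃ w l, M.Trace w (c.1.1, c.2.1) l ∧ c.2.2.1 = stackCode l ∧
    (bif c.1.2.2 then c.2.2.2 else c.2.2.2 * FreeGroup.mk w) ∈ N

variable {N : Subgroup (FreeGroup α)}

lemma invariant_iff_of_rule {i : ι} {b : Bool}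
    {c d : (Q × Unit × Bool) × (V × Multiplicative ℤ × FreeGroup α)}
    (h : (M.reversibleRule (.inl (i, b))).Rel c d) : M.Invariant N c ↔ M.Invariant N d := by
  obtain ⟨⟨q, ⟨⟩, b₁⟩, v, t, f⟩ := c
  obtain ⟨⟨q', ⟨⟩, b₂⟩, v', t', f'⟩ := d
  simp only [reversibleRule, AffineRule.rel_prod, AffineRule.rel_push, AffineRule.rel_translate,
    mul_one] at h
  obtain ⟨hr, rfl, rfl, rfl, rfl⟩ := h
  constructor
  · rintro ⟨w, l, hl, rfl, hN⟩
    exact ⟨w, i :: l, hl.cons hr, (stackCode_cons i l).symm, hN⟩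
  · rintro ⟨w, l', hl', ht, hN⟩
    obtain ⟨rfl, hi⟩ := stackShift_mul_stackTop_eq_stackCode_iff.1 ht
    obtain ⟨l, rfl⟩ := List.head?_eq_some_iff.1 hi.symm
    obtain ⟨-, hl, hr'⟩ | ⟨hl, hr'⟩ := hl'
    exact ⟨w, l, hr.left_unique hr' ▸ hl, rfl, hN⟩

lemma invariant_iff_of_halting (hN : ∀ w, M.Accepts w → FreeGroup.mk w ∈ N) {q : M.halting}
    {c d : (Q × Unit × Bool) × (V × Multiplicative ℤ × FreeGroup α)}
    (h : (M.reversibleRule (.inr (.inl q))).Rel c d) : M.Invariant N c ↔ M.Invariant N d := by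
  obtain ⟨⟨q₁, ⟨⟩, b₁⟩, v, t, f⟩ := c
  obtain ⟨⟨q₂, ⟨⟩, b₂⟩, v', t', f'⟩ := d
  simp only [reversibleRule, AffineRule.rel_prod, AffineRule.rel_translate, mul_one, true_and] at h
  obtain ⟨⟨rfl, rfl, rfl⟩, rfl, rfl, rfl, rfl⟩ := h
  refine exists_congr fun w => exists_congr fun l => and_congr_right fun hl => and_congr_right
    fun _ => N.mul_mem_cancel_right (hN w ⟨_, q.2, hl.reflTransGen⟩)

lemma invariant_iff_of_letter {l : α × Bool} {b : Bool}
    {c d : (Q × Unit × Bool) × (V × Multiplicative ℤ × FreeGroup α)}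
    (h : (M.reversibleRule (.inr (.inr (l, b)))).Rel c d) : M.Invariant N c ↔ M.Invariant N d := by
  obtain ⟨⟨q, ⟨⟩, b₁⟩, v, t, f⟩ := c
  obtain ⟨⟨q', ⟨⟩, b₂⟩, v', t', f'⟩ := d
  simp only [reversibleRule, AffineRule.rel_prod, AffineRule.rel_peek, AffineRule.rel_translate]
    at h
  obtain ⟨hr, ⟨rfl, u, ht⟩, rfl, rfl, rfl⟩ := h
  have hword (w) : (bif b₂ then f * (bif b₂ then 1 else (FreeGroup.mk [l])⁻¹) else
      f * (bif b₂ then 1 else (FreeGroup.mk [l])⁻¹) * FreeGroup.mk (l :: w)) =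
      bif b₂ then f else f * FreeGroup.mk w := by
    rw [show FreeGroup.mk (l :: w) = FreeGroup.mk [l] * FreeGroup.mk w from rfl]
    generalize FreeGroup.mk [l] = g
    cases b₂ <;> simp [mul_assoc]
  have nil_of {k : List ι} (hk : t = stackCode k) : k = [] :=
    List.head?_eq_none_iff.1 (stackShift_mul_stackTop_eq_stackCode_iff.1 (ht.trans hk)).2.symm
  constructor
  · rintro ⟨w, k, hk, rfl, hN⟩
    obtain rfl := nil_of rfl
    cases hk
    cases hr.right_unique (M.letter_rel l w)
    exact ⟨l :: w, [], .nil, rfl, by simpa only [hword] using hN⟩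
  · rintro ⟨w, k, hk, rfl, hN⟩
    obtain rfl := nil_of rfl
    cases hk
    obtain ⟨w, rfl⟩ := M.exists_eq_cons_of_letter_rel hr
    cases hr.left_unique (M.letter_rel l w)
    exact ⟨w, [], .nil, rfl, by simpa only [hword] using hN⟩

open Relation

lemma invariant_iff_of_connected (hN : ∀ w, M.Accepts w → FreeGroup.mk w ∈ N)
    {c d : (Q × Unit × Bool) × (V × Multiplicative ℤ × FreeGroup α)}
    (h : AffineRule.Connected M.reversibleRule c d) : M.Invariant N c ↔ M.Invariant N d := by
  induction h with
  | rel c d h =>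
    obtain ⟨⟨i, b⟩ | q | ⟨l, b⟩, h⟩ := h
    exacts [invariant_iff_of_rule h, invariant_iff_of_halting hN h, invariant_iff_of_letter h]
  | refl => rfl
  | symm _ _ _ ih => exact ih.symm
  | trans _ _ _ _ _ ih ih' => exact ih.trans ih'

variable (M) in
/-- The configuration of the reversible machine without history for an input `w`. -/
def start (b : Bool) (w : List (α × Bool)) (f : FreeGroup α) :
    (Q × Unit × Bool) × (V × Multiplicative ℤ × FreeGroup α) :=
  ((M.init, (), b), (M.input w, 1, f))

lemma connected_of_trace {w : List (α × Bool)} {x : Q × V} {l : List ι} (h : M.Trace w x l)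
    (b : Bool) (f : FreeGroup α) : AffineRule.Connected M.reversibleRule (M.start b w f)
      ((x.1, (), b), (x.2, stackCode l, f)) := by
  induction h with
  | nil => exact .refl _
  | @cons _ _ i _ _ hr ih =>
    refine ih.trans _ _ _ (.rel _ _ ⟨.inl (i, b), ?_⟩)
    simpa [reversibleRule, AffineRule.rel_prod, AffineRule.rel_push, AffineRule.rel_translate,
      stackCode_cons] using hr

lemma connected_of_accepts {w : List (α × Bool)} (hw : M.Accepts w) (f : FreeGroup α) :
    AffineRule.Connected M.reversibleRule (M.start false w f) (M.start true w f) := by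
  obtain ⟨y, hy, hr⟩ := hw
  obtain ⟨l, hl⟩ := exists_trace hr
  refine ((connected_of_trace hl false f).trans _ _ _ (.rel _ _ ⟨.inr (.inl ⟨y.1, hy⟩), ?_⟩)).trans
    _ _ _ (connected_of_trace hl true f).symm
  simp [reversibleRule, AffineRule.rel_prod, AffineRule.rel_translate]

lemma connected_of_input (b : Bool) (w : List (α × Bool)) (f : FreeGroup α) :
    AffineRule.Connected M.reversibleRule
      (M.start b [] (bif b then f else f * FreeGroup.mk w)) (M.start b w f) := by
  induction w generalizing f with
  | nil => cases b <;> simpa [← FreeGroup.one_eq_mk] using! EqvGen.refl _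
  | cons l w ih =>
    have hl : AffineRule.Connected M.reversibleRule
        (M.start b w (bif b then f else f * FreeGroup.mk [l])) (M.start b (l :: w) f) := by
      refine .rel _ _ ⟨.inr (.inr (l, b)), ?_⟩
      have h1 : ∃ u, stackShift ι u * stackTop (none : Option ι) = 1 :=
        ⟨1, by simp [stackTop, topDigit]⟩
      generalize hg : FreeGroup.mk [l] = g
      cases b <;> simp only [reversibleRule, AffineRule.rel_prod, AffineRule.rel_peek,
        AffineRule.rel_translate, start, hg] <;> simp [M.letter_rel, h1]
    rw [show FreeGroup.mk (l :: w) = FreeGroup.mk [l] * FreeGroup.mk w from rfl]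
    have := ih (bif b then f else f * FreeGroup.mk [l])
    generalize FreeGroup.mk [l] = g at *
    cases b
    · simpa only [cond_false, mul_assoc] using! this.trans _ _ _ hl
    · exact this.trans _ _ _ hl

omit [Fintype ι] in
theorem embedsInFinitelyPresented {α : Type} (M : AffineMachine α Q ι V) [Finite α] [Finite Q]
    [Finite ι] [Group.IsFinitelyPresented V] {N : Subgroup (FreeGroup α)} [N.Normal]
    (hN : ∀ w, FreeGroup.mk w ∈ N ↔ M.Accepts w) :
    EmbedsInFinitelyPresented (FreeGroup α ⧸ N) := by
  classical
  cases nonempty_fintype ι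
  refine embedsInFinitelyPresented_quotient (AffineRule.embedsInFinitelyPresented_ropeGroup
    (R := M.reversibleRule) (β := (MonoidHom.inr V _).comp (MonoidHom.inr (Multiplicative ℤ) _))
    (fun f g h => congrArg (·.2.2) h) (M.init, (), true) (M.input [], 1, 1) fun f => ?_)
  have h₁ : M.Accepts [] := (hN []).1 N.one_mem
  simp only [MonoidHom.comp_apply, MonoidHom.inr_apply, Prod.mk_mul_mk, one_mul, mul_one]
  change _ ↔ AffineRule.Connected _ (M.start true [] 1) (M.start true [] f)
  constructor
  · intro hf
    have h₂ : M.Accepts f⁻¹.toWord :=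
      (hN _).1 (by simpa only [FreeGroup.mk_toWord] using N.inv_mem hf)
    have h₃ := connected_of_input (M := M) false f⁻¹.toWord f
    rw [FreeGroup.mk_toWord, cond_false, mul_inv_cancel] at h₃
    exact ((((connected_of_accepts h₁ 1).symm).trans _ _ _ h₃).trans _ _ _
      (connected_of_accepts h₂ f)).trans _ _ _ (connected_of_input true f⁻¹.toWord f).symm
  · intro h
    have := (invariant_iff_of_connected (fun w => (hN w).2) h).1 ⟨[], [], .nil, rfl, N.one_mem⟩
    obtain ⟨_, _, _, _, hf⟩ := this
    exact hf

end AffineMachine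

/-! ### Stack machines as affine machines -/

namespace AffineRule

section Combinators

variable {K Q V : Type*} [DecidableEq K] [Group V]

/-- The rule relating the same configurations as `r` in the opposite direction. -/
def symm (r : AffineRule Q V) : AffineRule Q V where
  src := r.dst
  dst := r.src
  srcMap := r.dstMap
  dstMap := r.srcMap
  srcShift := r.dstShift
  dstShift := r.srcShift
  srcMap_injective := r.dstMap_injective
  dstMap_injective := r.srcMap_injective

lemma rel_symm {r : AffineRule Q V} {x y : Q × V} : r.symm.Rel x y ↔ r.Rel y x :=
  exists_congr fun _ => and_comm

/-- The rule applying `r` to the coordinate `k` and changing the state from `q` to `q'`. -/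
def onCoord (q q' : Q) (k : K) (r : AffineRule Unit V) : AffineRule Q (K → V) where
  src := q
  dst := q'
  srcMap := .piMap (Function.update (fun _ => .id V) k r.srcMap)
  dstMap := .piMap (Function.update (fun _ => .id V) k r.dstMap)
  srcShift := Pi.mulSingle k r.srcShift
  dstShift := Pi.mulSingle k r.dstShift
  srcMap_injective := .piMap fun k' => by
    obtain rfl | h := eq_or_ne k' k
    · simpa using r.srcMap_injective
    · simpa [h] using Function.injective_id
  dstMap_injective := .piMap fun k' => by
    obtain rfl | h := eq_or_ne k' k
    · simpa using r.dstMap_injective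
    · simpa [h] using Function.injective_id

lemma piMap_update_mul_mulSingle (k : K) (f : V →* V) (u : K → V) (g : V) :
    MonoidHom.piMap (Function.update (fun _ => .id V) k f) u * Pi.mulSingle k g =
      Function.update u k (f (u k) * g) := by
  funext k'
  obtain rfl | h := eq_or_ne k' k <;> simp [*]

lemma rel_onCoord {q q' : Q} {k : K} {r : AffineRule Unit V} {x y : Q × (K → V)} :
    (onCoord q q' k r).Rel x y ↔ x.1 = q ∧ y.1 = q' ∧ r.Rel ((), x.2 k) ((), y.2 k) ∧
      ∀ k' ≠ k, x.2 k' = y.2 k' := by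
  simp only [Rel, onCoord, piMap_update_mul_mulSingle, Prod.ext_iff]
  constructor
  · rintro ⟨u, ⟨rfl, hx⟩, rfl, hy⟩
    refine ⟨rfl, rfl, ⟨u k, by simp [hx], by simp [hy]⟩, fun k' hk => by simp [hx, hy, hk]⟩
  · rintro ⟨rfl, rfl, ⟨u, ⟨-, hx⟩, -, hy⟩, hk⟩
    refine ⟨Function.update x.2 k u, ⟨rfl, ?_⟩, rfl, ?_⟩
    · rw [Function.update_idem, Function.update_self, ← hx, Function.update_eq_self]
    · rw [Function.update_idem, Function.update_self, ← hy]
      exact (Function.update_eq_iff.2 ⟨rfl, hk⟩).symm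

omit [DecidableEq K]

/-- The rule `r` on the configurations with state in `C`. -/
def restrict (r : AffineRule Q V) {C : Set Q} (hsrc : r.src ∈ C) (hdst : r.dst ∈ C) :
    AffineRule C V where
  __ := r
  src := ⟨r.src, hsrc⟩
  dst := ⟨r.dst, hdst⟩

lemma rel_restrict {r : AffineRule Q V} {C : Set Q} {hsrc : r.src ∈ C} {hdst : r.dst ∈ C}
    {x y : C × V} :
    (r.restrict hsrc hdst).Rel x y ↔ r.Rel (x.1, x.2) (y.1, y.2) := by
  simp only [Rel, restrict, Prod.ext_iff, Subtype.ext_iff]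

end Combinators

section Stack

variable {ι : Type*} [Fintype ι]

/-- The rule pushing all letters of `l` on a stack, the last one first. -/
def pushList : List ι → AffineRule Unit (Multiplicative ℤ)
  | [] => translate () () 1
  | i :: l =>
    { src := ()
      dst := ()
      srcMap := .id _
      dstMap := (stackShift ι).comp (pushList l).dstMap
      srcShift := 1
      dstShift := stackShift ι (pushList l).dstShift * stackTop (some i)
      srcMap_injective := Function.injective_id
      dstMap_injective := stackShift_injective.comp (pushList l).dstMap_injective }

lemma rel_pushList_cons {i : ι} {l : List ι} {x y : Unit × Multiplicative ℤ} :
    (pushList (i :: l)).Rel x y ↔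
      ∃ z, (pushList l).Rel x z ∧ y.2 = stackShift ι z.2 * stackTop (some i) := by
  cases l <;> simp [Rel, pushList, translate, Prod.ext_iff, mul_assoc, eq_comm]

lemma rel_pushList {l S : List ι} {x : Unit × Multiplicative ℤ} :
    (pushList l).Rel x ((), stackCode S) ↔ ∃ S', S = l ++ S' ∧ x.2 = stackCode S' := by
  induction l generalizing S with
  | nil => simp [pushList, rel_translate, eq_comm]
  | cons i l ih =>
    rw [rel_pushList_cons]
    constructor
    · rintro ⟨⟨⟨⟩, z⟩, hz, h⟩
      obtain ⟨rfl, hi⟩ := stackShift_mul_stackTop_eq_stackCode_iff.1 h.symm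
      obtain ⟨S', hS, hx⟩ := ih.1 hz
      obtain ⟨S, rfl⟩ := List.head?_eq_some_iff.1 hi.symm
      exact ⟨S', congrArg (i :: ·) hS, hx⟩
    · rintro ⟨S', rfl, hx⟩
      exact ⟨((), stackCode (l ++ S')), ih.2 ⟨S', rfl, hx⟩, stackCode_cons i _⟩

end Stack

end AffineRule

section StackMachine

open Turing Function StateTransition

variable {K : Type*} [DecidableEq K] {Γ : K → Type*} {Λ σ : Type*} (M : Λ → TM2.Stmt Γ Λ σ)

/-- The execution of the first command of a statement of a stack machine. Its configurations are
the statements with the values of the local variable and the tape. -/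
def commandStep : (TM2.Stmt Γ Λ σ × σ) × (∀ k, List (Γ k)) →
    (TM2.Stmt Γ Λ σ × σ) × (∀ k, List (Γ k))
  | ((.push k f q, v), S) => ((q, v), update S k (f v :: S k))
  | ((.peek k f q, v), S) => ((q, f v (S k).head?), S)
  | ((.pop k f q, v), S) => ((q, f v (S k).head?), update S k (S k).tail)
  | ((.load f q, v), S) => ((q, f v), S)
  | ((.branch f q₁ q₂, v), S) => ((cond (f v) q₁ q₂, v), S)
  | ((.goto l, v), S) => ((M (l v), v), S)
  | ((.halt, v), S) => ((.halt, v), S)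

lemma dom_eval_step_some {l : Λ} {v : σ} {S : ∀ k, List (Γ k)} :
    (eval (TM2.step M) ⟨some l, v, S⟩).Dom ↔ (eval (TM2.step M) (TM2.stepAux (M l) v S)).Dom := by
  rw [reaches_eval (f := TM2.step M) (.single (show TM2.step M ⟨some l, v, S⟩ = _ from rfl))]

lemma dom_eval_step_none {v : σ} {S : ∀ k, List (Γ k)} :
    (eval (TM2.step M) ⟨none, v, S⟩).Dom :=
  Part.dom_iff_mem.2 ⟨_, mem_eval.2 ⟨.refl, rfl⟩⟩

lemma dom_eval_stepAux_commandStep (c : (TM2.Stmt Γ Λ σ × σ) × (∀ k, List (Γ k))) :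
    (eval (TM2.step M)
      (TM2.stepAux (commandStep M c).1.1 (commandStep M c).1.2 (commandStep M c).2)).Dom ↔
      (eval (TM2.step M) (TM2.stepAux c.1.1 c.1.2 c.2)).Dom := by
  obtain ⟨⟨_ | _ | _ | _ | ⟨f, _, _⟩ | _ | _, v⟩, S⟩ := c
  case branch => cases h : f v <;> simp [commandStep, h]
  case goto => exact (dom_eval_step_some M).symm
  all_goals rfl

lemma exists_iterate_commandStep_eq (q : TM2.Stmt Γ Λ σ) (v : σ) (S : ∀ k, List (Γ k)) :
    ∃ n, (commandStep M)^[n] ((q, v), S) = ((((TM2.stepAux q v S).l.elim .halt M),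
      (TM2.stepAux q v S).var), (TM2.stepAux q v S).stk) := by
  induction q generalizing v S with
  | halt => exact ⟨0, rfl⟩
  | goto l => exact ⟨1, rfl⟩
  | branch f q₁ q₂ ih₁ ih₂ =>
    cases h : f v
    · obtain ⟨n, hn⟩ := ih₂ v S
      exact ⟨n + 1, by simpa [commandStep, h] using hn⟩
    · obtain ⟨n, hn⟩ := ih₁ v S
      exact ⟨n + 1, by simpa [commandStep, h] using hn⟩
  | load _ _ ih | push _ _ _ ih | peek _ _ _ ih | pop _ _ _ ih =>
    obtain ⟨n, hn⟩ := ih _ _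
    exact ⟨n + 1, hn⟩

lemma exists_iterate_commandStep_eq_halt {b c : TM2.Cfg Γ Λ σ} (hb : b ∈ eval (TM2.step M) c) :
    ∀ q v S, TM2.stepAux q v S = c → ∃ n, ((commandStep M)^[n] ((q, v), S)).1.1 = .halt := by
  refine evalInduction (C := fun c => ∀ q v S, TM2.stepAux q v S = c →
    ∃ n, ((commandStep M)^[n] ((q, v), S)).1.1 = .halt) hb fun c _ ih q v S hc => ?_
  obtain ⟨n, hn⟩ := exists_iterate_commandStep_eq M q v S
  obtain ⟨_ | l, v', S'⟩ := c
  · exact ⟨n, by rw [hn, hc]; rfl⟩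
  · obtain ⟨n', hn'⟩ := ih _ rfl (M l) v' S' rfl
    exact ⟨n' + n, by rw [iterate_add_apply, hn, hc]; exact hn'⟩

lemma dom_eval_iff_exists_iterate_commandStep (c : (TM2.Stmt Γ Λ σ × σ) × (∀ k, List (Γ k))) :
    (eval (TM2.step M) (TM2.stepAux c.1.1 c.1.2 c.2)).Dom ↔
      ∃ n, ((commandStep M)^[n] c).1.1 = .halt := by
  constructor
  · intro h
    obtain ⟨b, hb⟩ := Part.dom_iff_mem.1 h
    exact exists_iterate_commandStep_eq_halt M hb _ _ _ rfl
  · rintro ⟨n, hn⟩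
    induction n generalizing c with
    | zero =>
      obtain ⟨⟨_, v⟩, S⟩ := c
      obtain rfl := hn
      exact dom_eval_step_none M
    | succ n ih => exact (dom_eval_stepAux_commandStep M c).1 (ih _ hn)

variable [∀ k, Fintype (Γ k)]

/-- The tape of a stack machine as a tuple of group elements. -/
def stackCodes (S : ∀ k, List (Γ k)) (k : K) : Multiplicative ℤ := stackCode (S k)

lemma eq_stackCodes_update_iff {S : ∀ k, List (Γ k)} {k : K} {l : List (Γ k)}
    {y : K → Multiplicative ℤ} :
    y = stackCodes (update S k l) ↔ y k = stackCode l ∧ ∀ k' ≠ k, stackCodes S k' = y k' := by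
  have : stackCodes (update S k l) = update (stackCodes S) k (stackCode l) := by
    funext k'
    obtain rfl | h := eq_or_ne k' k <;> simp [stackCodes, *]
  simp only [this, eq_update_iff, eq_comm]

/-- The affine rule for the first command of a statement, applicable if the topmost letters of the
tape are those given by `o`. -/
def commandRule : TM2.Stmt Γ Λ σ × σ → (∀ k, Option (Γ k)) →
    AffineRule (TM2.Stmt Γ Λ σ × σ) (K → Multiplicative ℤ)
  | (.push k f q, v), _ => .onCoord (.push k f q, v) (q, v) k (.push (some (f v)))
  | (.peek k f q, v), o => .onCoord (.peek k f q, v) (q, f v (o k)) k (.peek (o k))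
  | (.pop k f q, v), o => .onCoord (.pop k f q, v) (q, f v (o k)) k (.symm (.push (o k)))
  | (.load f q, v), _ => .translate (.load f q, v) (q, f v) 1
  | (.branch f q₁ q₂, v), _ => .translate (.branch f q₁ q₂, v) (cond (f v) q₁ q₂, v) 1
  | (.goto l, v), _ => .translate (.goto l, v) (M (l v), v) 1
  | (.halt, v), _ => .translate (.halt, v) (.halt, v) 1

lemma commandRule_src (p : TM2.Stmt Γ Λ σ × σ) (o : ∀ k, Option (Γ k)) :
    (commandRule M p o).src = p := by
  obtain ⟨_ | _ | _ | _ | _ | _ | _, _⟩ := p <;> rfl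

lemma exists_rel_commandRule_iff {p : TM2.Stmt Γ Λ σ × σ} {S : ∀ k, List (Γ k)}
    {y : (TM2.Stmt Γ Λ σ × σ) × (K → Multiplicative ℤ)} :
    (∃ o, (commandRule M p o).Rel (p, stackCodes S) y) ↔
      y = ((commandStep M (p, S)).1, stackCodes (commandStep M (p, S)).2) := by
  obtain ⟨q, v⟩ := p
  obtain ⟨⟨q', v'⟩, y⟩ := y
  cases q with
  | push k f q =>
    simp only [commandRule, AffineRule.rel_onCoord, AffineRule.rel_push, commandStep, Prod.ext_iff,
      eq_stackCodes_update_iff, stackCode_cons, stackCodes, exists_const]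
    tauto
  | peek k f q =>
    have h_eq : y = stackCodes S ↔ stackCode (S k) = y k ∧ ∀ k' ≠ k, stackCode (S k') = y k' := by
      simpa [eq_comm, stackCodes] using! eq_stackCodes_update_iff (S := S) (l := S k)
    simp only [commandRule, AffineRule.rel_onCoord, AffineRule.rel_peek, commandStep, stackCodes,
      stackShift_mul_stackTop_eq_stackCode_iff, exists_eq_left, Prod.ext_iff, h_eq, true_and]
    exact ⟨by grind, fun h => ⟨fun k => (S k).head?, by grind⟩⟩
  | pop k f q =>
    simp only [commandRule, AffineRule.rel_onCoord, AffineRule.rel_symm, AffineRule.rel_push,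
      commandStep, Prod.ext_iff, eq_stackCodes_update_iff, stackCodes, true_and,
      eq_comm (a := stackCode (S k)), stackShift_mul_stackTop_eq_stackCode_iff]
    exact ⟨by grind, fun h => ⟨fun k => (S k).head?, by grind⟩⟩
  | load | branch | goto | halt =>
    simp [commandRule, commandStep, AffineRule.rel_translate, and_assoc, Prod.ext_iff]

variable {M} [Inhabited Λ] {A : Finset Λ}

/-- The statements to which a machine has access that is supported on the labels in `A`. -/
def accessible (M : Λ → TM2.Stmt Γ Λ σ) (A : Finset Λ) : Set (TM2.Stmt Γ Λ σ × σ) :=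
  {p | some p.1 ∈ TM2.stmts M A}

omit [DecidableEq K] [∀ k, Fintype (Γ k)] [Inhabited Λ] in
lemma mem_accessible_of_mem {l : Λ} (hl : l ∈ A) (v : σ) : (M l, v) ∈ accessible M A := by
  simpa [accessible, TM2.stmts] using ⟨l, hl, TM2.stmts₁_self⟩

omit [DecidableEq K] [∀ k, Fintype (Γ k)] [Inhabited Λ] in
lemma finite_accessible [Finite σ] : (accessible M A).Finite := by
  have h : accessible M A =
      Prod.map some id ⁻¹' ((TM2.stmts M A : Set (Option (TM2.Stmt Γ Λ σ))) ×ˢ Set.univ) := by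
    ext; simp [accessible]
  rw [h]
  exact ((Finset.finite_toSet _).prod Set.finite_univ).preimage
    ((Option.some_injective _).prodMap injective_id).injOn

lemma commandRule_dst_mem (hM : TM2.Supports M A) {p : TM2.Stmt Γ Λ σ × σ}
    (hp : p ∈ accessible M A) (o : ∀ k, Option (Γ k)) :
    (commandRule M p o).dst ∈ accessible M A := by
  obtain ⟨q, v⟩ := p
  cases q with
  | goto l => exact mem_accessible_of_mem (TM2.stmts_supportsStmt hM hp v) v
  | halt => exact hp
  | branch f q₁ q₂ =>
    refine TM2.stmts_trans ?_ hp
    cases h : f v <;> simp [commandRule, AffineRule.translate, h, TM2.stmts₁, TM2.stmts₁_self]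
  | _ =>
    refine TM2.stmts_trans ?_ hp
    simp [commandRule, AffineRule.translate, AffineRule.onCoord, TM2.stmts₁, TM2.stmts₁_self]

/-- The rules for the accessible statements. -/
def accessibleRule (hM : TM2.Supports M A) (i : accessible (σ := σ) M A × (∀ k, Option (Γ k))) :
    AffineRule (accessible (σ := σ) M A) (K → Multiplicative ℤ) :=
  (commandRule M i.1 i.2).restrict (by rw [commandRule_src]; exact i.1.2)
    (commandRule_dst_mem hM i.1.2 i.2)

lemma exists_rel_accessibleRule_iff {hM : TM2.Supports M A}
    {x y : accessible (σ := σ) M A × (K → Multiplicative ℤ)} {S : ∀ k, List (Γ k)}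
    (hx : x.2 = stackCodes S) :
    (∃ i, (accessibleRule hM i).Rel x y) ↔
      (y.1.1, y.2) = ((commandStep M (x.1, S)).1, stackCodes (commandStep M (x.1, S)).2) := by
  simp only [accessibleRule, AffineRule.rel_restrict, hx, ← exists_rel_commandRule_iff]
  constructor
  · rintro ⟨⟨p, o⟩, h⟩
    obtain ⟨u, hu, -⟩ := id h
    have : x.1 = p := Subtype.ext ((congrArg Prod.fst hu).trans (commandRule_src M p o))
    exact ⟨o, this ▸ h⟩
  · rintro ⟨o, h⟩
    exact ⟨(x.1, o), h⟩

lemma exists_reaches_halt_iff {hM : TM2.Supports M A}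
    {x : accessible (σ := σ) M A × (K → Multiplicative ℤ)} {S : ∀ k, List (Γ k)}
    (hx : x.2 = stackCodes S) :
    (∃ y, y.1.1.1 = .halt ∧
      Relation.ReflTransGen (fun x y => ∃ i, (accessibleRule hM i).Rel x y) x y) ↔
      ∃ n, ((commandStep M)^[n] (x.1, S)).1.1 = .halt := by
  constructor
  · rintro ⟨y, hy, h⟩
    suffices ∃ n S', y.2 = stackCodes S' ∧ (commandStep M)^[n] (x.1, S) = (y.1.1, S') by
      obtain ⟨n, S', -, hn⟩ := this
      exact ⟨n, by rw [hn]; exact hy⟩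
    clear hy
    induction h with
    | refl => exact ⟨0, S, hx, rfl⟩
    | tail _ h ih =>
      obtain ⟨n, S', hS', hn⟩ := ih
      obtain ⟨h₁, h₂⟩ := Prod.ext_iff.1 ((exists_rel_accessibleRule_iff hS').1 h)
      exact ⟨n + 1, _, h₂, by rw [iterate_succ_apply', hn]; exact Prod.ext h₁.symm rfl⟩
  · rintro ⟨n, hn⟩
    induction n generalizing x S with
    | zero => exact ⟨x, hn, .refl⟩
    | succ n ih =>
      obtain ⟨o, h⟩ := (exists_rel_commandRule_iff M (p := x.1) (S := S)).2 rfl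
      have h_mem : (commandStep M (x.1, S)).1 ∈ accessible M A := by
        obtain ⟨u, -, hu⟩ := id h
        exact (congrArg Prod.fst hu) ▸ commandRule_dst_mem hM x.1.2 o
      obtain ⟨y, hy, hr⟩ := ih (x := (⟨_, h_mem⟩, _)) rfl hn
      exact ⟨y, hy, hr.head ((exists_rel_accessibleRule_iff hx).2 rfl)⟩

/-- The affine machine simulating a stack machine whose input is written letter by letter on the
stack `k₀`. -/
def stackMachine {α : Type*} (hM : TM2.Supports M A) (v₀ : σ) (k₀ : K)
    (digits : α × Bool → List (Γ k₀)) (tape : List (α × Bool) → ∀ k, List (Γ k))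
    (tape_cons : ∀ l w, tape (l :: w) = update (tape w) k₀ (digits l ++ tape w k₀))
    (exists_eq_cons : ∀ {l w S}, tape w k₀ = digits l ++ S → ∃ w', w = l :: w') :
    AffineMachine α (accessible (σ := σ) M A)
      (accessible (σ := σ) M A × (∀ k, Option (Γ k))) (K → Multiplicative ℤ) where
  rule := accessibleRule hM
  init := ⟨(M default, v₀), mem_accessible_of_mem hM.1 v₀⟩
  halting := {p | p.1.1 = .halt}
  input w := stackCodes (tape w)
  letter l := .onCoord _ _ k₀ (.pushList (digits l))
  letter_rel l w := by
    rw [AffineRule.rel_onCoord]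
    exact ⟨rfl, rfl, AffineRule.rel_pushList.2 ⟨tape w k₀, by simp [tape_cons], rfl⟩,
      fun k hk => by simp [stackCodes, tape_cons, hk]⟩
  exists_eq_cons_of_letter_rel h := by
    obtain ⟨-, -, h, -⟩ := AffineRule.rel_onCoord.1 h
    obtain ⟨S, hS, -⟩ := AffineRule.rel_pushList.1 h
    exact exists_eq_cons hS

omit [∀ k, Fintype (Γ k)] in
theorem embedsInFinitelyPresented_of_dom_eval {α : Type} [Finite α] [Finite K] [Finite σ]
    [∀ k, Finite (Γ k)]
    (hM : TM2.Supports M A) (v₀ : σ) (k₀ : K)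
    (digits : α × Bool → List (Γ k₀)) (tape : List (α × Bool) → ∀ k, List (Γ k))
    (tape_cons : ∀ l w, tape (l :: w) = update (tape w) k₀ (digits l ++ tape w k₀))
    (exists_eq_cons : ∀ {l w S}, tape w k₀ = digits l ++ S → ∃ w', w = l :: w')
    {N : Subgroup (FreeGroup α)} [N.Normal]
    (hN : ∀ w, FreeGroup.mk w ∈ N ↔ (eval (TM2.step M) ⟨some default, v₀, tape w⟩).Dom) :
    EmbedsInFinitelyPresented (FreeGroup α ⧸ N) := by
  have : Finite (accessible (σ := σ) M A) := finite_accessible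
  let _ := fun k => Fintype.ofFinite (Γ k)
  refine (stackMachine hM v₀ k₀ digits tape tape_cons exists_eq_cons).embedsInFinitelyPresented
    fun w => ?_
  rw [hN, dom_eval_step_some, dom_eval_iff_exists_iterate_commandStep M ((M default, v₀), tape w)]
  exact (exists_reaches_halt_iff (hM := hM)
    (x := (⟨(M default, v₀), mem_accessible_of_mem hM.1 v₀⟩, stackCodes (tape w))) rfl).symm

end StackMachine

/-! ### Recursively presented groups -/

section RecursivePresentation

lemma exists_partrec_of_primrecRel {α β : Type*} [Primcodable α] [Primcodable β]
    {p : α → β → Prop} (hp : PrimrecRel p) :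
    ∃ F : α →. β, Partrec F ∧ (∀ a, (F a).Dom ↔ ∃ b, p a b) ∧ ∀ a, ∀ b ∈ F a, p a b := by
  classical
  let f : α → ℕ → Option β := fun a k =>
    (Encodable.decode (α := β) k).bind fun b => if p a b then some b else none
  have mem_f {a k b} : b ∈ f a k ↔ Encodable.decode k = some b ∧ p a b := by
    simp only [f, Option.mem_def, Option.bind_eq_some_iff, Option.ite_none_right_eq_some]
    grind
  have hf : Primrec₂ f :=
    Primrec.option_bind (Primrec.decode.comp .snd) <|
      Primrec.ite (hp.comp (Primrec.fst.comp .fst) .snd) (Primrec.option_some.comp .snd)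
        (.const none)
  refine ⟨fun a => Nat.rfindOpt (f a), Partrec.rfindOpt hf.to_comp, fun a => ?_, fun a b hb => ?_⟩
  · rw [Nat.rfindOpt_dom]
    exact ⟨fun ⟨_, b, hb⟩ => ⟨b, (mem_f.1 hb).2⟩,
      fun ⟨b, hb⟩ => ⟨Encodable.encode b, b, mem_f.2 ⟨Encodable.encodek b, hb⟩⟩⟩
  · obtain ⟨k, hk⟩ := Nat.rfindOpt_spec hb
    exact (mem_f.1 hk).2

lemma rePred_exists {α β : Type*} [Primcodable α] [Primcodable β] {p : α → β → Prop}
    (hp : PrimrecRel p) : REPred fun a => ∃ b, p a b := by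
  obtain ⟨F, hF, hdom, -⟩ := exists_partrec_of_primrecRel hp
  exact hF.dom_re.of_eq hdom

open Function Turing PartrecToTM2

lemma trNat_two_mul {n : ℕ} (hn : n ≠ 0) : trNat (2 * n) = Γ'.bit0 :: trNat n := by
  have h : ((2 * n : ℕ) : Num) = (n : Num).bit0 := by
    rw [← Num.of_to_nat' (Num.bit0 _)]
    simp [two_mul, Num.bit0_of_bit0]
  unfold trNat
  rw [h]
  obtain h₀ | ⟨p, h₀⟩ : (n : Num) = 0 ∨ ∃ p, (n : Num) = .pos p := by
    cases (n : Num) with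
    | zero => exact .inl rfl
    | pos p => exact .inr ⟨p, rfl⟩
  · exact absurd (by simpa using congrArg (fun k : Num => (k : ℕ)) h₀) hn
  · rw [h₀]; rfl

lemma trNat_two_mul_add_one (n : ℕ) : trNat (2 * n + 1) = Γ'.bit1 :: trNat n := by
  have h : ((2 * n + 1 : ℕ) : Num) = (n : Num).bit1 := by
    rw [← Num.of_to_nat' (Num.bit1 _)]
    simp [two_mul, Num.bit1_of_bit1]
  unfold trNat
  rw [h]
  cases (n : Num) <;> rfl

lemma trNat_two_pow_mul (k : ℕ) {n : ℕ} (hn : n ≠ 0) :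
    trNat (2 ^ k * n) = List.replicate k Γ'.bit0 ++ trNat n := by
  induction k with
  | zero => simp
  | succ k ih =>
    rw [pow_succ', mul_assoc, trNat_two_mul (by positivity), ih]
    rfl

variable {β : Type*}

/-- A coding of words by numbers for which prepending a letter amounts to prepending a block
of binary digits, the least significant digit being the first. -/
def wordNumber [Encodable β] (w : List β) : ℕ :=
  w.foldr (fun l n => 2 ^ Encodable.encode l * (2 * n + 1)) 0

/-- The binary digits contributed by a letter to `wordNumber`. -/
def letterDigits [Encodable β] (l : β) : List Γ' :=
  List.replicate (Encodable.encode l) Γ'.bit0 ++ [Γ'.bit1]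

lemma trNat_wordNumber_cons [Encodable β] (l : β) (w : List β) :
    trNat (wordNumber (l :: w)) = letterDigits l ++ trNat (wordNumber w) := by
  simp [wordNumber, letterDigits, trNat_two_pow_mul, trNat_two_mul_add_one]

lemma replicate_append_cons_inj {α : Type*} {a b : α} (hab : a ≠ b) {m n : ℕ} {S T : List α} :
    List.replicate m a ++ b :: S = List.replicate n a ++ b :: T ↔ m = n ∧ S = T := by
  induction m generalizing n with
  | zero => cases n <;> simp [List.replicate_succ, hab.symm]
  | succ m ih => cases n <;> simp [List.replicate_succ, hab, ih]

lemma exists_eq_cons_of_trList_wordNumber [Encodable β] {l : β} {w : List β} {S : List Γ'}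
    (h : trList [wordNumber w] = letterDigits l ++ S) :
    ∃ w', w = l :: w' ∧ S = trList [wordNumber w'] := by
  cases w with
  | nil => cases h₀ : Encodable.encode l <;> simp [wordNumber, letterDigits, h₀, trNat_zero,
      List.replicate_succ] at h
  | cons l' w =>
    simp only [trList, trNat_wordNumber_cons, letterDigits, List.append_assoc,
      List.cons_append, List.nil_append] at h
    obtain ⟨hl, rfl⟩ := (replicate_append_cons_inj (by decide)).1 h
    exact ⟨w, by rw [Encodable.encode_injective hl], rfl⟩

lemma wordNumber_injective [Encodable β] : Injective (wordNumber (β := β)) := by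
  suffices h : ∀ w w' : List β, trList [wordNumber w] = trList [wordNumber w'] → w = w' from
    fun w w' hw => h w w' (by rw [hw])
  intro w
  induction w with
  | nil =>
    rintro (_ | ⟨l, w'⟩) h
    · rfl
    · obtain ⟨_, h', -⟩ := exists_eq_cons_of_trList_wordNumber
        (h.trans (by simp [trNat_wordNumber_cons]) : _ = letterDigits l ++ trList [wordNumber w'])
      cases h'
  | cons l w ih =>
    intro w' h
    obtain ⟨w'', rfl, hw⟩ := exists_eq_cons_of_trList_wordNumber
      (h.symm.trans (by simp [trNat_wordNumber_cons]) : _ = letterDigits l ++ trList [wordNumber w])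
    rw [ih w'' hw]

lemma primrec_wordNumber [Primcodable β] : Primrec (wordNumber (β := β)) := by
  have h_pow : Primrec₂ ((· ^ ·) : ℕ → ℕ → ℕ) := Primrec₂.unpaired'.1 Nat.Primrec.pow
  have h_step : Primrec₂ fun (_ : List β) (p : β × ℕ) =>
      2 ^ Encodable.encode p.1 * (2 * p.2 + 1) :=
    Primrec.nat_mul.comp
      (h_pow.comp (.const 2) (Primrec.encode.comp (Primrec.fst.comp Primrec.snd)))
      (Primrec.succ.comp (Primrec.nat_mul.comp (.const 2) (Primrec.snd.comp Primrec.snd)))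
  exact Primrec.list_foldr .id (.const 0) h_step

lemma exists_code_dom_iff [Primcodable β] {p : List β → Prop} (hp : REPred p) :
    ∃ c : ToPartrec.Code, ∀ w, (c.eval [wordNumber w]).Dom ↔ p w := by
  obtain ⟨F, hF, hdom, hmem⟩ := exists_partrec_of_primrecRel
    (p := fun n (w : List β) => wordNumber w = n)
    (Primrec.eq.comp ((primrec_wordNumber (β := β)).comp Primrec.snd) Primrec.fst)
  let F' : ℕ →. ℕ := fun n =>
    (F n).bind fun w => (Part.assert (p w) fun _ => .some ()).map fun _ => 0
  have hF' : Partrec F' :=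
    hF.bind ((hp.comp Computable.snd).map (Computable.const 0).to₂)
  obtain ⟨c, hc⟩ := ToPartrec.Code.exists_code (Nat.Partrec'.part_iff₁.2 hF')
  refine ⟨c, fun w => ?_⟩
  have hF_w : F (wordNumber w) = .some w := by
    obtain ⟨w', hw'⟩ := Part.dom_iff_mem.1 ((hdom (wordNumber w)).2 ⟨w, rfl⟩)
    rw [Part.eq_some_iff.2 hw', wordNumber_injective (hmem _ _ hw')]
  have h : c.eval [wordNumber w] = pure <$> F' (wordNumber w) := hc ⟨[wordNumber w], rfl⟩
  rw [h]
  simp [F', hF_w, Part.assert]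

instance : Finite K' :=
  .of_surjective ![K'.main, K'.rev, K'.aux, K'.stack] fun k => by
    cases k
    exacts [⟨0, rfl⟩, ⟨1, rfl⟩, ⟨2, rfl⟩, ⟨3, rfl⟩]

/-- Higman's embedding theorem. -/
theorem embedsInFinitelyPresented_of_rePred {α : Type} [Finite α] [Primcodable α]
    {N : Subgroup (FreeGroup α)} [N.Normal]
    (hN : REPred fun w : List (α × Bool) => FreeGroup.mk w ∈ N) :
    EmbedsInFinitelyPresented (FreeGroup α ⧸ N) := by
  obtain ⟨c, hc⟩ := exists_code_dom_iff hN
  let _ : Inhabited Λ' := ⟨trNormal c .halt⟩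
  refine embedsInFinitelyPresented_of_dom_eval (tr_supports c .halt) none K'.main letterDigits
    (fun w => K'.elim (trList [wordNumber w]) [] [] []) (fun l w => ?_) (fun {l w S} h => ?_)
    fun w => ?_
  · simp [trNat_wordNumber_cons]
  · obtain ⟨w', hw, -⟩ := exists_eq_cons_of_trList_wordNumber (w := w) h
    exact ⟨w', hw⟩
  · rw [← hc]
    change _ ↔ (StateTransition.eval (TM2.step tr) (init c [wordNumber w])).Dom
    rw [tr_eval]
    rfl

end RecursivePresentation

/-! ### Rings generated by isometries -/

/-- Elements `iso i` of a ring with left inverses `adj i` which are mutually orthogonal, so that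
`iso i * adj j` are matrix units indexed by `ι`. -/
structure IsometryFamily (ι R : Type*) [Ring R] where
  iso : ι → R
  adj : ι → R
  adj_mul_iso_self (i : ι) : adj i * iso i = 1
  adj_mul_iso_of_ne {i j : ι} : i ≠ j → adj i * iso j = 0

namespace IsometryFamily

variable {ι κ k R : Type*} [Ring R] (F : IsometryFamily ι R)

/-- The subfamily indexed by `κ`. -/
def comp (f : κ ↪ ι) : IsometryFamily κ R where
  iso := F.iso ∘ f
  adj := F.adj ∘ f
  adj_mul_iso_self i := F.adj_mul_iso_self (f i)
  adj_mul_iso_of_ne h := F.adj_mul_iso_of_ne (f.injective.ne h)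

/-- The product of the isometries spelled by a word. -/
def word (w : List ι) : R := (w.map F.iso).prod

/-- The left inverse of `word w`. -/
def adjWord (w : List ι) : R := (w.map F.adj).reverse.prod

@[simp] lemma word_nil : F.word [] = 1 := rfl

@[simp] lemma adjWord_nil : F.adjWord [] = 1 := rfl

lemma word_cons (i : ι) (w : List ι) : F.word (i :: w) = F.iso i * F.word w := by simp [word]

lemma adjWord_cons (i : ι) (w : List ι) : F.adjWord (i :: w) = F.adjWord w * F.adj i := by
  simp [adjWord]

lemma word_append (v w : List ι) : F.word (v ++ w) = F.word v * F.word w := by simp [word]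

lemma adjWord_append (v w : List ι) : F.adjWord (v ++ w) = F.adjWord w * F.adjWord v := by
  simp [adjWord]

lemma adjWord_cons_mul_word_cons (i : ι) (v w : List ι) :
    F.adjWord (i :: v) * F.word (i :: w) = F.adjWord v * F.word w := by
  rw [adjWord_cons, word_cons, mul_assoc, ← mul_assoc (F.adj i), adj_mul_iso_self, one_mul]

lemma adjWord_mul_word_self (w : List ι) : F.adjWord w * F.word w = 1 := by
  induction w with
  | nil => simp
  | cons i w ih => rw [adjWord_cons_mul_word_cons, ih]

lemma adjWord_mul_word_of_not_prefix {v w : List ι} (hvw : ¬ v <+: w) (hwv : ¬ w <+: v) :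
    F.adjWord v * F.word w = 0 := by
  induction v generalizing w with
  | nil => simp at hvw
  | cons i v ih =>
    cases w with
    | nil => simp at hwv
    | cons j w =>
      obtain rfl | hij := eq_or_ne i j
      · rw [adjWord_cons_mul_word_cons, ih (by simpa using hvw) (by simpa using hwv)]
      · rw [adjWord_cons, word_cons, mul_assoc, ← mul_assoc (F.adj i), F.adj_mul_iso_of_ne hij,
          zero_mul, mul_zero]

end IsometryFamily

lemma not_prefix_concat_of_length_le {ι : Type*} {v w : List ι} {a : ι} (hle : v.length ≤ w.length)
    (hne : w ≠ v) (ha : a ∉ w) : ¬ v ++ [a] <+: w ∧ ¬ w <+: v ++ [a] := by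
  refine ⟨fun h => ha (h.subset (by simp)), fun h => ?_⟩
  obtain rfl | h := List.prefix_concat_iff.1 h
  · simp at ha
  · exact hne (h.eq_of_length_le hle)

lemma exists_notMem_of_infinite {ι τ : Type*} [Infinite ι] (s : Finset τ) (f : τ → List ι) :
    ∃ a, ∀ t ∈ s, a ∉ f t := by
  classical
  obtain ⟨a, ha⟩ := Infinite.exists_notMem_finset (s.biUnion fun t => (f t).toFinset)
  exact ⟨a, by simpa using ha⟩

/-- Multiplying by the adjoint of a shortest word, followed by a letter that does not occur,
isolates the corresponding summand. -/
lemma IsometryFamily.exists_mul_sum_word_mul_eq_one {ι τ k R : Type*} [Infinite ι] [Field k]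
    [Ring R] [Algebra k R] (F : IsometryFamily ι R) {s : Finset τ} (hs : s.Nonempty)
    {f : τ → List ι} (hf : Set.InjOn f s) {c : τ → k} (hc : ∀ t ∈ s, c t ≠ 0) :
    ∃ x y, x * (∑ t ∈ s, c t • F.word (f t)) * y = 1 := by
  obtain ⟨t₀, ht₀, hmin⟩ := s.exists_min_image (fun t => (f t).length) hs
  obtain ⟨a, ha⟩ := exists_notMem_of_infinite s f
  refine ⟨F.adjWord (f t₀ ++ [a]), (c t₀)⁻¹ • F.iso a, ?_⟩
  have isolate : F.adjWord (f t₀ ++ [a]) * ∑ t ∈ s, c t • F.word (f t) = c t₀ • F.adj a := by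
    rw [Finset.mul_sum, Finset.sum_eq_single_of_mem t₀ ht₀]
    · rw [mul_smul_comm, F.adjWord_append, mul_assoc, F.adjWord_mul_word_self, mul_one,
        F.adjWord_cons, F.adjWord_nil, one_mul]
    · intro t ht hne
      obtain ⟨h, h'⟩ := not_prefix_concat_of_length_le (hmin t ht)
        (fun he => hne (hf ht ht₀ he)) (ha t ht)
      rw [mul_smul_comm, F.adjWord_mul_word_of_not_prefix h h', smul_zero]
  rw [isolate, smul_mul_smul_comm, mul_inv_cancel₀ (hc t₀ ht₀), F.adj_mul_iso_self, one_smul]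

/-- A `k`-algebra generated by a homomorphic image of a group `G`, an isometry `s` whose translates
by distinct elements of `G` are orthogonal to each other, and an isometry `p` which commutes
with `G` and is orthogonal to `s`. -/
structure LeavittSystem (k G R : Type*) [CommRing k] [Group G] [Ring R] [Algebra k R] where
  γ : G →* R
  s : R
  s' : R
  p : R
  p' : R
  s'_mul_s : s' * s = 1
  s'_mul_γ_mul_s {g : G} : g ≠ 1 → s' * γ g * s = 0
  p'_mul_p : p' * p = 1
  p'_mul_s : p' * s = 0
  s'_mul_p : s' * p = 0
  commute_γ_p (g : G) : Commute (γ g) p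
  commute_γ_p' (g : G) : Commute (γ g) p'
  adjoin_eq_top : Algebra.adjoin k (Set.range γ ∪ {s, s', p, p'}) = ⊤

namespace LeavittSystem

section Monomials

variable {k G R : Type*} [CommRing k] [Group G] [Ring R] [Algebra k R] (d : LeavittSystem k G R)

lemma γ_mul_γ_inv (g : G) : d.γ g * d.γ g⁻¹ = 1 := by simp [← map_mul]

/-- The isometries `p` and `γ g * s`, indexed by `none` and `some g`. -/
def letters : IsometryFamily (Option G) R where
  iso a := a.elim d.p fun g => d.γ g * d.s
  adj a := a.elim d.p' fun g => d.s' * d.γ g⁻¹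
  adj_mul_iso_self a := by
    cases a with
    | none => exact d.p'_mul_p
    | some g =>
      simp only [Option.elim]
      rw [mul_assoc, ← mul_assoc (d.γ _), ← map_mul, inv_mul_cancel, map_one, one_mul, d.s'_mul_s]
  adj_mul_iso_of_ne {a b} hab := by
    cases a with
    | none =>
      cases b with
      | none => exact absurd rfl hab
      | some g =>
        simp only [Option.elim]
        rw [← mul_assoc, ← (d.commute_γ_p' g).eq, mul_assoc, d.p'_mul_s, mul_zero]
    | some g =>
      cases b with
      | none =>
        simp only [Option.elim]
        rw [mul_assoc, (d.commute_γ_p _).eq, ← mul_assoc, d.s'_mul_p, zero_mul]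
      | some h =>
        simp only [Option.elim]
        rw [mul_assoc, ← mul_assoc (d.γ _), ← map_mul, ← mul_assoc]
        exact d.s'_mul_γ_mul_s fun h1 => hab (by rw [inv_mul_eq_one.1 h1])

lemma γ_mul_iso_some (g h : G) : d.γ g * d.letters.iso (some h) = d.letters.iso (some (g * h)) := by
  simp [letters, mul_assoc]

lemma adj_some_mul_γ (g h : G) :
    d.letters.adj (some g) * d.γ h = d.letters.adj (some (h⁻¹ * g)) := by
  simp [letters, mul_assoc]

lemma exists_γ_mul_iso (g : G) (a : Option G) :
    ∃ b h, d.γ g * d.letters.iso a = d.letters.iso b * d.γ h := by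
  cases a with
  | none => exact ⟨none, g, d.commute_γ_p g⟩
  | some x => exact ⟨some (g * x), 1, by rw [d.γ_mul_iso_some, map_one, mul_one]⟩

lemma exists_adj_mul_γ (a : Option G) (g : G) :
    ∃ b h, d.letters.adj a * d.γ g = d.γ h * d.letters.adj b := by
  cases a with
  | none => exact ⟨none, g, (d.commute_γ_p' g).symm⟩
  | some x => exact ⟨some (g⁻¹ * x), 1, by rw [d.adj_some_mul_γ, map_one, one_mul]⟩

lemma exists_γ_mul_word (g : G) (u : List (Option G)) :
    ∃ v h, d.γ g * d.letters.word u = d.letters.word v * d.γ h := by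
  induction u generalizing g with
  | nil => exact ⟨[], g, by simp⟩
  | cons a u ih =>
    obtain ⟨b, h, hb⟩ := d.exists_γ_mul_iso g a
    obtain ⟨v, h', hv⟩ := ih h
    refine ⟨b :: v, h', ?_⟩
    rw [d.letters.word_cons, ← mul_assoc, hb, mul_assoc, hv, d.letters.word_cons, mul_assoc]

/-- The element `word u * γ g * adjWord v`. -/
def monomial (t : List (Option G) × G × List (Option G)) : R :=
  d.letters.word t.1 * d.γ t.2.1 * d.letters.adjWord t.2.2

lemma monomial_mem_span (t : List (Option G) × G × List (Option G)) :
    d.monomial t ∈ Submodule.span k (Set.range d.monomial) :=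
  Submodule.subset_span ⟨t, rfl⟩

lemma γ_mul_monomial_mem_span (g : G) (t : List (Option G) × G × List (Option G)) :
    d.γ g * d.monomial t ∈ Submodule.span k (Set.range d.monomial) := by
  obtain ⟨v, h, hv⟩ := d.exists_γ_mul_word g t.1
  convert d.monomial_mem_span (v, h * t.2.1, t.2.2) using 1
  simp only [monomial]
  rw [← mul_assoc, ← mul_assoc, hv, map_mul, mul_assoc _ (d.γ h)]

lemma iso_mul_monomial_mem_span (a : Option G) (t : List (Option G) × G × List (Option G)) :
    d.letters.iso a * d.monomial t ∈ Submodule.span k (Set.range d.monomial) := by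
  convert d.monomial_mem_span (a :: t.1, t.2) using 1
  simp only [monomial, d.letters.word_cons, mul_assoc]

lemma adj_mul_monomial_mem_span (a : Option G) (t : List (Option G) × G × List (Option G)) :
    d.letters.adj a * d.monomial t ∈ Submodule.span k (Set.range d.monomial) := by
  obtain ⟨_ | ⟨b, u⟩, g, v⟩ := t
  · obtain ⟨b, h, hb⟩ := d.exists_adj_mul_γ a g
    convert d.monomial_mem_span ([], h, v ++ [b]) using 1
    simp only [monomial, d.letters.adjWord_append, d.letters.adjWord_cons, d.letters.adjWord_nil,
      d.letters.word_nil, one_mul]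
    rw [← mul_assoc, hb, mul_assoc]
  · simp only [monomial, d.letters.word_cons, ← mul_assoc]
    obtain rfl | hab := eq_or_ne a b
    · rw [d.letters.adj_mul_iso_self, one_mul]
      exact d.monomial_mem_span (u, g, v)
    · rw [d.letters.adj_mul_iso_of_ne hab]
      simp only [zero_mul, zero_mem]

lemma span_range_monomial : Submodule.span k (Set.range d.monomial) = ⊤ := by
  let S := Submodule.span k (Set.range d.monomial)
  have mul_mem {r : R} (h : ∀ t, r * d.monomial t ∈ S) : ∀ x ∈ S, r * x ∈ S := by
    intro x hx
    have : S ≤ S.comap (LinearMap.mulLeft k r) :=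
      Submodule.span_le.2 (Set.range_subset_iff.2 h)
    exact this hx
  have mul_mem' (r : R) : ∀ x ∈ S, r * x ∈ S := by
    have hr : r ∈ Algebra.adjoin k (Set.range d.γ ∪ {d.s, d.s', d.p, d.p'}) := by
      rw [d.adjoin_eq_top]; trivial
    induction hr using Algebra.adjoin_induction with
    | mem r hr =>
      obtain ⟨g, rfl⟩ | rfl | rfl | rfl | rfl := hr
      · exact mul_mem (d.γ_mul_monomial_mem_span g)
      · simpa [letters] using mul_mem (d.iso_mul_monomial_mem_span (some 1))
      · simpa [letters] using mul_mem (d.adj_mul_monomial_mem_span (some 1))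
      · exact mul_mem (d.iso_mul_monomial_mem_span none)
      · exact mul_mem (d.adj_mul_monomial_mem_span none)
    | algebraMap c =>
      intro x hx
      rw [← Algebra.smul_def]
      exact S.smul_mem c hx
    | add r r' _ _ h h' => intro x hx; rw [add_mul]; exact add_mem (h x hx) (h' x hx)
    | mul r r' _ _ h h' => intro x hx; rw [mul_assoc]; exact h _ (h' x hx)
  refine eq_top_iff.2 fun r _ => ?_
  simpa [monomial] using mul_mem' r _ (d.monomial_mem_span ([], 1, []))

end Monomials

variable {k G R : Type*} [Field k] [Group G] [Ring R] [Algebra k R] (d : LeavittSystem k G R)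

/-- Multiplying by a shortest word `v₀`, followed by a letter `some h` that does not occur, kills
all monomials except those ending in `adjWord v₀`. -/
lemma exists_sum_monomial_mul_eq_sum_word [Infinite G]
    {s : Finset (List (Option G) × G × List (Option G))} (hs : s.Nonempty)
    (c : List (Option G) × G × List (Option G) → k) :
    ∃ y, ∃ s₀ ⊆ s, s₀.Nonempty ∧ ∃ f : _ → List (Option G), Set.InjOn f s₀ ∧
      (∑ t ∈ s, c t • d.monomial t) * y = ∑ t ∈ s₀, c t • d.letters.word (f t) := by
  classical
  obtain ⟨⟨u₀, g₀, v₀⟩, ht₀, hmin⟩ := s.exists_min_image (fun t => t.2.2.length) hs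
  obtain ⟨h, hh⟩ := exists_notMem_of_infinite s fun t => t.2.2.reduceOption
  simp only [List.reduceOption_mem_iff] at hh
  refine ⟨d.letters.word (v₀ ++ [some h]), s.filter fun t => t.2.2 = v₀, Finset.filter_subset _ _,
    ⟨_, Finset.mem_filter.2 ⟨ht₀, rfl⟩⟩, fun t => t.1 ++ [some (t.2.1 * h)], ?_, ?_⟩
  · rintro ⟨u, g, v⟩ ht ⟨u', g', v'⟩ ht' he
    simp only [Finset.coe_filter, Set.mem_ofPred_eq] at ht ht'
    obtain ⟨rfl, hg⟩ := List.append_inj' he rfl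
    simp only [List.cons.injEq, Option.some.injEq, mul_left_inj, and_true] at hg
    rw [ht.2, ht'.2, hg]
  · rw [Finset.sum_mul, Finset.sum_filter]
    refine Finset.sum_congr rfl fun ⟨u, g, v⟩ ht => ?_
    simp only [monomial]
    rw [smul_mul_assoc, mul_assoc]
    split_ifs with hv
    · rw [hv, d.letters.word_append, ← mul_assoc (d.letters.adjWord v₀),
        d.letters.adjWord_mul_word_self, one_mul, d.letters.word_append, mul_assoc,
        d.letters.word_cons, d.letters.word_cons, d.letters.word_nil, mul_one, mul_one,
        d.γ_mul_iso_some]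
    · obtain ⟨h₁, h₂⟩ := not_prefix_concat_of_length_le (hmin _ ht) hv (hh _ ht)
      rw [d.letters.adjWord_mul_word_of_not_prefix h₂ h₁, mul_zero, smul_zero]

include d in
theorem exists_mul_mul_eq_one [Infinite G] {r : R} (hr : r ≠ 0) : ∃ x y, x * r * y = 1 := by
  obtain ⟨c, rfl⟩ := Finsupp.mem_span_range_iff_exists_finsupp.1
    (d.span_range_monomial ▸ Submodule.mem_top : r ∈ Submodule.span k (Set.range d.monomial))
  have hc : c.support.Nonempty := Finsupp.support_nonempty_iff.2 (by rintro rfl; simp at hr)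
  obtain ⟨y, s, hs, hs', f, hf, hy⟩ := d.exists_sum_monomial_mul_eq_sum_word hc c
  obtain ⟨x, z, hxz⟩ := d.letters.exists_mul_sum_word_mul_eq_one hs' hf
    fun t ht => Finsupp.mem_support_iff.1 (hs ht)
  refine ⟨x, y * z, ?_⟩
  rwa [← hy, ← mul_assoc, mul_assoc] at hxz

end LeavittSystem

/-! ### The elementary group -/

section ElementaryGroup

open scoped commutatorElement

lemma commutator_mem_of_mem_normalizer_left {G : Type*} [Group G] {H : Subgroup G} {g h : G}
    (hg : g ∈ Subgroup.normalizer (H : Set G)) (hh : h ∈ H) : ⁅g, h⁆ ∈ H :=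
  H.mul_mem ((Subgroup.mem_normalizer_iff.1 hg h).1 hh) (H.inv_mem hh)

lemma commutator_mem_of_mem_normalizer_right {G : Type*} [Group G] {H : Subgroup G} {g h : G}
    (hh : h ∈ H) (hg : g ∈ Subgroup.normalizer (H : Set G)) : ⁅h, g⁆ ∈ H := by
  rw [← commutatorElement_inv]
  exact H.inv_mem (commutator_mem_of_mem_normalizer_left hg hh)

namespace IsometryFamily

variable {ι κ R : Type*} [Ring R] (F : IsometryFamily ι R)

lemma adj_mul_iso_mul_self (i : ι) (x : R) : F.adj i * (F.iso i * x) = x := by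
  rw [← mul_assoc, F.adj_mul_iso_self, one_mul]

lemma adj_mul_iso_mul_of_ne {i j : ι} (h : i ≠ j) (x : R) : F.adj i * (F.iso j * x) = 0 := by
  rw [← mul_assoc, F.adj_mul_iso_of_ne h, zero_mul]

variable {F} in
lemma one_add_mul_one_add {i j : ι} (h : i ≠ j) (r s : R) :
    (1 + F.iso i * r * F.adj j) * (1 + F.iso i * s * F.adj j) =
      1 + F.iso i * (r + s) * F.adj j := by
  simp only [mul_add, add_mul, mul_one, one_mul, mul_assoc, F.adj_mul_iso_mul_of_ne h.symm,
    mul_zero, add_zero, add_assoc]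

/-- The elementary unit with entry `r` at `(i, j)`. -/
def elementary {i j : ι} (h : i ≠ j) (r : R) : Rˣ where
  val := 1 + F.iso i * r * F.adj j
  inv := 1 + F.iso i * (-r) * F.adj j
  val_inv := by rw [one_add_mul_one_add h, add_neg_cancel, mul_zero, zero_mul, add_zero]
  inv_val := by rw [one_add_mul_one_add h, neg_add_cancel, mul_zero, zero_mul, add_zero]

lemma coe_elementary {i j : ι} (h : i ≠ j) (r : R) :
    (F.elementary h r : R) = 1 + F.iso i * r * F.adj j := rfl

lemma elementary_add {i j : ι} (h : i ≠ j) (r s : R) :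
    F.elementary h (r + s) = F.elementary h r * F.elementary h s :=
  Units.ext (one_add_mul_one_add h r s).symm

lemma elementary_zero {i j : ι} (h : i ≠ j) : F.elementary h 0 = 1 :=
  Units.ext (by rw [coe_elementary, mul_zero, zero_mul, add_zero, Units.val_one])

lemma elementary_injective {i j : ι} (h : i ≠ j) : Function.Injective (F.elementary h) := by
  intro r s hrs
  have := congrArg (fun u : Rˣ => F.adj i * (u : R) * F.iso j) hrs
  simpa only [coe_elementary, mul_add, add_mul, mul_one, mul_assoc, F.adj_mul_iso_of_ne h,
    F.adj_mul_iso_self, F.adj_mul_iso_mul_self, zero_add] using this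

/-- If `ε` fixes `F.adj k` from the right, the commutator of `ε` with `1 + y * F.adj k` only
depends on `ε * y - y`. -/
lemma coe_commutator_of_coe_eq {k : ι} {ε w : Rˣ} {y : R} (hw : (w : R) = 1 + y * F.adj k)
    (hy : F.adj k * y = 0) (hε : F.adj k * ε = F.adj k) :
    (⁅ε, w⁆ : Rˣ) = 1 + (ε * y - y) * F.adj k := by
  have hε' : F.adj k * (ε⁻¹ : Rˣ) = F.adj k := by rw [Units.mul_inv_eq_iff_eq_mul, hε]
  have hconj : ((ε * w * ε⁻¹ : Rˣ) : R) = 1 + ε * y * F.adj k := by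
    rw [Units.val_mul, Units.val_mul, hw, mul_add, mul_one, add_mul, Units.mul_inv,
      mul_assoc, mul_assoc, mul_assoc, hε']
  rw [commutatorElement_def, Units.val_mul, hconj, Units.mul_inv_eq_iff_eq_mul, hw]
  calc 1 + ε * y * F.adj k = 1 + (ε * y - y) * F.adj k + y * F.adj k
        + (ε * y - y) * (0 * F.adj k) := by noncomm_ring
    _ = (1 + (ε * y - y) * F.adj k) * (1 + y * F.adj k) := by rw [← hy]; noncomm_ring

lemma adj_mul_elementary {i j k : ι} (hij : i ≠ j) (hki : k ≠ i) (r : R) :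
    F.adj k * F.elementary hij r = F.adj k := by
  rw [coe_elementary, mul_add, mul_one, mul_assoc, F.adj_mul_iso_mul_of_ne hki, add_zero]

lemma commutator_elementary {i j k : ι} (hij : i ≠ j) (hjk : j ≠ k) (hik : i ≠ k) (r s : R) :
    ⁅F.elementary hij r, F.elementary hjk s⁆ = F.elementary hik (r * s) := by
  ext
  rw [F.coe_commutator_of_coe_eq (F.coe_elementary hjk s)
    (by rw [F.adj_mul_iso_mul_of_ne hjk.symm]) (F.adj_mul_elementary hij hik.symm r),
    coe_elementary, coe_elementary]
  simp only [add_mul, one_mul, mul_assoc, F.adj_mul_iso_mul_self, add_sub_cancel_left]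

/-- The group generated by the elementary units. -/
def elementaryGroup : Subgroup Rˣ :=
  Subgroup.closure {u | ∃ (i j : ι) (h : i ≠ j) (r : R), u = F.elementary h r}

variable {F} in
lemma elementaryGroup_le_iff {H : Subgroup Rˣ} :
    F.elementaryGroup ≤ H ↔ ∀ ⦃i j⦄ (h : i ≠ j) r, F.elementary h r ∈ H := by
  rw [elementaryGroup, Subgroup.closure_le]
  refine ⟨fun hH i j h r => hH ⟨i, j, h, r, rfl⟩, fun hH => ?_⟩
  rintro _ ⟨i, j, h, r, rfl⟩
  exact hH h r

lemma elementary_mem {i j : ι} (h : i ≠ j) (r : R) : F.elementary h r ∈ F.elementaryGroup :=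
  elementaryGroup_le_iff.1 le_rfl h r

lemma elementaryGroup_comp_le (f : κ ↪ ι) : (F.comp f).elementaryGroup ≤ F.elementaryGroup :=
  elementaryGroup_le_iff.2 fun _ _ h r => F.elementary_mem (f.injective.ne h) r

/-- The idempotent of the finite set `P` of indices. -/
def proj (P : Finset ι) : R := ∑ i ∈ P, F.iso i * F.adj i

lemma proj_mul_iso {P : Finset ι} {i : ι} (hi : i ∈ P) : F.proj P * F.iso i = F.iso i := by
  rw [proj, Finset.sum_mul, Finset.sum_eq_single_of_mem i hi fun j _ hj => by
    rw [mul_assoc, F.adj_mul_iso_of_ne hj, mul_zero], mul_assoc, F.adj_mul_iso_self, mul_one]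

lemma adj_mul_proj {P : Finset ι} {i : ι} (hi : i ∈ P) : F.adj i * F.proj P = F.adj i := by
  rw [proj, Finset.mul_sum, Finset.sum_eq_single_of_mem i hi fun j _ hj =>
    F.adj_mul_iso_mul_of_ne hj.symm _, F.adj_mul_iso_mul_self]

lemma adj_mul_proj_of_notMem {P : Finset ι} {i : ι} (hi : i ∉ P) : F.adj i * F.proj P = 0 := by
  rw [proj, Finset.mul_sum]
  exact Finset.sum_eq_zero fun j hj => F.adj_mul_iso_mul_of_ne (by rintro rfl; exact hi hj) _

/-- The ring element `x` is a matrix supported on `P × P`. -/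
def SupportedOn (P : Finset ι) (x : R) : Prop := F.proj P * x = x ∧ x * F.proj P = x

namespace SupportedOn

variable {F} {P Q : Finset ι} {x y : R}

lemma mono (h : P ⊆ Q) (hx : F.SupportedOn P x) : F.SupportedOn Q x := by
  have h₁ : F.proj Q * F.proj P = F.proj P := by
    nth_rewrite 2 3 [proj]
    rw [Finset.mul_sum]
    exact Finset.sum_congr rfl fun i hi => by rw [← mul_assoc, F.proj_mul_iso (h hi)]
  have h₂ : F.proj P * F.proj Q = F.proj P := by
    nth_rewrite 1 3 [proj]
    rw [Finset.sum_mul]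
    exact Finset.sum_congr rfl fun i hi => by rw [mul_assoc, F.adj_mul_proj (h hi)]
  exact ⟨by rw [← hx.1, ← mul_assoc, h₁], by rw [← hx.2, mul_assoc, h₂]⟩

lemma adj_mul_eq_zero (hx : F.SupportedOn P x) {i : ι} (hi : i ∉ P) : F.adj i * x = 0 := by
  rw [← hx.1, ← mul_assoc, F.adj_mul_proj_of_notMem hi, zero_mul]

lemma exists_adj_mul_mul_iso_ne_zero (hx : F.SupportedOn P x) (hx0 : x ≠ 0) :
    ∃ i j, F.adj i * x * F.iso j ≠ 0 := by
  by_contra! h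
  refine hx0 ?_
  rw [← hx.1, ← hx.2, proj, ← mul_assoc, Finset.sum_mul, Finset.mul_sum]
  refine Finset.sum_eq_zero fun j _ => ?_
  rw [Finset.sum_mul]
  refine Finset.sum_eq_zero fun i _ => ?_
  calc F.iso i * F.adj i * x * (F.iso j * F.adj j)
      = F.iso i * (F.adj i * x * F.iso j) * F.adj j := by simp only [mul_assoc]
    _ = 0 := by rw [h, mul_zero, zero_mul]

lemma mul_sub_one (hx : F.SupportedOn P (x - 1)) (hy : F.SupportedOn P (y - 1)) :
    F.SupportedOn P (x * y - 1) := by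
  have h : x * y - 1 = (x - 1) * (y - 1) + (x - 1) + (y - 1) := by noncomm_ring
  rw [h]
  refine ⟨?_, ?_⟩
  · rw [mul_add, mul_add, ← mul_assoc, hx.1, hy.1]
  · rw [add_mul, add_mul, mul_assoc, hx.2, hy.2]

lemma inv_sub_one {u : Rˣ} (hu : F.SupportedOn P ((u : R) - 1)) :
    F.SupportedOn P (((u⁻¹ : Rˣ) : R) - 1) := by
  have h₁ : ((u⁻¹ : Rˣ) : R) - 1 = -((u - 1) * (u⁻¹ : Rˣ)) := by
    rw [sub_mul, Units.mul_inv, one_mul, neg_sub]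
  have h₂ : ((u⁻¹ : Rˣ) : R) - 1 = -((u⁻¹ : Rˣ) * (u - 1)) := by
    rw [mul_sub, Units.inv_mul, mul_one, neg_sub]
  refine ⟨?_, ?_⟩
  · rw [h₁, mul_neg, ← mul_assoc, hu.1]
  · rw [h₂, neg_mul, mul_assoc, hu.2]

end SupportedOn

lemma exists_supportedOn_sub_one {u : Rˣ} (hu : u ∈ F.elementaryGroup) :
    ∃ P, F.SupportedOn P ((u : R) - 1) := by
  classical
  induction hu using Subgroup.closure_induction with
  | mem u hu =>
    obtain ⟨i, j, h, r, rfl⟩ := hu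
    refine ⟨{i, j}, ?_⟩
    rw [coe_elementary, add_sub_cancel_left]
    exact ⟨by rw [← mul_assoc, ← mul_assoc, F.proj_mul_iso (by simp)],
      by rw [mul_assoc, F.adj_mul_proj (by simp)]⟩
  | one => exact ⟨∅, by simp [SupportedOn]⟩
  | mul u v _ _ hu hv =>
    obtain ⟨P, hP⟩ := hu
    obtain ⟨Q, hQ⟩ := hv
    exact ⟨P ∪ Q, (hP.mono Finset.subset_union_left).mul_sub_one
      (hQ.mono Finset.subset_union_right)⟩
  | inv u _ hu => exact hu.imp fun P hP => hP.inv_sub_one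

section Infinite

variable [Infinite ι]

lemma elementary_mem_of_elementary_mem {H : Subgroup Rˣ}
    (hH : ∀ ⦃i j⦄ (h : i ≠ j), F.elementary h 1 ∈ Subgroup.normalizer (H : Set Rˣ))
    {i j k l : ι} (hij : i ≠ j) (hkl : k ≠ l) {r : R} (hr : F.elementary hij r ∈ H) :
    F.elementary hkl r ∈ H := by
  classical
  have mul_left {a b c} (hab : a ≠ b) (hbc : b ≠ c) (hac : a ≠ c)
      (h : F.elementary hbc r ∈ H) : F.elementary hac r ∈ H := by
    rw [← one_mul r, ← F.commutator_elementary hab hbc hac]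
    exact commutator_mem_of_mem_normalizer_left (hH hab) h
  have mul_right {a b c} (hab : a ≠ b) (hbc : b ≠ c) (hac : a ≠ c)
      (h : F.elementary hab r ∈ H) : F.elementary hac r ∈ H := by
    rw [← mul_one r, ← F.commutator_elementary hab hbc hac]
    exact commutator_mem_of_mem_normalizer_right h (hH hbc)
  obtain ⟨a, ha⟩ := Infinite.exists_notMem_finset {i, j, k, l}
  obtain ⟨b, hb⟩ := Infinite.exists_notMem_finset {a, i, j, k, l}
  simp only [Finset.mem_insert, Finset.mem_singleton, not_or] at ha hb
  obtain ⟨hai, haj, hak, hal⟩ := ha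
  obtain ⟨hba, hbi, -, hbk, -⟩ := hb
  have hia : F.elementary (Ne.symm hai) r ∈ H := mul_right hij (Ne.symm haj) _ hr
  have hba' : F.elementary hba r ∈ H := mul_left hbi (Ne.symm hai) _ hia
  have hka : F.elementary (Ne.symm hak) r ∈ H := mul_left (Ne.symm hbk) hba _ hba'
  exact mul_right (Ne.symm hak) hal _ hka

/-- Two commutators turn a non-trivial element of `H` into an elementary unit: if the entry of
`u - 1` at `(i, j)` is `c` and `x * c * y = 1`, then
`⁅elementary (l, i) (t * x), ⁅u, elementary (j, k) y⁆⁆ = elementary (l, k) t`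
for indices `k` and `l` outside the support of `u - 1`. -/
lemma exists_elementary_mem (hR : ∀ r : R, r ≠ 0 → ∃ x y, x * r * y = 1) {H : Subgroup Rˣ}
    (hHE : H ≤ F.elementaryGroup) (hEH : F.elementaryGroup ≤ Subgroup.normalizer (H : Set Rˣ))
    {u : Rˣ} (hu : u ∈ H) (hu1 : u ≠ 1) :
    ∃ (l k : ι) (h : l ≠ k), ∀ t, F.elementary h t ∈ H := by
  classical
  obtain ⟨P, hP⟩ := F.exists_supportedOn_sub_one (hHE hu)
  obtain ⟨i, j, hij⟩ := hP.exists_adj_mul_mul_iso_ne_zero (sub_ne_zero.2 (by simpa using hu1))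
  obtain ⟨x, y, hxy⟩ := hR _ hij
  obtain ⟨k, hk⟩ := Infinite.exists_notMem_finset (insert j P)
  obtain ⟨l, hl⟩ := Infinite.exists_notMem_finset {i, k}
  simp only [Finset.mem_insert, Finset.mem_singleton, not_or] at hk hl
  obtain ⟨hkj, hkP⟩ := hk
  obtain ⟨hli, hlk⟩ := hl
  refine ⟨l, k, hlk, fun t => ?_⟩
  have hku : F.adj k * ((u : R) - 1) = 0 := hP.adj_mul_eq_zero hkP
  let z : R := ((u : R) - 1) * F.iso j * y
  have hw : ((⁅u, F.elementary (Ne.symm hkj) y⁆ : Rˣ) : R) = 1 + z * F.adj k := by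
    rw [F.coe_commutator_of_coe_eq (F.coe_elementary _ y)
      (by rw [F.adj_mul_iso_mul_of_ne hkj]) (by rwa [mul_sub, mul_one, sub_eq_zero] at hku)]
    simp only [z, sub_mul, one_mul, mul_assoc]
  have hlw : ⁅F.elementary hli (t * x), ⁅u, F.elementary (Ne.symm hkj) y⁆⁆ =
      F.elementary hlk t := by
    ext
    rw [F.coe_commutator_of_coe_eq hw (by simp only [z, ← mul_assoc, hku, zero_mul])
      (F.adj_mul_elementary hli (Ne.symm hlk) _), coe_elementary, coe_elementary]
    congr 2
    calc (1 + F.iso l * (t * x) * F.adj i) * z - z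
        = F.iso l * t * (x * (F.adj i * (u - 1) * F.iso j) * y) := by
          simp only [z, add_mul, one_mul, add_sub_cancel_left, mul_assoc]
      _ = F.iso l * t := by rw [hxy, mul_one]
  rw [← hlw]
  exact commutator_mem_of_mem_normalizer_left (hEH (F.elementary_mem hli _))
    (commutator_mem_of_mem_normalizer_right hu (hEH (F.elementary_mem _ _)))

theorem isSimpleGroup_elementaryGroup [Nontrivial R]
    (hR : ∀ r : R, r ≠ 0 → ∃ x y, x * r * y = 1) : IsSimpleGroup F.elementaryGroup := by
  have : Nontrivial F.elementaryGroup := by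
    obtain ⟨i, j, hij⟩ := exists_pair_ne ι
    refine (Subgroup.nontrivial_iff_exists_ne_one _).2
      ⟨F.elementary hij 1, F.elementary_mem hij 1, ?_⟩
    rw [← F.elementary_zero hij]
    exact (F.elementary_injective hij).ne one_ne_zero
  refine { eq_bot_or_eq_top_of_normal := fun M hM => or_iff_not_imp_left.2 fun hM1 => ?_ }
  obtain ⟨⟨u, huE⟩, huM, hu1⟩ := M.bot_or_exists_ne_one.resolve_left hM1
  let H : Subgroup Rˣ := M.map F.elementaryGroup.subtype
  have hHE : H ≤ F.elementaryGroup := Subgroup.map_subtype_le M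
  have hHM : H.subgroupOf F.elementaryGroup = M :=
    Subgroup.comap_map_eq_self_of_injective F.elementaryGroup.subtype_injective M
  have hEH : F.elementaryGroup ≤ Subgroup.normalizer (H : Set Rˣ) :=
    (Subgroup.normal_subgroupOf_iff_le_normalizer hHE).1 (hHM ▸ hM)
  obtain ⟨l, k, hlk, h⟩ := F.exists_elementary_mem hR hHE hEH ⟨_, huM, rfl⟩
    fun hu => hu1 (Subtype.ext hu)
  rw [← hHM, Subgroup.subgroupOf_eq_top]
  exact elementaryGroup_le_iff.2 fun i j hij r =>
    F.elementary_mem_of_elementary_mem (fun _ _ h => hEH (F.elementary_mem h 1)) hlk hij (h r)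

end Infinite

end IsometryFamily

end ElementaryGroup

/-! ### Matrices and finite generation -/

section Matrices

variable {κ R : Type*} [Fintype κ] [DecidableEq κ] [Ring R]

variable (κ R) in
/-- The multiplicative monoid generated by the elementary matrices `1 + r E i j` with `i ≠ j`. -/
def elementaryMatrices : Submonoid (Matrix κ κ R) :=
  Submonoid.closure {A | ∃ i j r, i ≠ j ∧ A = 1 + Matrix.single i j r}

lemma one_add_single_mem_elementaryMatrices {i j : κ} (h : i ≠ j) (r : R) :
    1 + Matrix.single i j r ∈ elementaryMatrices κ R :=
  Submonoid.subset_closure ⟨i, j, r, h, rfl⟩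

lemma upper_mem_elementaryMatrices (r : R) : !![1, r; 0, 1] ∈ elementaryMatrices (Fin 2) R := by
  convert one_add_single_mem_elementaryMatrices (zero_ne_one (α := Fin 2)) r using 1
  ext i j
  fin_cases i <;> fin_cases j <;> simp

lemma lower_mem_elementaryMatrices (r : R) : !![1, 0; r, 1] ∈ elementaryMatrices (Fin 2) R := by
  convert one_add_single_mem_elementaryMatrices (one_ne_zero (α := Fin 2)) r using 1
  ext i j
  fin_cases i <;> fin_cases j <;> simp

lemma swap_mem_elementaryMatrices {x y : R} (h : y * x = 1) :
    !![1 - x * y, x; -y, 0] ∈ elementaryMatrices (Fin 2) R := by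
  have hxyx : x * y * x = x := by rw [mul_assoc, h, mul_one]
  convert mul_mem (mul_mem (upper_mem_elementaryMatrices x) (lower_mem_elementaryMatrices (-y)))
    (upper_mem_elementaryMatrices x) using 1
  simp [add_mul, h, hxyx, sub_eq_add_neg]

lemma isometry_mem_elementaryMatrices {x y : R} (h : y * x = 1) :
    !![x, 1 - x * y; 0, y] ∈ elementaryMatrices (Fin 2) R := by
  convert mul_mem (swap_mem_elementaryMatrices (x := -x) (y := -y) (by simpa using h))
    (swap_mem_elementaryMatrices (mul_one (1 : R))) using 1
  simp

lemma corner_mem_elementaryMatrices {x y : R} (h : y * x = 1) {u : Rˣ} (hx : Commute (u : R) x)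
    (hy : Commute (u : R) y) :
    !![x * y + (1 - x * y) * u, 0; 0, 1] ∈ elementaryMatrices (Fin 2) R := by
  have hyu : y * u * (↑u⁻¹ * x) = 1 := by
    rw [mul_assoc, ← mul_assoc (u : R), u.mul_inv, one_mul, h]
  have huy : (↑u⁻¹ : R) * x * (y * u) = x * y := by
    rw [mul_assoc, ← mul_assoc x, ← (hx.mul_right hy).eq, ← mul_assoc, u.inv_mul, one_mul]
  convert mul_mem (isometry_mem_elementaryMatrices h)
    (mul_mem (swap_mem_elementaryMatrices (x := -(↑u⁻¹ : R)) (y := -u) (by simp))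
      (swap_mem_elementaryMatrices hyu)) using 1
  have h00 : (1 - x * y) * (u * (1 - x * y)) = (1 - x * y) * u := by
    rw [(Commute.one_right _ |>.sub_right (hx.mul_right hy)).eq, ← mul_assoc]
    simp [mul_sub, sub_mul, mul_assoc, ← mul_assoc y, h]
  have h01 : (1 - x * y) * x = 0 := by rw [sub_mul, mul_assoc, h, mul_one, one_mul, sub_self]
  have h10 : y * (u * (1 - x * y)) = 0 := by
    rw [← mul_assoc, ← hy.eq, mul_assoc, mul_sub, ← mul_assoc, h, one_mul, mul_one, sub_self,
      mul_zero]
  have hyy : (↑u⁻¹ : R) * (y * u) = y := by rw [← hy.eq, u.inv_mul_cancel_left]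
  simp [huy, h00, h01, h10, hyy, h]

namespace IsometryFamily

variable (F : IsometryFamily κ R)

omit [Fintype κ] in
lemma adj_mul_iso (i j : κ) : F.adj i * F.iso j = (1 : Matrix κ κ R) i j := by
  by_cases h : i = j
  · subst h
    simp [F.adj_mul_iso_self]
  · simp [F.adj_mul_iso_of_ne h, h]

omit [Fintype κ] in
lemma replicateCol_mul_replicateRow :
    Matrix.replicateCol Unit F.adj * Matrix.replicateRow Unit F.iso = 1 := by
  ext i j
  simp [Matrix.mul_apply, F.adj_mul_iso]

/-- The non-unital ring homomorphism sending the matrix unit at `(i, j)` to `iso i * adj j`. -/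
def matrixSum : Matrix κ κ R →ₙ+* R where
  toFun A := (Matrix.replicateRow Unit F.iso * A * Matrix.replicateCol Unit F.adj) () ()
  map_zero' := by simp
  map_add' A B := by simp [Matrix.mul_add, Matrix.add_mul]
  map_mul' A B := by
    trans (Matrix.replicateRow Unit F.iso * A * (Matrix.replicateCol Unit F.adj *
      Matrix.replicateRow Unit F.iso) * B * Matrix.replicateCol Unit F.adj) () ()
    · simp only [replicateCol_mul_replicateRow, Matrix.mul_one, Matrix.mul_assoc]
    · simp only [← Matrix.mul_assoc]
      rw [Matrix.mul_assoc, Matrix.mul_assoc, Matrix.mul_apply]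
      simp [Matrix.mul_assoc]

lemma matrixSum_apply (A : Matrix κ κ R) :
    F.matrixSum A = ∑ j, (∑ i, F.iso i * A i j) * F.adj j := rfl

lemma matrixSum_single (i j : κ) (r : R) :
    F.matrixSum (Matrix.single i j r) = F.iso i * r * F.adj j := by
  simp [matrixSum_apply, Matrix.single_apply, ite_and]

lemma adj_mul_matrixSum_mul_iso (A : Matrix κ κ R) (i j : κ) :
    F.adj i * F.matrixSum A * F.iso j = A i j := by
  simp only [matrixSum_apply, Finset.mul_sum, Finset.sum_mul, mul_assoc, F.adj_mul_iso]
  simp [← mul_assoc, F.adj_mul_iso, Matrix.one_apply]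

/-- The unital homomorphism acting as the matrix `A` on the sum of the ranges of the isometries and
as the identity on its complement. -/
def ofMatrix : Matrix κ κ R →* R where
  toFun A := 1 + F.matrixSum (A - 1)
  map_one' := by simp
  map_mul' A B := by
    rw [show A * B - 1 = (A - 1) + (B - 1) + (A - 1) * (B - 1) by noncomm_ring]
    simp only [map_add, map_mul]
    noncomm_ring

lemma ofMatrix_one_add_single {i j : κ} (h : i ≠ j) (r : R) :
    F.ofMatrix (1 + Matrix.single i j r) = F.elementary h r := by
  simp [ofMatrix, matrixSum_single, coe_elementary]

lemma adj_mul_ofMatrix_mul_iso (A : Matrix κ κ R) (i j : κ) :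
    F.adj i * F.ofMatrix A * F.iso j = A i j := by
  change F.adj i * (1 + F.matrixSum (A - 1)) * F.iso j = _
  rw [mul_add, add_mul, adj_mul_matrixSum_mul_iso, mul_one, adj_mul_iso, Matrix.sub_apply,
    add_sub_cancel]

lemma exists_coe_eq_ofMatrix {A : Matrix κ κ R} (hA : A ∈ elementaryMatrices κ R) :
    ∃ u ∈ F.elementaryGroup, (u : R) = F.ofMatrix A := by
  induction hA using Submonoid.closure_induction with
  | mem A hA =>
    obtain ⟨i, j, r, h, rfl⟩ := hA
    exact ⟨F.elementary h r, F.elementary_mem h r, (F.ofMatrix_one_add_single h r).symm⟩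
  | one => exact ⟨1, one_mem _, by simp⟩
  | mul A B _ _ hA hB =>
    obtain ⟨u, hu, hA⟩ := hA
    obtain ⟨v, hv, hB⟩ := hB
    exact ⟨u * v, mul_mem hu hv, by simp [hA, hB]⟩

end IsometryFamily

end Matrices

namespace LeavittSystem

section Embedding

variable {k G R : Type*} [CommRing k] [Group G] [Ring R] [Algebra k R] (d : LeavittSystem k G R)

/-- The isometries `γ g * s`. -/
def branches : IsometryFamily G R := d.letters.comp Function.Embedding.some

lemma isIdempotentElem_range : IsIdempotentElem (d.p * d.p') := by
  rw [IsIdempotentElem, mul_assoc, ← mul_assoc d.p', d.p'_mul_p, one_mul]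

/-- The action of `G` that is trivial on the range of `p` and given by `γ` on the complement. -/
def twist : G →* R where
  toFun g := d.p * d.p' + (1 - d.p * d.p') * d.γ g
  map_one' := by simp
  map_mul' g h := by
    have hg : Commute (d.γ g) (d.p * d.p') := (d.commute_γ_p g).mul_right (d.commute_γ_p' g)
    have hγ : (1 - d.p * d.p') * d.γ g * (1 - d.p * d.p') = (1 - d.p * d.p') * d.γ g := by
      rw [mul_assoc, ((Commute.one_right _).sub_right hg).eq, ← mul_assoc,
        d.isIdempotentElem_range.one_sub.eq]
    have hγ' : (1 - d.p * d.p') * d.γ g * (d.p * d.p') = 0 := by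
      rw [mul_assoc, hg.eq, ← mul_assoc, d.isIdempotentElem_range.one_sub_mul_self, zero_mul]
    simp only [map_mul, mul_add, add_mul, ← mul_assoc (_ * d.p') (1 - _) (d.γ h),
      ← mul_assoc ((1 - _) * _) (1 - _) (d.γ h), hγ, hγ', d.isIdempotentElem_range.eq,
      d.isIdempotentElem_range.mul_one_sub_self, zero_mul, zero_add, add_zero]
    rw [mul_assoc (1 - _)]

lemma s'_mul_twist_mul_s {g : G} (hg : g ≠ 1) : d.s' * d.twist g * d.s = 0 := by
  change d.s' * (d.p * d.p' + (1 - d.p * d.p') * d.γ g) * d.s = 0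
  have h (r : R) : d.s' * (d.p * r) = 0 := by rw [← mul_assoc, d.s'_mul_p, zero_mul]
  simp only [mul_add, sub_mul, mul_sub, one_mul, mul_assoc, h, sub_zero, zero_add]
  rw [← mul_assoc, d.s'_mul_γ_mul_s hg]

variable (R) in
/-- The inclusion `r ↦ diag(r, 1)`. -/
def cornerHom : R →* Matrix (Fin 2) (Fin 2) R where
  toFun r := !![r, 0; 0, 1]
  map_one' := by simp [Matrix.one_fin_two]
  map_mul' r s := by simp

lemma cornerHom_twist_mem_elementaryMatrices (g : G) :
    cornerHom R (d.twist g) ∈ elementaryMatrices (Fin 2) R :=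
  corner_mem_elementaryMatrices d.p'_mul_p (u := d.γ.toHomUnits g) (d.commute_γ_p g)
    (d.commute_γ_p' g)

theorem exists_injective_hom_elementaryGroup [Nontrivial G] [Nontrivial R] :
    ∃ φ : G →* d.branches.elementaryGroup, Function.Injective φ := by
  obtain ⟨a, b, hab⟩ := exists_pair_ne G
  have hf : Function.Injective ![a, b] := by
    simpa [Fin.forall_fin_two, Function.Injective, hab.symm] using hab
  let F := d.branches.comp ⟨![a, b], hf⟩
  let φ : G →* Rˣ := (F.ofMatrix.comp ((cornerHom R).comp d.twist)).toHomUnits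
  have hφ (g : G) : φ g ∈ d.branches.elementaryGroup := by
    obtain ⟨u, hu, hug⟩ := F.exists_coe_eq_ofMatrix (d.cornerHom_twist_mem_elementaryMatrices g)
    have : u = φ g := Units.ext hug
    exact this ▸ IsometryFamily.elementaryGroup_comp_le _ _ hu
  refine ⟨φ.codRestrict _ hφ, (injective_iff_map_eq_one _).2 fun g hg => ?_⟩
  by_contra hg1
  have hφg : F.ofMatrix (cornerHom R (d.twist g)) = 1 :=
    congrArg (fun u : d.branches.elementaryGroup => ((u : Rˣ) : R)) hg
  have htwist : d.twist g = 1 := by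
    have := F.adj_mul_ofMatrix_mul_iso (cornerHom R (d.twist g)) 0 0
    rw [hφg, mul_one, F.adj_mul_iso_self] at this
    exact this.symm
  have := d.s'_mul_twist_mul_s hg1
  rw [htwist, mul_one, d.s'_mul_s] at this
  exact one_ne_zero this

end Embedding

end LeavittSystem

section Generation

lemma IsometryFamily.elementaryGroup_le_of_adjoin_eq_top {ι k R : Type*} [Infinite ι] [CommRing k]
    [Ring R] [Algebra k R] (F : IsometryFamily ι R) {Γ : Subgroup Rˣ}
    (hΓ : ∀ ⦃i j⦄ (h : i ≠ j), F.elementary h 1 ∈ Γ) {a b : ι} (hab : a ≠ b) {S : Set R}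
    (hS : Algebra.adjoin k S = ⊤) (hSΓ : ∀ r ∈ S, F.elementary hab r ∈ Γ)
    (hkΓ : ∀ c : k, F.elementary hab (algebraMap k R c) ∈ Γ) : F.elementaryGroup ≤ Γ := by
  have move {r : R} (hr : F.elementary hab r ∈ Γ) {i j : ι} (h : i ≠ j) : F.elementary h r ∈ Γ :=
    elementary_mem_of_elementary_mem F (fun _ _ h => Subgroup.le_normalizer (hΓ h)) hab h hr
  refine elementaryGroup_le_iff.2 fun i j hij r => move ?_ hij
  have hr : r ∈ Algebra.adjoin k S := hS ▸ Algebra.mem_top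
  induction hr using Algebra.adjoin_induction with
  | mem r hr => exact hSΓ r hr
  | algebraMap c => exact hkΓ c
  | add r s _ _ hr hs => exact F.elementary_add hab r s ▸ mul_mem hr hs
  | mul r s _ _ hr hs =>
    obtain ⟨c, hc⟩ := ({a, b} : Set ι).toFinite.exists_notMem
    simp only [Set.mem_insert_iff, Set.mem_singleton_iff, not_or] at hc
    rw [← F.commutator_elementary (Ne.symm hc.1) hc.2 hab]
    exact commutator_mem_of_mem_normalizer_left (Subgroup.le_normalizer (move hr _)) (move hs _)

namespace LeavittSystem

variable {k G R : Type*} [CommRing k] [Group G] [Ring R] [Algebra k R] (d : LeavittSystem k G R)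

lemma adjoin_image_eq_top {S : Set G} (hS : Submonoid.closure S = ⊤) :
    Algebra.adjoin k (d.γ '' S ∪ {d.s, d.s', d.p, d.p'}) = ⊤ := by
  rw [eq_top_iff, ← d.adjoin_eq_top, Algebra.adjoin_le_iff, Set.union_subset_iff]
  refine ⟨?_, Set.subset_union_right.trans Algebra.subset_adjoin⟩
  have hle : Submonoid.closure S ≤
      (Algebra.adjoin k (d.γ '' S ∪ {d.s, d.s', d.p, d.p'})).toSubmonoid.comap d.γ :=
    Submonoid.closure_le.2 fun g hg => Algebra.subset_adjoin (.inl ⟨g, hg, rfl⟩)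
  rintro _ ⟨g, rfl⟩
  exact hle (hS ▸ Submonoid.mem_top g)

lemma conj_elementary (g : G) {i j : G} (h : i ≠ j) (r : R) :
    d.γ.toHomUnits g * d.branches.elementary h r * (d.γ.toHomUnits g)⁻¹ =
      d.branches.elementary ((mul_right_injective g).ne h) r := by
  ext
  rw [← map_inv]
  simp only [Units.val_mul, IsometryFamily.coe_elementary, mul_add, add_mul, mul_one]
  change d.γ g * d.γ g⁻¹ + d.γ g * (d.letters.iso (some i) * r * d.letters.adj (some j)) * d.γ g⁻¹ =
    1 + d.letters.iso (some (g * i)) * r * d.letters.adj (some (g * j))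
  rw [γ_mul_γ_inv, ← γ_mul_iso_some, mul_assoc (d.γ g), mul_assoc _ (d.letters.adj _),
    adj_some_mul_γ]
  simp [mul_assoc]

lemma elementary_one_mem {Γ : Subgroup Rˣ} (hγ : ∀ g, d.γ.toHomUnits g ∈ Γ) {S : Set G}
    (hS : Submonoid.closure S = ⊤)
    (hSΓ : ∀ g ∈ S, ∀ h : 1 ≠ g, d.branches.elementary h 1 ∈ Γ) ⦃i j : G⦄ (h : i ≠ j) :
    d.branches.elementary h 1 ∈ Γ := by
  have translate (g : G) {i j : G} (h : i ≠ j) (hij : d.branches.elementary h 1 ∈ Γ) :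
      d.branches.elementary ((mul_right_injective g).ne h) 1 ∈ Γ :=
    d.conj_elementary g h 1 ▸ mul_mem (mul_mem (hγ g) hij) (inv_mem (hγ g))
  have key (g : G) : ∀ h : 1 ≠ g, d.branches.elementary h 1 ∈ Γ := by
    have hg : g ∈ Submonoid.closure S := hS ▸ Submonoid.mem_top g
    induction hg using Submonoid.closure_induction_left with
    | one => exact fun h => absurd rfl h
    | mul_left a ha g hg ih =>
      intro h
      rcases eq_or_ne 1 a with rfl | h1a
      · simpa using! ih (by simpa using h)
      rcases eq_or_ne 1 g with rfl | h1g
      · simpa using! hSΓ a ha h1a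
      have haag : a ≠ a * g := by simpa using Ne.symm h1g
      have hag : d.branches.elementary haag 1 ∈ Γ := by
        simpa using! translate a h1g (ih h1g)
      rw [← mul_one (1 : R), ← d.branches.commutator_elementary h1a haag h]
      exact commutator_mem_of_mem_normalizer_left (Subgroup.le_normalizer (hSΓ a ha h1a)) hag
  have h1 : 1 ≠ i⁻¹ * j := fun h1 => h (inv_mul_eq_one.1 h1.symm)
  simpa using! translate i h1 (key (i⁻¹ * j) h1)

theorem exists_fg_elementaryGroup_le [Infinite G] [Group.FG G] [Finite k] :
    ∃ Γ : Subgroup Rˣ, Γ.FG ∧ d.branches.elementaryGroup ≤ Γ := by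
  obtain ⟨S, hS, hSfin⟩ := Monoid.fg_iff.1 (Group.fg_iff_monoid_fg.1 ‹Group.FG G›)
  obtain ⟨a, b, hab⟩ := exists_pair_ne G
  let A : Set R := (d.γ '' S ∪ {d.s, d.s', d.p, d.p'}) ∪ Set.range (algebraMap k R)
  let T : Set Rˣ := d.γ.toHomUnits '' S ∪ d.branches.elementary hab '' A ∪
    ⋃ g ∈ S, Set.range fun h : 1 ≠ g => d.branches.elementary h 1
  have hT : T.Finite := by
    refine .union (.union (hSfin.image _) (.image _ ?_))
      (hSfin.biUnion fun _ _ => Set.finite_range _)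
    exact ((hSfin.image _).union (Set.toFinite _)).union (Set.finite_range _)
  refine ⟨Subgroup.closure T, Subgroup.fg_iff _ |>.2 ⟨T, rfl, hT⟩, ?_⟩
  have hA (r : R) (hr : r ∈ A) : d.branches.elementary hab r ∈ Subgroup.closure T :=
    Subgroup.subset_closure (.inl (.inr ⟨r, hr, rfl⟩))
  have hγ (g : G) : d.γ.toHomUnits g ∈ Subgroup.closure T := by
    have hle : Submonoid.closure S ≤ (Subgroup.closure T).toSubmonoid.comap d.γ.toHomUnits :=
      Submonoid.closure_le.2 fun g hg => Subgroup.subset_closure (.inl (.inl ⟨g, hg, rfl⟩))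
    exact hle (hS ▸ Submonoid.mem_top g)
  refine d.branches.elementaryGroup_le_of_adjoin_eq_top ?_ hab (d.adjoin_image_eq_top hS)
    (fun r hr => hA r (.inl hr)) fun c => hA _ (.inr ⟨c, rfl⟩)
  exact d.elementary_one_mem hγ hS fun g hg h =>
    Subgroup.subset_closure (.inr (Set.mem_biUnion hg ⟨h, rfl⟩))

end LeavittSystem

end Generation

/-! ### Recursively presented algebras -/

section PresentedAlgebras

lemma exists_primrecRel_of_rePred {α : Type*} [Primcodable α] {p : α → Prop} (hp : REPred p) :
    ∃ r : α → ℕ → Prop, PrimrecRel r ∧ ∀ a, p a ↔ ∃ k, r a k := by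
  obtain ⟨c, hc⟩ := Nat.Partrec.Code.exists_code.1 hp
  refine ⟨fun a k => c.evaln k (Encodable.encode a) ≠ none, ?_, fun a => ?_⟩
  · refine PrimrecPred.not (Primrec.eq.comp ?_ (.const none))
    exact Nat.Partrec.Code.primrec_evaln.comp
      ((Primrec.snd.pair (.const c)).pair (Primrec.encode.comp .fst))
  · have hdom : p a ↔ (c.eval (Encodable.encode a)).Dom := by
      simp [hc, Part.assert, Part.map]
    simp only [hdom, Part.dom_iff_mem, Nat.Partrec.Code.evaln_complete, Option.ne_none_iff_exists',
      Option.mem_def]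
    exact exists_comm

lemma exists_primrec_range_eq_insert {α : Type*} [Primcodable α] {s : Set α}
    (hs : REPred fun a => a ∈ s) (a₀ : α) :
    ∃ e : α × ℕ → α, Primrec e ∧ Set.range e = insert a₀ s := by
  classical
  obtain ⟨r, hr, hrs⟩ := exists_primrecRel_of_rePred hs
  refine ⟨fun t => if r t.1 t.2 then t.1 else a₀, .ite hr .fst (.const a₀), ?_⟩
  refine Set.Subset.antisymm ?_ (Set.insert_subset ⟨(a₀, 0), by simp⟩ fun a ha => ?_)
  · rintro _ ⟨⟨a, k⟩, rfl⟩
    by_cases h : r a k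
    · simpa [h] using Or.inr ((hrs a).2 ⟨k, h⟩)
    · simp [h]
  · obtain ⟨k, hk⟩ := (hrs a).1 ha
    exact ⟨(a, k), by simp [hk]⟩

variable {X : Type*}

variable (X) in
/-- The free associative algebra over the field with two elements. -/
abbrev FreeBinaryAlgebra : Type _ := MonoidAlgebra (ZMod 2) (FreeMonoid X)

/-- The sum of the monomials in the list `L`; every noncommutative polynomial over `ZMod 2` is of
this form. -/
def ofWords (L : List (List X)) : FreeBinaryAlgebra X :=
  (L.map fun w => MonoidAlgebra.single (FreeMonoid.ofList w) 1).sum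

@[simp] lemma ofWords_nil : ofWords ([] : List (List X)) = 0 := rfl

lemma ofWords_append (L M : List (List X)) : ofWords (L ++ M) = ofWords L + ofWords M := by
  simp [ofWords]

lemma ofWords_cons (w : List X) (L : List (List X)) :
    ofWords (w :: L) = ofWords [w] + ofWords L :=
  ofWords_append [w] L

@[simp] lemma ofWords_singleton_nil : ofWords [([] : List X)] = 1 := by
  simp [ofWords, MonoidAlgebra.one_def]

lemma ofWords_map_append (u v : List X) (L : List (List X)) :
    ofWords (L.map fun w => u ++ w ++ v) = ofWords [u] * ofWords L * ofWords [v] := by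
  induction L with
  | nil => simp
  | cons w L ih =>
    rw [List.map_cons, ofWords_cons, ih, ofWords_cons w, mul_add, add_mul]
    simp [ofWords, MonoidAlgebra.single_mul_single, mul_assoc]

lemma ofWords_singleton_append (u v : List X) : ofWords [u ++ v] = ofWords [u] * ofWords [v] := by
  simpa using ofWords_map_append u v [[]]

lemma ofWords_flatMap {β : Type*} (c : List β) (f : β → List (List X)) :
    ofWords (c.flatMap f) = (c.map fun b => ofWords (f b)).sum := by
  induction c with
  | nil => rfl
  | cons b c ih => simp [ofWords_append, ih]

/-- The product of two noncommutative polynomials given by lists of monomials. -/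
def wordsMul (L M : List (List X)) : List (List X) := L.flatMap fun u => M.map fun v => u ++ v

lemma ofWords_wordsMul (L M : List (List X)) :
    ofWords (wordsMul L M) = ofWords L * ofWords M := by
  have h (u : List X) : ofWords (M.map fun v => u ++ v) = ofWords [u] * ofWords M := by
    simpa using ofWords_map_append u [] M
  simp only [wordsMul, ofWords_flatMap, h, List.sum_map_mul_right]
  rw [← ofWords_flatMap]
  simp

lemma ofWords_surjective : Function.Surjective (ofWords (X := X)) := by
  intro x
  induction x using MonoidAlgebra.induction_linear with
  | zero => exact ⟨[], rfl⟩
  | add x y hx hy =>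
    obtain ⟨L, rfl⟩ := hx
    obtain ⟨M, rfl⟩ := hy
    exact ⟨L ++ M, ofWords_append L M⟩
  | single w r =>
    obtain rfl | rfl : r = 0 ∨ r = 1 := by revert r; decide
    · exact ⟨[], by simp⟩
    · exact ⟨[w.toList], by simp [ofWords]⟩

section DecidableEq

variable [DecidableEq X]

lemma coeff_ofWords (L : List (List X)) (w : List X) :
    (ofWords L).coeff (FreeMonoid.ofList w) = L.count w := by
  induction L with
  | nil => simp
  | cons u L ih =>
    rw [ofWords_cons, MonoidAlgebra.coeff_add, Finsupp.add_apply, ih]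
    have hu : (ofWords [u]).coeff (FreeMonoid.ofList w) = if u = w then 1 else 0 := by
      classical
      simp only [ofWords, List.map_singleton, List.sum_singleton, MonoidAlgebra.coeff_single]
      rw [Finsupp.single_apply]
      simp only [FreeMonoid.ofList.injective.eq_iff]
    simp [hu, List.count_cons, add_comm]

lemma ofWords_eq_zero_iff (L : List (List X)) : ofWords L = 0 ↔ ∀ w ∈ L, Even (L.count w) := by
  have h : ofWords L = 0 ↔ ∀ w : List X, Even (L.count w) := by
    rw [← MonoidAlgebra.coeff_eq_zero, Finsupp.ext_iff, FreeMonoid.ofList.surjective.forall]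
    simp [coeff_ofWords, ZMod.natCast_eq_zero_iff_even]
  rw [h]
  refine forall_congr' fun w => ⟨fun hw _ => hw, fun hw => ?_⟩
  by_cases hwL : w ∈ L
  · exact hw hwL
  · simp [List.count_eq_zero_of_not_mem hwL]

end DecidableEq

/-- The two-sided ideal generated by the polynomials in `rels`. -/
def relationIdeal (rels : Set (List (List X))) : TwoSidedIdeal (FreeBinaryAlgebra X) :=
  TwoSidedIdeal.span (ofWords '' rels)

lemma relationIdeal_insert_nil (rels : Set (List (List X))) :
    relationIdeal (insert [] rels) = relationIdeal rels := by
  refine le_antisymm (TwoSidedIdeal.span_le.2 ?_)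
    (TwoSidedIdeal.span_mono (Set.image_mono (Set.subset_insert _ _)))
  rw [Set.image_insert_eq]
  exact Set.insert_subset (zero_mem (relationIdeal rels)) TwoSidedIdeal.subset_span

section Expand

variable {ρ : Type*} (e : ρ → List (List X))

/-- The polynomial `∑ u * e k * v` over the triples `(u, k, v)` in `c`: such lists are the
certificates of membership in the ideal generated by the family `e`. -/
def expand (c : List (List X × ρ × List X)) : List (List X) :=
  c.flatMap fun t => (e t.2.1).map fun w => t.1 ++ w ++ t.2.2

lemma expand_append (c d : List (List X × ρ × List X)) :
    expand e (c ++ d) = expand e c ++ expand e d :=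
  List.flatMap_append

lemma ofWords_expand (c : List (List X × ρ × List X)) :
    ofWords (expand e c) =
      (c.map fun t => ofWords [t.1] * ofWords (e t.2.1) * ofWords [t.2.2]).sum := by
  simp only [expand, ofWords_flatMap, ofWords_map_append]

lemma ofWords_expand_mem (c : List (List X × ρ × List X)) :
    ofWords (expand e c) ∈ relationIdeal (Set.range e) := by
  rw [ofWords_expand]
  refine list_sum_mem fun x hx => ?_
  obtain ⟨t, -, rfl⟩ := List.mem_map.1 hx
  exact TwoSidedIdeal.mul_mem_right _ _ _ <| TwoSidedIdeal.mul_mem_left _ _ _ <|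
    TwoSidedIdeal.subset_span ⟨_, ⟨_, rfl⟩, rfl⟩

lemma exists_expand_eq_mul_mul (x y : FreeBinaryAlgebra X) (k : ρ) :
    ∃ c, ofWords (expand e c) = x * ofWords (e k) * y := by
  obtain ⟨L, rfl⟩ := ofWords_surjective x
  obtain ⟨M, rfl⟩ := ofWords_surjective y
  have hsum (N : List (List X)) : (N.map fun v => ofWords [v]).sum = ofWords N := by
    simpa using (ofWords_flatMap N fun v => [v]).symm
  refine ⟨L.flatMap fun u => M.map fun v => (u, k, v), ?_⟩
  have hrow (u : List X) : ofWords (expand e (M.map fun v => (u, k, v))) =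
      ofWords [u] * ofWords (e k) * ofWords M := by
    simp only [ofWords_expand, List.map_map, Function.comp_def, List.sum_map_mul_left, hsum]
  have hflat : expand e (L.flatMap fun u => M.map fun v => (u, k, v)) =
      L.flatMap fun u => expand e (M.map fun v => (u, k, v)) := by
    simp only [expand, List.flatMap_assoc]
  simp only [hflat, ofWords_flatMap, hrow, List.sum_map_mul_right, hsum]

lemma exists_expand_eq_of_mem {x : FreeBinaryAlgebra X} (hx : x ∈ relationIdeal (Set.range e)) :
    ∃ c, ofWords (expand e c) = x := by
  rw [relationIdeal, TwoSidedIdeal.mem_span_iff_mem_addSubgroup_closure] at hx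
  induction hx using AddSubgroup.closure_induction with
  | mem x hx =>
    obtain ⟨_, ⟨a, _, _, ⟨_, ⟨k, rfl⟩, rfl⟩, rfl⟩, b, _, rfl⟩ := hx
    exact exists_expand_eq_mul_mul e a b k
  | zero => exact ⟨[], rfl⟩
  | add x y _ _ hx hy =>
    obtain ⟨c, rfl⟩ := hx
    obtain ⟨d, rfl⟩ := hy
    exact ⟨c ++ d, by rw [expand_append, ofWords_append]⟩
  | neg x _ hx =>
    obtain ⟨c, rfl⟩ := hx
    exact ⟨c, (ZModModule.neg_eq_self _).symm⟩

lemma ofWords_mem_relationIdeal_range_iff [DecidableEq X] (L : List (List X)) :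
    ofWords L ∈ relationIdeal (Set.range e) ↔
      ∃ c, ∀ w ∈ L ++ expand e c, Even ((L ++ expand e c).count w) := by
  simp only [← ofWords_eq_zero_iff, ofWords_append]
  constructor
  · intro h
    obtain ⟨c, hc⟩ := exists_expand_eq_of_mem e h
    exact ⟨c, by rw [hc, ZModModule.add_self]⟩
  · rintro ⟨c, hc⟩
    rw [eq_neg_of_add_eq_zero_left hc]
    exact neg_mem (ofWords_expand_mem e c)

end Expand

section Computability

variable [Primcodable X]

lemma primrecPred_forall_even_count [DecidableEq X] :
    PrimrecPred fun L : List (List X) => ∀ w ∈ L, Even (L.count w) := by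
  have heq : PrimrecRel fun u w : List X => u = w := Primrec.eq
  have hcount : PrimrecRel fun (w : List X) (L : List (List X)) =>
      (L.filter fun u => u = w).length % 2 = 0 :=
    PrimrecRel.comp Primrec.eq (Primrec.nat_mod.comp (Primrec.list_length.comp
      (heq.listFilter.comp Primrec.snd Primrec.fst)) (.const 2)) (.const 0)
  refine (hcount.forall_mem_list.comp .id .id).of_eq fun L => ?_
  simp only [Nat.even_iff, List.count_eq_length_filter, id, beq_eq_decide]

lemma primrec_expand {ρ : Type*} [Primcodable ρ] {e : ρ → List (List X)} (he : Primrec e) :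
    Primrec (expand e) := by
  refine Primrec.list_flatMap .id ?_
  refine Primrec.list_map (he.comp (Primrec.fst.comp (Primrec.snd.comp .snd))) ?_
  refine Primrec.list_append.comp (Primrec.list_append.comp ?_ .snd) ?_
  · exact Primrec.fst.comp (Primrec.snd.comp .fst)
  · exact Primrec.snd.comp (Primrec.snd.comp (Primrec.snd.comp .fst))

lemma primrec_wordsMul : Primrec₂ (wordsMul (X := X)) := by
  refine Primrec.list_flatMap .fst ?_
  refine Primrec.list_map (Primrec.snd.comp .fst) ?_
  exact Primrec.list_append.comp (Primrec.snd.comp .fst) .snd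

variable {rels : Set (List (List X))}

lemma rePred_ofWords_mem_relationIdeal (hrels : REPred fun L => L ∈ rels)
    {β : Type*} [Primcodable β] {f : β → List (List X)} (hf : Primrec f) :
    REPred fun b => ofWords (f b) ∈ relationIdeal rels := by
  classical
  obtain ⟨e, he, hrange⟩ := exists_primrec_range_eq_insert hrels []
  have hcert : PrimrecRel fun b c =>
      ∀ w ∈ f b ++ expand e c, Even ((f b ++ expand e c).count w) :=
    primrecPred_forall_even_count.comp (Primrec.list_append.comp (hf.comp .fst)
      ((primrec_expand he).comp .snd))
  refine (rePred_exists hcert).of_eq fun b => ?_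
  rw [← relationIdeal_insert_nil, ← hrange, ofWords_mem_relationIdeal_range_iff]

end Computability

/-- The algebra over `ZMod 2` with generators `X` and relators `rels`. -/
abbrev PresentedAlgebra (rels : Set (List (List X))) : Type _ :=
  (relationIdeal rels).ringCon.Quotient

namespace PresentedAlgebra

variable (rels : Set (List (List X)))

/-- The quotient map from the free algebra. -/
def mk : FreeBinaryAlgebra X →ₐ[ZMod 2] PresentedAlgebra rels :=
  RingCon.mkₐ (ZMod 2) (relationIdeal rels).ringCon

lemma mk_surjective : Function.Surjective (mk rels) := RingCon.mk'_surjective _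

lemma mk_eq_zero_iff {x : FreeBinaryAlgebra X} : mk rels x = 0 ↔ x ∈ relationIdeal rels := by
  rw [TwoSidedIdeal.mem_iff]
  exact RingCon.eq _

lemma mk_comp_ofWords_surjective : Function.Surjective fun L => mk rels (ofWords L) :=
  (mk_surjective rels).comp ofWords_surjective

lemma exists_primrec_mk_ofWords_eq [Primcodable X] {α : Type*} [Finite α] [Primcodable α]
    (ψ : FreeGroup α →* (PresentedAlgebra rels)ˣ) :
    ∃ f : List (α × Bool) → List (List X), Primrec f ∧
      ∀ w, mk rels (ofWords (f w)) = ψ (FreeGroup.mk w) := by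
  choose P hP using fun a : α × Bool =>
    mk_comp_ofWords_surjective rels (ψ (FreeGroup.mk [a]))
  refine ⟨fun w => w.foldr (fun a L => wordsMul (P a) L) [[]], ?_, fun w => ?_⟩
  · refine Primrec.list_foldr (h := fun _ p => wordsMul (P p.1) p.2) .id (.const [[]]) ?_
    exact primrec_wordsMul.comp ((Primrec.dom_finite P).comp (Primrec.fst.comp .snd))
      (Primrec.snd.comp .snd)
  · induction w with
    | nil => simp [← FreeGroup.one_eq_mk]
    | cons a w ih =>
      rw [show FreeGroup.mk (a :: w) = FreeGroup.mk [a] * FreeGroup.mk w from rfl, map_mul,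
        Units.val_mul, ← ih, ← hP, ← map_mul, ← ofWords_wordsMul]
      rfl

variable {rels}

lemma rePred_mem_ker_units [Primcodable X] (hrels : REPred fun L => L ∈ rels)
    {α : Type*} [Finite α] [Primcodable α] (ψ : FreeGroup α →* (PresentedAlgebra rels)ˣ) :
    REPred fun w : List (α × Bool) => FreeGroup.mk w ∈ ψ.ker := by
  obtain ⟨f, hf, hfw⟩ := exists_primrec_mk_ofWords_eq rels ψ
  refine (rePred_ofWords_mem_relationIdeal hrels
    (Primrec.list_cons.comp (.const []) hf)).of_eq fun w => ?_
  rw [← mk_eq_zero_iff, ofWords_cons, map_add, hfw, ofWords_singleton_nil, map_one,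
    MonoidHom.mem_ker, ← Units.val_eq_one, ← ZModModule.sub_eq_add, sub_eq_zero, eq_comm]

lemma embedsInFinitelyPresented_of_fg_units [Primcodable X] (hrels : REPred fun L => L ∈ rels)
    {Γ : Subgroup (PresentedAlgebra rels)ˣ} (hΓ : Γ.FG) : EmbedsInFinitelyPresented Γ := by
  obtain ⟨α, _, ψ, hψ⟩ := Group.fg_iff_exists_freeGroup_hom_surjective_finite.1
    ((Group.fg_iff_subgroup_fg Γ).2 hΓ)
  obtain ⟨m, ⟨e⟩⟩ := Finite.exists_equiv_fin α
  let _ : Primcodable α := .ofEquiv (Fin m) e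
  have hker : REPred fun w : List (α × Bool) => FreeGroup.mk w ∈ ψ.ker := by
    simpa [MonoidHom.mem_ker] using rePred_mem_ker_units hrels (Γ.subtype.comp ψ)
  exact (embedsInFinitelyPresented_of_rePred hker).comp_injective
    (f := (QuotientGroup.quotientKerEquivOfSurjective ψ hψ).symm.toMonoidHom)
    (MulEquiv.injective _)

/-- The class of a monomial. -/
def word (w : List X) : PresentedAlgebra rels := mk rels (ofWords [w])

lemma word_nil : (word [] : PresentedAlgebra rels) = 1 := by simp [word]

lemma word_append (u v : List X) : (word (u ++ v) : PresentedAlgebra rels) = word u * word v := by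
  rw [word, ofWords_singleton_append, map_mul]
  rfl

lemma word_cons (x : X) (w : List X) :
    (word (x :: w) : PresentedAlgebra rels) = word [x] * word w :=
  word_append [x] w

lemma mk_ofWords_eq_zero {L : List (List X)} (hL : L ∈ rels) : mk rels (ofWords L) = 0 :=
  (mk_eq_zero_iff rels).2 (TwoSidedIdeal.subset_span ⟨L, hL, rfl⟩)

lemma word_eq_word {u v : List X} (h : [u, v] ∈ rels) :
    (word u : PresentedAlgebra rels) = word v := by
  have := mk_ofWords_eq_zero h
  rwa [ofWords_cons, map_add, ← ZModModule.sub_eq_add, sub_eq_zero] at this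

lemma word_eq_zero {w : List X} (h : [w] ∈ rels) : (word w : PresentedAlgebra rels) = 0 :=
  mk_ofWords_eq_zero h

lemma adjoin_range_word_singleton :
    Algebra.adjoin (ZMod 2) (Set.range fun x : X => (word [x] : PresentedAlgebra rels)) = ⊤ := by
  refine Algebra.eq_top_iff.2 fun a => ?_
  have hword (w : List X) : (word w : PresentedAlgebra rels) ∈
      Algebra.adjoin (ZMod 2) (Set.range fun x : X => (word [x] : PresentedAlgebra rels)) := by
    induction w with
    | nil => rw [word_nil]; exact one_mem _
    | cons x w ih => rw [word_cons]; exact mul_mem (Algebra.subset_adjoin ⟨x, rfl⟩) ih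
  obtain ⟨L, rfl⟩ := mk_comp_ofWords_surjective rels a
  induction L with
  | nil => simp only [ofWords_nil, map_zero, zero_mem]
  | cons w L ih => simp only [ofWords_cons w L, map_add]; exact add_mem (hword w) ih

lemma nontrivial_of_algHom {R : Type*} [Ring R] [Algebra (ZMod 2) R] [Nontrivial R]
    (f : FreeBinaryAlgebra X →ₐ[ZMod 2] R) (hf : ∀ L ∈ rels, f (ofWords L) = 0) :
    Nontrivial (PresentedAlgebra rels) := by
  have hle : relationIdeal rels ≤ TwoSidedIdeal.ker f := by
    rw [relationIdeal, TwoSidedIdeal.span_le]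
    rintro _ ⟨L, hL, rfl⟩
    exact (TwoSidedIdeal.mem_ker _).2 (hf L hL)
  refine ⟨1, 0, fun h => one_ne_zero (α := R) ?_⟩
  rw [← map_one (mk rels), mk_eq_zero_iff] at h
  simpa using (TwoSidedIdeal.mem_ker _).1 (hle h)

end PresentedAlgebra

end PresentedAlgebras

/-! ### The algebra of a group with solvable word problem -/

/-- Generators for the algebra of a group generated by `α`: a letter for each generator and each
inverse of a generator, and the four letters `s`, `s'`, `p`, `p'`. A sum type is used because it
inherits an encoding. -/
abbrev LeavittLetter (α : Type*) : Type _ := (α × Bool) ⊕ Fin 4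

namespace LeavittLetter

variable {α : Type*}

/-- The letter of the isometry with orthogonal translates. -/
abbrev s : LeavittLetter α := .inr 0

/-- The letter of the left inverse of `s`. -/
abbrev s' : LeavittLetter α := .inr 1

/-- The letter of the isometry commuting with the group. -/
abbrev p : LeavittLetter α := .inr 2

/-- The letter of the left inverse of `p`. -/
abbrev p' : LeavittLetter α := .inr 3

end LeavittLetter

open LeavittLetter

section Relators

variable {α : Type*}

/-- The monomial of a word in the generators of the group. -/
def groupWord (w : List (α × Bool)) : List (LeavittLetter α) := w.map .inl

lemma groupWord_append (v w : List (α × Bool)) :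
    groupWord (v ++ w) = groupWord v ++ groupWord w :=
  List.map_append

variable {G : Type*} [Group G]

/-- The relations of a `LeavittSystem`, for the group with presentation map `π`. Each relator is
the list of the monomials of a polynomial over `ZMod 2`, so `[u, v]` stands for `u = v`. -/
inductive LeavittRelator (π : FreeGroup α →* G) : List (List (LeavittLetter α)) → Prop
  | group {w} : π (FreeGroup.mk w) = 1 → LeavittRelator π [groupWord w, []]
  | orthogonal {w} : π (FreeGroup.mk w) ≠ 1 → LeavittRelator π [s' :: (groupWord w ++ [s])]
  | commute_p (w) : LeavittRelator π [groupWord w ++ [p], p :: groupWord w]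
  | commute_p' (w) : LeavittRelator π [groupWord w ++ [p'], p' :: groupWord w]
  | s'_s : LeavittRelator π [[s', s], []]
  | p'_p : LeavittRelator π [[p', p], []]
  | p'_s : LeavittRelator π [[p', s]]
  | s'_p : LeavittRelator π [[s', p]]

variable {π : FreeGroup α →* G}

lemma leavittRelator_iff {r t : List (α × Bool) → ℕ → Prop}
    (hr : ∀ w, π (FreeGroup.mk w) = 1 ↔ ∃ k, r w k) (ht : ∀ w, π (FreeGroup.mk w) ≠ 1 ↔ ∃ k, t w k)
    (L : List (List (LeavittLetter α))) :
    LeavittRelator π L ↔ ∃ x : List (α × Bool) × ℕ,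
      (r x.1 x.2 ∧ L = [groupWord x.1, []] ∨ t x.1 x.2 ∧ L = [s' :: (groupWord x.1 ++ [s])]) ∨
      (L = [groupWord x.1 ++ [p], p :: groupWord x.1] ∨
        L = [groupWord x.1 ++ [p'], p' :: groupWord x.1]) ∨
      L ∈ [[[s', s], []], [[p', p], []], [[p', s]], [[s', p]]] := by
  constructor
  · rintro (h | h | w | w | _ | _ | _ | _)
    · obtain ⟨k, hk⟩ := (hr _).1 h
      exact ⟨(_, k), .inl (.inl ⟨hk, rfl⟩)⟩
    · obtain ⟨k, hk⟩ := (ht _).1 h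
      exact ⟨(_, k), .inl (.inr ⟨hk, rfl⟩)⟩
    · exact ⟨(w, 0), .inr (.inl (.inl rfl))⟩
    · exact ⟨(w, 0), .inr (.inl (.inr rfl))⟩
    all_goals exact ⟨([], 0), .inr (.inr (by simp))⟩
  · rintro ⟨⟨w, k⟩, (⟨hk, rfl⟩ | ⟨hk, rfl⟩) | (rfl | rfl) | hL⟩
    · exact .group ((hr w).2 ⟨k, hk⟩)
    · exact .orthogonal ((ht w).2 ⟨k, hk⟩)
    · exact .commute_p w
    · exact .commute_p' w
    · simp only [List.mem_cons, List.not_mem_nil, or_false] at hL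
      obtain rfl | rfl | rfl | rfl := hL
      exacts [.s'_s, .p'_p, .p'_s, .s'_p]

lemma primrec_groupWord [Primcodable α] : Primrec (groupWord (α := α)) :=
  Primrec.list_map .id (Primrec.sumInl.comp .snd)

lemma rePred_leavittRelator [Primcodable α]
    (h : REPred fun w : List (α × Bool) => π (FreeGroup.mk w) = 1)
    (h' : REPred fun w : List (α × Bool) => π (FreeGroup.mk w) ≠ 1) :
    REPred (LeavittRelator π) := by
  obtain ⟨r, hr, hr'⟩ := exists_primrecRel_of_rePred h
  obtain ⟨t, ht, ht'⟩ := exists_primrecRel_of_rePred h'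
  refine (rePred_exists ?_).of_eq fun L => (leavittRelator_iff hr' ht' L).symm
  let I := List (List (LeavittLetter α)) × List (α × Bool) × ℕ
  have hgw : Primrec fun x : I => groupWord x.2.1 := primrec_groupWord.comp (.comp .fst .snd)
  have hsnoc (a : LeavittLetter α) : Primrec fun x : I => groupWord x.2.1 ++ [a] :=
    Primrec.list_append.comp hgw (.const _)
  have heq {f : I → List (List (LeavittLetter α))} (hf : Primrec f) :
      PrimrecPred fun x : I => x.1 = f x := Primrec.eq.comp .fst hf
  have hcommute (a : LeavittLetter α) :
      PrimrecPred fun x : I => x.1 = [groupWord x.2.1 ++ [a], a :: groupWord x.2.1] :=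
    heq (Primrec.list_cons.comp (hsnoc a)
      (Primrec.list_cons.comp (Primrec.list_cons.comp (.const a) hgw) (.const [])))
  refine .or (.or (.and ?_ ?_) (.and ?_ ?_)) (.or (.or (hcommute p) (hcommute p')) ?_)
  · exact hr.comp (.comp .fst .snd) (.comp .snd .snd)
  · exact heq (Primrec.list_cons.comp hgw (.const _))
  · exact ht.comp (.comp .fst .snd) (.comp .snd .snd)
  · exact heq (Primrec.list_cons.comp (Primrec.list_cons.comp (.const _) (hsnoc s)) (.const []))
  · simp only [List.mem_cons, List.not_mem_nil, or_false]
    exact .or (heq (.const _)) (.or (heq (.const _)) (.or (heq (.const _)) (heq (.const _))))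

end Relators

section System

open PresentedAlgebra

variable {α : Type*} {G : Type*} [Group G]

/-- The universal algebra over `ZMod 2` with a `LeavittSystem` for the group with presentation
map `π`. -/
abbrev LeavittAlgebra (π : FreeGroup α →* G) : Type _ :=
  PresentedAlgebra {L | LeavittRelator π L}

variable {π : FreeGroup α →* G}

lemma word_groupWord_congr {v w : List (α × Bool)}
    (h : π (FreeGroup.mk v) = π (FreeGroup.mk w)) :
    (word (groupWord v) : LeavittAlgebra π) = word (groupWord w) := by
  have hone {u : List (α × Bool)} (hu : π (FreeGroup.mk u) = 1) :
      (word (groupWord u) : LeavittAlgebra π) = 1 :=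
    (word_eq_word (.group hu)).trans word_nil
  refine left_inv_eq_right_inv (a := word (groupWord (FreeGroup.invRev v))) ?_ ?_ <;>
  · rw [← word_append, ← groupWord_append]
    refine hone ?_
    rw [← FreeGroup.mul_mk, ← FreeGroup.inv_mk, map_mul, map_inv]
    simp [h]

lemma surjective_comp_freeGroup_mk (hπ : Function.Surjective π) :
    Function.Surjective fun w => π (FreeGroup.mk w) :=
  hπ.comp Quot.mk_surjective

/-- The homomorphism from the group to its algebra. -/
def groupHom (hπ : Function.Surjective π) : G →* LeavittAlgebra π where
  toFun g := word (groupWord (Function.surjInv (surjective_comp_freeGroup_mk hπ) g))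
  map_one' := by
    rw [← word_nil]
    refine word_groupWord_congr (w := []) ?_
    rw [Function.surjInv_eq (surjective_comp_freeGroup_mk hπ) 1, ← FreeGroup.one_eq_mk, map_one]
  map_mul' g h := by
    rw [← word_append, ← groupWord_append]
    refine word_groupWord_congr ?_
    rw [← FreeGroup.mul_mk, map_mul]
    simp only [Function.surjInv_eq (surjective_comp_freeGroup_mk hπ)]

lemma groupHom_mk (hπ : Function.Surjective π) (w : List (α × Bool)) :
    groupHom hπ (π (FreeGroup.mk w)) = word (groupWord w) :=
  word_groupWord_congr (Function.surjInv_eq (surjective_comp_freeGroup_mk hπ) _)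

/-- The tautological system in the algebra of a group. -/
def leavittSystem (hπ : Function.Surjective π) : LeavittSystem (ZMod 2) G (LeavittAlgebra π) where
  γ := groupHom hπ
  s := word [s]
  s' := word [s']
  p := word [p]
  p' := word [p']
  s'_mul_s := by rw [← word_append, ← word_nil]; exact word_eq_word .s'_s
  s'_mul_γ_mul_s {g} hg := by
    obtain ⟨w, rfl⟩ : ∃ w, π (FreeGroup.mk w) = g := surjective_comp_freeGroup_mk hπ g
    rw [groupHom_mk, mul_assoc, ← word_append, ← word_append]
    exact word_eq_zero (.orthogonal hg)
  p'_mul_p := by rw [← word_append, ← word_nil]; exact word_eq_word .p'_p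
  p'_mul_s := by rw [← word_append]; exact word_eq_zero .p'_s
  s'_mul_p := by rw [← word_append]; exact word_eq_zero .s'_p
  commute_γ_p g := by
    obtain ⟨w, rfl⟩ : ∃ w, π (FreeGroup.mk w) = g := surjective_comp_freeGroup_mk hπ g
    rw [commute_iff_eq, groupHom_mk, ← word_append, ← word_append]
    exact word_eq_word (.commute_p w)
  commute_γ_p' g := by
    obtain ⟨w, rfl⟩ : ∃ w, π (FreeGroup.mk w) = g := surjective_comp_freeGroup_mk hπ g
    rw [commute_iff_eq, groupHom_mk, ← word_append, ← word_append]
    exact word_eq_word (.commute_p' w)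
  adjoin_eq_top := by
    rw [eq_top_iff, ← adjoin_range_word_singleton]
    refine Algebra.adjoin_mono ?_
    rintro _ ⟨a | i, rfl⟩
    · exact .inl ⟨π (FreeGroup.mk [a]), groupHom_mk hπ [a]⟩
    · right
      fin_cases i <;> simp

end System

section TreeRepresentation

variable (G : Type*)

/-- The space of functions on the tree of words over `Option G`; the branch `none` belongs to `p`
and the branch `some g` to `g * s`. -/
abbrev TreeFunction : Type _ := List (Option G) → ZMod 2

variable {G}

/-- Restriction to a branch. -/
def restrictBranch (a : Option G) : Module.End (ZMod 2) (TreeFunction G) :=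
  LinearMap.funLeft _ _ fun ω => a :: ω

lemma restrictBranch_apply (a : Option G) (ξ : TreeFunction G) (ω : List (Option G)) :
    restrictBranch a ξ ω = ξ (a :: ω) := rfl

open Classical in
/-- Transport to a branch, with value zero off that branch. -/
def extendBranch (a : Option G) : Module.End (ZMod 2) (TreeFunction G) :=
  LinearMap.pi fun
    | [] => 0
    | b :: ω => if b = a then LinearMap.proj ω else 0

open Classical in
lemma extendBranch_apply_cons (a b : Option G) (ξ : TreeFunction G) (ω : List (Option G)) :
    extendBranch a ξ (b :: ω) = if b = a then ξ ω else 0 := by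
  simp only [extendBranch, LinearMap.pi_apply]
  split_ifs <;> rfl

lemma restrictBranch_mul_extendBranch_self (a : Option G) :
    restrictBranch a * extendBranch a = 1 := by
  ext ξ ω
  simp [restrictBranch_apply, extendBranch_apply_cons]

lemma restrictBranch_mul_extendBranch {a b : Option G} (h : a ≠ b) :
    restrictBranch a * extendBranch b = 0 := by
  ext ξ ω
  simp [restrictBranch_apply, extendBranch_apply_cons, h]

variable [Group G]

/-- The action of `G` which translates all letters of a word simultaneously. -/
def treeTranslate : G →* Module.End (ZMod 2) (TreeFunction G) where
  toFun g := LinearMap.funLeft _ _ (List.map (Option.map (g⁻¹ * ·)))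
  map_one' := by ext ξ ω; simp [LinearMap.funLeft_apply]
  map_mul' g h := by
    ext ξ ω
    simp [LinearMap.funLeft_apply, Function.comp_def, mul_assoc]

lemma treeTranslate_apply (g : G) (ξ : TreeFunction G) (ω : List (Option G)) :
    treeTranslate g ξ ω = ξ (ω.map (Option.map (g⁻¹ * ·))) := rfl

lemma treeTranslate_mul_extendBranch (g : G) (a : Option G) :
    treeTranslate g * extendBranch a = extendBranch (a.map (g * ·)) * treeTranslate g := by
  classical
  ext ξ (_ | ⟨b, ω⟩)
  · rfl
  · have hb : b.map (g⁻¹ * ·) = a ↔ b = a.map (g * ·) := by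
      rcases a with _ | a <;> rcases b with _ | b <;> simp [inv_mul_eq_iff_eq_mul]
    simp only [Module.End.mul_apply, treeTranslate_apply, List.map_cons, extendBranch_apply_cons,
      hb]

variable {α : Type*} (π : FreeGroup α →* G)

/-- The operators by which the generators of the algebra of a group act on tree functions. -/
def letterOperator : LeavittLetter α → Module.End (ZMod 2) (TreeFunction G)
  | .inl a => treeTranslate (π (FreeGroup.mk [a]))
  | .inr i => ![extendBranch (some 1), restrictBranch (some 1), extendBranch none,
      restrictBranch none] i

/-- The representation of the free algebra on tree functions. -/
def treeRepresentation :
    FreeBinaryAlgebra (LeavittLetter α) →ₐ[ZMod 2] Module.End (ZMod 2) (TreeFunction G) :=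
  MonoidAlgebra.lift (ZMod 2) _ (FreeMonoid (LeavittLetter α)) (FreeMonoid.lift (letterOperator π))

lemma treeRepresentation_ofWords (L : List (List (LeavittLetter α))) :
    treeRepresentation π (ofWords L) =
      (L.map fun w => (w.map (letterOperator π)).prod).sum := by
  simp [treeRepresentation, ofWords, map_list_sum, Function.comp_def, FreeMonoid.lift_apply]

lemma prod_map_letterOperator_groupWord (w : List (α × Bool)) :
    ((groupWord w).map (letterOperator π)).prod = treeTranslate (π (FreeGroup.mk w)) := by
  induction w with
  | nil => simp [groupWord, ← FreeGroup.one_eq_mk]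
  | cons a w ih =>
    rw [show FreeGroup.mk (a :: w) = FreeGroup.mk [a] * FreeGroup.mk w from rfl, map_mul, map_mul,
      ← ih]
    rfl

lemma treeRepresentation_eq_zero_of_leavittRelator {L : List (List (LeavittLetter α))}
    (hL : LeavittRelator π L) : treeRepresentation π (ofWords L) = 0 := by
  have horth {g : G} (hg : g ≠ 1) :
      restrictBranch (some 1) * (treeTranslate g * extendBranch (some 1)) = 0 := by
    rw [treeTranslate_mul_extendBranch, ← mul_assoc, restrictBranch_mul_extendBranch, zero_mul]
    simpa using hg.symm
  have hcomm (g : G) : treeTranslate g * extendBranch none = extendBranch none * treeTranslate g :=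
    treeTranslate_mul_extendBranch g none
  have hcomm' (g : G) :
      treeTranslate g * restrictBranch none = restrictBranch none * treeTranslate g := rfl
  rw [treeRepresentation_ofWords]
  cases hL <;>
    simp [letterOperator, prod_map_letterOperator_groupWord, restrictBranch_mul_extendBranch_self,
      restrictBranch_mul_extendBranch, ZModModule.add_self, *]

instance : Nontrivial (LeavittAlgebra π) :=
  PresentedAlgebra.nontrivial_of_algHom (treeRepresentation π) fun _ =>
    treeRepresentation_eq_zero_of_leavittRelator π

end TreeRepresentation

/-! ### Groups with solvable word problem -/

/-- The property of being a subgroup of a simple subgroup of a finitely presented group. -/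
def EmbedsInSimpleSubgroup (G : Type*) [Group G] : Prop :=
  ∃ (H : Type) (_ : Group H) (S : Subgroup H),
    IsFinitelyPresented H ∧ IsSimpleGroup S ∧ ∃ φ : G →* S, Function.Injective φ

namespace EmbedsInSimpleSubgroup

variable {G E : Type*} [Group G] [Group E]

lemma of_isSimpleGroup [IsSimpleGroup E] (hE : EmbedsInFinitelyPresented E) {φ : G →* E}
    (hφ : Function.Injective φ) : EmbedsInSimpleSubgroup G := by
  obtain ⟨H, _, f, _, hf⟩ := hE
  let e : E ≃* f.range := MonoidHom.ofInjective hf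
  exact ⟨H, inferInstance, f.range, isFinitelyPresented_of_group H, e.symm.isSimpleGroup,
    e.toMonoidHom.comp φ, e.injective.comp hφ⟩

lemma comp_injective (hE : EmbedsInSimpleSubgroup E) {f : G →* E} (hf : Function.Injective f) :
    EmbedsInSimpleSubgroup G := by
  obtain ⟨H, _, S, hH, hS, φ, hφ⟩ := hE
  exact ⟨H, inferInstance, S, hH, hS, φ.comp f, hφ.comp hf⟩

end EmbedsInSimpleSubgroup

section Reduction

variable {α G : Type*} [Group G] {π : FreeGroup α →* G}

theorem embedsInSimpleSubgroup_of_infinite [Finite α] [Primcodable α] [Infinite G]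
    (hπ : Function.Surjective π)
    (hwp : ComputablePred fun w : List (α × Bool) => π (FreeGroup.mk w) = 1) :
    EmbedsInSimpleSubgroup G := by
  let d := leavittSystem hπ
  have : Group.FG G := Group.fg_of_surjective hπ
  have : IsSimpleGroup d.branches.elementaryGroup :=
    d.branches.isSimpleGroup_elementaryGroup fun _ => d.exists_mul_mul_eq_one
  have hrels : REPred (LeavittRelator π) := rePred_leavittRelator hwp.to_re hwp.not.to_re
  obtain ⟨Γ, hΓ, hle⟩ := d.exists_fg_elementaryGroup_le
  obtain ⟨φ, hφ⟩ := d.exists_injective_hom_elementaryGroup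
  exact .of_isSimpleGroup ((PresentedAlgebra.embedsInFinitelyPresented_of_fg_units hrels
    hΓ).comp_injective (Subgroup.inclusion_injective hle)) hφ

variable (π) in
/-- The presentation map of `G × ℤ` with the additional generator `none` for the factor `ℤ`, which
serves to embed `G` in an infinite group. -/
def presentationProdInt : FreeGroup (Option α) →* G × Multiplicative ℤ :=
  FreeGroup.lift fun i => i.elim (1, .ofAdd 1) fun a => (π (.of a), 1)

lemma presentationProdInt_surjective (hπ : Function.Surjective π) :
    Function.Surjective (presentationProdInt π) := by
  rintro ⟨g, z⟩
  obtain ⟨v, rfl⟩ := hπ g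
  have hsome : (presentationProdInt π).comp (FreeGroup.map some) = (MonoidHom.inl G _).comp π := by
    ext a <;> simp [presentationProdInt]
  refine ⟨FreeGroup.map some v * .of none ^ z.toAdd, ?_⟩
  rw [map_mul, ← MonoidHom.comp_apply, hsome, map_zpow]
  simp [presentationProdInt, ← ofAdd_zsmul]

/-- The word obtained by deleting the letters of the generator `none`. -/
def eraseNone (w : List (Option α × Bool)) : List (α × Bool) :=
  w.filterMap fun x => x.1.map fun a => (a, x.2)

/-- The number of occurrences of the letter `(none, b)`. -/
def noneCount (b : Bool) (w : List (Option α × Bool)) : ℕ :=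
  w.countP fun x => x.1.isNone && x.2 == b

lemma presentationProdInt_mk (w : List (Option α × Bool)) :
    presentationProdInt π (FreeGroup.mk w) =
      (π (FreeGroup.mk (eraseNone w)), .ofAdd (noneCount true w - noneCount false w : ℤ)) := by
  have hπ (L : List (α × Bool)) : π (FreeGroup.mk L) =
      (L.map fun x => cond x.2 (π (.of x.1)) (π (.of x.1))⁻¹).prod := by
    conv_lhs => rw [← FreeGroup.lift.apply_symm_apply π, FreeGroup.lift_mk]
    rfl
  induction w with
  | nil => simp [presentationProdInt, FreeGroup.lift_mk, hπ, eraseNone, noneCount, Prod.one_eq_mk]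
  | cons x w ih =>
    rw [show FreeGroup.mk (x :: w) = FreeGroup.mk [x] * FreeGroup.mk w from rfl, map_mul, ih]
    obtain ⟨_ | a, _ | _⟩ := x <;>
      simp [presentationProdInt, FreeGroup.lift_mk, hπ, eraseNone, noneCount, ofAdd_add,
        div_eq_mul_inv, mul_assoc, mul_left_comm, mul_comm]

lemma primrec_eraseNone [Finite α] [Primcodable α] : Primrec (eraseNone (α := α)) := by
  have h : Primrec fun x : Option α × Bool => x.1.map fun a => (a, x.2) := Primrec.dom_finite _
  exact Primrec.listFilterMap .id (h.comp Primrec.snd).to₂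

lemma primrec_noneCount [Finite α] [Primcodable α] (b : Bool) :
    Primrec (noneCount (α := α) b) := by
  have h : PrimrecPred fun x : Option α × Bool => (x.1.isNone && x.2 == b) = true :=
    Primrec.eq.comp (Primrec.dom_finite _) (.const true)
  refine (Primrec.list_length.comp (Primrec.listFilter h)).of_eq fun w => ?_
  simp only [noneCount, List.countP_eq_length_filter, Bool.decide_eq_true]

lemma computablePred_presentationProdInt [Finite α] [Primcodable α]
    (hwp : ComputablePred fun w : List (α × Bool) => π (FreeGroup.mk w) = 1) :
    ComputablePred fun w : List (Option α × Bool) =>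
      presentationProdInt π (FreeGroup.mk w) = 1 := by
  classical
  have hcount : PrimrecPred fun w : List (Option α × Bool) =>
      noneCount true w = noneCount false w :=
    Primrec.eq.comp (primrec_noneCount true) (primrec_noneCount false)
  have h := Primrec.and.to_comp.comp (hwp.decide.comp primrec_eraseNone.to_comp)
    hcount.decide.to_comp
  refine ComputablePred.of_eq (ComputablePred.computable_iff.2 ⟨_, h, rfl⟩) fun w => ?_
  simp only [presentationProdInt_mk, Prod.mk_eq_one, ofAdd_eq_one, sub_eq_zero, Nat.cast_inj,
    Bool.and_eq_true, decide_eq_true_eq]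

theorem embedsInSimpleSubgroup [Finite α] [Primcodable α] (hπ : Function.Surjective π)
    (hwp : ComputablePred fun w : List (α × Bool) => π (FreeGroup.mk w) = 1) :
    EmbedsInSimpleSubgroup G :=
  (embedsInSimpleSubgroup_of_infinite (presentationProdInt_surjective hπ)
    (computablePred_presentationProdInt hwp)).comp_injective
    (f := MonoidHom.inl G (Multiplicative ℤ)) (Prod.mk_left_injective 1)

end Reduction

end

end BooneHigman

/-!
Boone–Higman (1974), hard direction: every finitely generated group with solvable
word problem embeds in a simple subgroup of a finitely presented group.  Elements
of the free group are effectively encoded by the words representing them.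
-/
theorem boone_higman_hard_direction (G : Type*) [Group G] (n : ℕ)
    (π : FreeGroup (Fin n) →* G) (hπ : Function.Surjective π)
    (hwp : ComputablePred (fun w : List (Fin n × Bool) => π (FreeGroup.mk w) = 1)) :
    ∃ (H : Type) (_ : Group H) (S : Subgroup H),
      IsFinitelyPresented H ∧ IsSimpleGroup S ∧ ∃ φ : G →* S, Function.Injective φ :=
  BooneHigman.embedsInSimpleSubgroup hπ hwp
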